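/- For all positive integers k, d, n there exists a positive integer m such that every group G generated by a set A of at most n elements, in which for every r = 1, …, m the ball B_A(r) has at most k·r^d elements, has a subgroup of index at most m that is nilpotent of class at most m. -/

import Mathlib

universe u

/-- The ball `B_A(r)` of radius `r` in a group with respect to a generating set `A`:
the set of elements expressible as products of at most `r` elements of `A ∪ A⁻¹`. -/
def wordBall {G : Type u} [Group G] (A : Set G) (r : ℕ) : Set G :=
  {g : G | ∃ l : List G, l.length ≤ r ∧ (∀ x ∈ l, x ∈ A ∨ x⁻¹ ∈ A) ∧ l.prod = g}

/-!
If no `m` works, there is for each `m` a counterexample `G_m`, a quotient of one fixed free group of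
finite rank `n + 1`. The elements of the free group which die in `G_m` for most `m`, with respect to
a nonprincipal ultrafilter, form a normal subgroup whose quotient has polynomial growth. By Gromov's
theorem this limit group is virtually nilpotent, which is witnessed by finitely many commutator
words; so it passes to `G_m` for most `m`, with the same bounds on the index and the class.

Gromov's theorem is proved along the lines of Kleiner, Shalom–Tao and Ozawa. Every infinite finitely
generated group of polynomial growth has a nonconstant Lipschitz harmonic function: almost invariant
vectors of the regular representation on `ℓ²` give cocycles whose coefficients are almost harmonic.
The Lipschitz harmonic functions form a finite-dimensional space, by the Poincaré and Caccioppoli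
inequalities. On the gradients of these functions the group acts by isometries; since isometries
close to `1` have commutators much closer to `1`, polynomial growth forces the image to be virtually
abelian. In any case a finite index subgroup maps onto `ℤ`. The kernel has growth of smaller degree,
so that it is virtually nilpotent by induction, and polynomial growth makes the conjugation action
of a finite index subgroup of `ℤ` on it unipotent.
-/

universe v

open scoped Pointwise commutatorElement

namespace Gromov

/-! ### Polynomial growth -/

section Growth

/-- `HasPolynomialGrowth G d`: the powers of every finite subset of `G` grow at most polynomially
of degree `d`. Quantifying over all finite sets avoids a choice of generators and makes the
notion pass to subgroups, finitely generated or not. -/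
def HasPolynomialGrowth (G : Type u) [Group G] (d : ℕ) : Prop :=
  ∀ S : Set G, S.Finite → ∃ C : ℕ, ∀ r : ℕ, (S ^ r).ncard ≤ C * (r + 1) ^ d

/-- A symmetric generating set containing the identity, so that `S ^ r` is the ball of
radius `r`. -/
structure IsSymmGenerating {G : Type u} [Group G] (S : Set G) : Prop where
  one_mem : 1 ∈ S
  inv_eq : S⁻¹ = S
  closure_eq_top : Subgroup.closure S = ⊤

theorem finite_pow {M : Type*} [Monoid M] {S : Set M} (hS : S.Finite) (n : ℕ) : (S ^ n).Finite := by
  induction n with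
  | zero => simp
  | succ n ih => simpa only [pow_succ] using ih.mul hS

theorem exists_mul_pow_lt_pow (C : ℝ) (d : ℕ) {b : ℝ} (hb : 1 < b) :
    ∃ N : ℕ, C * ((N : ℝ) + 1) ^ d < b ^ N := by
  have hlim : Filter.Tendsto (fun n : ℕ ↦ C * b * ((n + 1 : ℕ) ^ d / b ^ (n + 1)))
      Filter.atTop (nhds 0) := by
    simpa using ((tendsto_pow_const_div_const_pow_of_one_lt d hb).comp
      (Filter.tendsto_add_atTop_nat 1)).const_mul (C * b)
  obtain ⟨N, hN⟩ := (hlim.eventually (gt_mem_nhds one_pos)).exists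
  refine ⟨N, ?_⟩
  have hb0 : 0 < b := one_pos.trans hb
  have hquot : C * b * ((N + 1 : ℕ) ^ d / b ^ (N + 1)) = C * ((N : ℝ) + 1) ^ d / b ^ N := by
    rw [pow_succ]; push_cast; field_simp
  rwa [hquot, div_lt_one (by positivity)] at hN

variable {G : Type u} [Group G] {H : Type v} [Group H] {d : ℕ}

namespace IsSymmGenerating

variable {S : Set G}

theorem inv_mem (hS : IsSymmGenerating S) {x : G} (hx : x ∈ S) : x⁻¹ ∈ S := by
  rwa [← Set.mem_inv, hS.inv_eq]

theorem inv_mem_pow (hS : IsSymmGenerating S) {x : G} {n : ℕ} (hx : x ∈ S ^ n) : x⁻¹ ∈ S ^ n := by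
  rwa [← Set.mem_inv, ← inv_pow, hS.inv_eq]

theorem exists_mem_pow (hS : IsSymmGenerating S) (x : G) : ∃ n : ℕ, x ∈ S ^ n := by
  have hx : x ∈ Subgroup.closure S := hS.closure_eq_top ▸ Subgroup.mem_top x
  induction hx using Subgroup.closure_induction with
  | mem x hx => exact ⟨1, by simpa using hx⟩
  | one => exact ⟨0, by simp⟩
  | mul x y _ _ hx hy =>
    obtain ⟨n, hn⟩ := hx
    obtain ⟨m, hm⟩ := hy
    exact ⟨n + m, pow_add S n m ▸ Set.mul_mem_mul hn hm⟩
  | inv x _ hx => exact hx.imp fun n hn ↦ hS.inv_mem_pow hn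

theorem exists_subset_pow (hS : IsSymmGenerating S) {T : Set G} (hT : T.Finite) :
    ∃ n : ℕ, T ⊆ S ^ n := by
  choose n hn using hS.exists_mem_pow
  obtain ⟨N, hN⟩ := (hT.image n).bddAbove
  exact ⟨N, fun x hx ↦
    Set.pow_subset_pow_right hS.one_mem (hN (Set.mem_image_of_mem n hx)) (hn x)⟩

theorem image (hS : IsSymmGenerating S) {f : G →* H} (hf : Function.Surjective f) :
    IsSymmGenerating (f '' S) where
  one_mem := ⟨1, hS.one_mem, map_one f⟩
  inv_eq := by rw [← Set.image_inv, hS.inv_eq]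
  closure_eq_top := by
    rw [← MonoidHom.map_closure, hS.closure_eq_top, Subgroup.map_top_of_surjective f hf]

theorem hasPolynomialGrowth (hS : IsSymmGenerating S) (hfin : S.Finite) {C : ℕ}
    (h : ∀ r, (S ^ r).ncard ≤ C * (r + 1) ^ d) : HasPolynomialGrowth G d := by
  intro T hT
  obtain ⟨n, hn⟩ := hS.exists_subset_pow hT
  refine ⟨C * (n + 1) ^ d, fun r ↦ ?_⟩
  calc (T ^ r).ncard ≤ (S ^ (n * r)).ncard :=
        Set.ncard_le_ncard (pow_mul S n r ▸ Set.pow_subset_pow_left hn) (finite_pow hfin _)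
    _ ≤ C * (n * r + 1) ^ d := h _
    _ ≤ C * ((n + 1) * (r + 1)) ^ d := by gcongr; nlinarith
    _ = C * (n + 1) ^ d * (r + 1) ^ d := by rw [mul_pow, mul_assoc]

end IsSymmGenerating

/-- The set `A ∪ A⁻¹ ∪ {1}`, whose powers are the word balls of `A`. -/
def symmetrization (A : Set G) : Set G := insert 1 (A ∪ A⁻¹)

theorem symmetrization_finite {A : Set G} (hA : A.Finite) : (symmetrization A).Finite :=
  (hA.union hA.inv).insert 1

theorem one_mem_symmetrization (A : Set G) : 1 ∈ symmetrization A := Set.mem_insert 1 _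

theorem subset_symmetrization (A : Set G) : A ⊆ symmetrization A :=
  Set.subset_union_left.trans (Set.subset_insert _ _)

theorem inv_symmetrization (A : Set G) : (symmetrization A)⁻¹ = symmetrization A := by
  simp [symmetrization, Set.union_comm]

theorem isSymmGenerating_symmetrization {A : Set G} (hA : Subgroup.closure A = ⊤) :
    IsSymmGenerating (symmetrization A) where
  one_mem := one_mem_symmetrization A
  inv_eq := inv_symmetrization A
  closure_eq_top := by simp [symmetrization, Subgroup.closure_union, hA]

theorem exists_isSymmGenerating [hG : Group.FG G] :
    ∃ S : Finset G, IsSymmGenerating (S : Set G) := by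
  obtain ⟨X, hX⟩ := hG.out
  exact ⟨(symmetrization_finite X.finite_toSet).toFinset,
    by simpa using isSymmGenerating_symmetrization hX⟩

namespace HasPolynomialGrowth

theorem of_injective (h : HasPolynomialGrowth G d) (f : H →* G) (hf : Function.Injective f) :
    HasPolynomialGrowth H d := by
  intro S hS
  obtain ⟨C, hC⟩ := h (f '' S) (hS.image f)
  refine ⟨C, fun r ↦ ?_⟩
  rw [← Set.ncard_image_of_injective _ hf, Set.image_pow]
  exact hC r

theorem subgroup (h : HasPolynomialGrowth G d) (K : Subgroup G) : HasPolynomialGrowth K d :=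
  h.of_injective K.subtype K.subtype_injective

theorem of_surjective (h : HasPolynomialGrowth G d) (f : G →* H) (hf : Function.Surjective f) :
    HasPolynomialGrowth H d := by
  intro S hS
  choose s hs using hf
  obtain ⟨C, hC⟩ := h (s '' S) (hS.image _)
  refine ⟨C, fun r ↦ ?_⟩
  have hpow : S ^ r = f '' ((s '' S) ^ r) := by
    rw [Set.image_pow, Set.image_image]; simp [hs]
  rw [hpow]
  exact (Set.ncard_image_le (finite_pow (hS.image _) r)).trans (hC r)

theorem finite_of_zero [Group.FG G] (h : HasPolynomialGrowth G 0) : Finite G := by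
  obtain ⟨S, hS⟩ := exists_isSymmGenerating (G := G)
  obtain ⟨C, hC⟩ := h S S.finite_toSet
  by_contra hinf
  rw [not_finite_iff_infinite] at hinf
  obtain ⟨T, hT⟩ := Infinite.exists_subset_card_eq G (C + 1)
  obtain ⟨n, hn⟩ := hS.exists_subset_pow T.finite_toSet
  have hcard := Set.ncard_le_ncard hn (finite_pow S.finite_toSet n)
  rw [Set.ncard_coe_finset, hT] at hcard
  have := hC n
  lia

end HasPolynomialGrowth

theorem two_pow_le_ncard_pair_pow {x y : G}
    (hxy : ∀ j : ℕ, ∀ a ∈ ({x, y} : Set G) ^ j, ∀ b ∈ ({x, y} : Set G) ^ j, a * x ≠ b * y) (j : ℕ) :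
    2 ^ j ≤ (({x, y} : Set G) ^ j).ncard := by
  induction j with
  | zero => simp [← Set.singleton_one]
  | succ j ih =>
    have hfin := finite_pow (Set.toFinite {x, y}) j
    have hsplit : ({x, y} : Set G) ^ (j + 1) =
        (· * x) '' ({x, y} : Set G) ^ j ∪ (· * y) '' ({x, y} : Set G) ^ j := by
      rw [pow_succ, Set.insert_eq x, Set.mul_union, Set.mul_singleton, Set.mul_singleton]
    have hdisj : Disjoint ((· * x) '' ({x, y} : Set G) ^ j) ((· * y) '' ({x, y} : Set G) ^ j) := by
      rw [Set.disjoint_left]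
      rintro _ ⟨a, ha, rfl⟩ ⟨b, hb, hab⟩
      exact hxy j a ha b hb hab.symm
    rw [hsplit, Set.ncard_union_eq hdisj (hfin.image _) (hfin.image _),
      Set.ncard_image_of_injective _ (mul_left_injective x),
      Set.ncard_image_of_injective _ (mul_left_injective y), pow_succ]
    lia

/-- The conjugates of `e` by the first `j` powers of `t`. -/
def conjPows (t e : G) (j : ℕ) : Set G := (fun i : ℕ ↦ t ^ i * e * (t ^ i)⁻¹) '' {i | i < j}

theorem conjPows_finite (t e : G) (j : ℕ) : (conjPows t e j).Finite :=
  (Set.finite_lt_nat j).image _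

theorem conj_mem_conjPows (t e : G) {i j : ℕ} (hij : i < j) :
    t ^ i * e * (t ^ i)⁻¹ ∈ conjPows t e j :=
  ⟨i, hij, rfl⟩

theorem mul_inv_pow_mem_closure_conjPows (t e : G) (j : ℕ) {a : G}
    (ha : a ∈ ({e * t, t} : Set G) ^ j) : a * (t ^ j)⁻¹ ∈ Subgroup.closure (conjPows t e j) := by
  induction j generalizing a with
  | zero => simp_all
  | succ j ih =>
    rw [pow_succ] at ha
    obtain ⟨b, hb, c, hc, rfl⟩ := Set.mem_mul.1 ha
    have hb' := Subgroup.closure_mono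
      (Set.image_mono fun i (hi : i < j) ↦ Nat.lt_succ_of_lt hi) (ih hb)
    obtain rfl | rfl := hc
    · have hsplit : b * (e * t) * (t ^ (j + 1))⁻¹ =
          b * (t ^ j)⁻¹ * (t ^ j * e * (t ^ j)⁻¹) := by
        rw [pow_succ]; group
      rw [hsplit]
      exact mul_mem hb' (Subgroup.subset_closure (conj_mem_conjPows t e j.lt_succ_self))
    · rwa [show b * c * (c ^ (j + 1))⁻¹ = b * (c ^ j)⁻¹ by rw [pow_succ]; group]

theorem conj_pow_mem_closure_conjPows {t e : G} {j : ℕ}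
    (hj : t ^ j * e * (t ^ j)⁻¹ ∈ Subgroup.closure (conjPows t e j)) (l : ℕ) :
    t ^ l * e * (t ^ l)⁻¹ ∈ Subgroup.closure (conjPows t e j) := by
  have hconj (i : ℕ) : t ^ (i + 1) * e * (t ^ (i + 1))⁻¹ =
      MulAut.conj t (t ^ i * e * (t ^ i)⁻¹) := by
    rw [MulAut.conj_apply, pow_succ']; group
  have hstable : Subgroup.closure (conjPows t e j) ≤
      (Subgroup.closure (conjPows t e j)).comap (MulAut.conj t).toMonoidHom := by
    rw [Subgroup.closure_le]
    rintro _ ⟨i, hi, rfl⟩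
    change MulAut.conj t (t ^ i * e * (t ^ i)⁻¹) ∈ Subgroup.closure (conjPows t e j)
    rw [← hconj]
    obtain hlt | rfl := (Nat.succ_le_of_lt hi).lt_or_eq
    · exact Subgroup.subset_closure (conj_mem_conjPows t e hlt)
    · exact hj
  induction l with
  | zero =>
    obtain rfl | hpos := j.eq_zero_or_pos
    · exact hj
    · exact Subgroup.subset_closure (conj_mem_conjPows t e hpos)
  | succ l ih => exact hconj l ▸ hstable ih

theorem ker_eq_closure_conj (φ : G →* Multiplicative ℤ) {t : G} (ht : φ t = Multiplicative.ofAdd 1)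
    {X : Set G} (hX : Subgroup.closure X = ⊤) :
    φ.ker = Subgroup.closure {y | ∃ x ∈ X, ∃ n : ℤ,
      t ^ n * (x * (t ^ (φ x).toAdd)⁻¹) * (t ^ n)⁻¹ = y} := by
  set Y := {y | ∃ x ∈ X, ∃ n : ℤ, t ^ n * (x * (t ^ (φ x).toAdd)⁻¹) * (t ^ n)⁻¹ = y}
  have hφt (n : ℤ) : φ (t ^ n) = Multiplicative.ofAdd n := by
    rw [map_zpow, ht, ← ofAdd_zsmul, smul_eq_mul, mul_one]
  have hYker : Subgroup.closure Y ≤ φ.ker := by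
    rw [Subgroup.closure_le]
    rintro _ ⟨x, -, n, rfl⟩
    exact φ.normal_ker.conj_mem _ (by simp [MonoidHom.mem_ker, hφt]) _
  have hnormal : Subgroup.zpowers t ≤ Subgroup.normalizer (Subgroup.closure Y) := by
    rw [Subgroup.le_normalizer_closure_iff]
    rintro _ ⟨m, rfl⟩ _ ⟨x, hx, n, rfl⟩
    exact Subgroup.subset_closure ⟨x, hx, m + n, by simp only [zpow_add]; group⟩
  have htop : Subgroup.closure Y ⊔ Subgroup.zpowers t = ⊤ := by
    rw [eq_top_iff, ← hX, Subgroup.closure_le]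
    intro x hx
    have hxY : x * (t ^ (φ x).toAdd)⁻¹ ∈ Subgroup.closure Y :=
      Subgroup.subset_closure ⟨x, hx, 0, by simp⟩
    simpa using mul_mem (Subgroup.mem_sup_left hxY) (Subgroup.mem_sup_right
      (Subgroup.zpow_mem_zpowers t (φ x).toAdd))
  refine le_antisymm (fun g hg ↦ ?_) hYker
  obtain ⟨m, hm, _, ⟨n, rfl⟩, rfl⟩ : g ∈ (Subgroup.closure Y : Set G) * Subgroup.zpowers t := by
    rw [← Subgroup.coe_mul_of_right_le_normalizer_left _ _ hnormal, htop]
    exact Subgroup.mem_top g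
  have hn : n = 0 := by
    have hm1 : φ m = 1 := hYker hm
    simpa [MonoidHom.mem_ker, hm1, hφt] using hg
  simpa [hn] using hm

theorem ncard_pow_mul_succ_le (φ : G →* Multiplicative ℤ) {t : G}
    (ht : φ t = Multiplicative.ofAdd 1) {S : Set φ.ker} (hS : S.Finite) (r : ℕ) :
    (S ^ r).ncard * (r + 1) ≤ ((φ.ker.subtype '' S ∪ {1, t}) ^ (2 * r)).ncard := by
  set T : Set G := φ.ker.subtype '' S ∪ {1, t}
  have hT : T.Finite := (hS.image _).union (Set.toFinite _)
  have hprod : (S ^ r).ncard * (r + 1) = ((S ^ r) ×ˢ (Set.Iio (r + 1) : Set ℕ)).ncard := by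
    rw [Set.ncard_prod, ← Finset.coe_Iio, Set.ncard_coe_finset, Nat.card_Iio]
  rw [hprod]
  refine Set.ncard_le_ncard_of_injOn (fun p ↦ (p.1 : G) * t ^ p.2) ?_ ?_ (finite_pow hT _)
  · rintro ⟨x, i⟩ ⟨hx, hi⟩
    have hxT : (x : G) ∈ T ^ r :=
      Set.pow_subset_pow_left Set.subset_union_left
        (Set.image_pow φ.ker.subtype S r ▸ Set.mem_image_of_mem _ hx)
    have htT : t ^ i ∈ T ^ r :=
      Set.pow_subset_pow_right (by simp [T]) (Nat.lt_succ_iff.1 hi) (Set.pow_mem_pow (by simp [T]))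
    exact two_mul r ▸ pow_add T r r ▸ Set.mul_mem_mul hxT htT
  · rintro ⟨x, i⟩ - ⟨y, j⟩ - (hxy : (x : G) * t ^ i = y * t ^ j)
    have hφ (z : φ.ker) (l : ℕ) : φ (z * t ^ l) = Multiplicative.ofAdd (l : ℤ) := by
      rw [map_mul, z.2, one_mul, map_pow, ht, ← ofAdd_nsmul, nsmul_one]
    obtain rfl : i = j := by simpa [hφ] using congrArg φ hxy
    rw [Subtype.ext (mul_right_cancel hxy)]

namespace HasPolynomialGrowth

theorem exists_mul_left_eq_mul_right (h : HasPolynomialGrowth G d) (x y : G) :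
    ∃ j : ℕ, ∃ a ∈ ({x, y} : Set G) ^ j, ∃ b ∈ ({x, y} : Set G) ^ j, a * x = b * y := by
  by_contra! hfree
  obtain ⟨C, hC⟩ := h {x, y} (Set.toFinite _)
  obtain ⟨N, hN⟩ := exists_mul_pow_lt_pow C d one_lt_two
  have hle : (2 : ℝ) ^ N ≤ C * (N + 1) ^ d :=
    mod_cast (two_pow_le_ncard_pair_pow hfree N).trans (hC N)
  exact hN.not_ge hle

/-- Apply the absence of free semigroups to `e * t` and `t`. -/
theorem exists_conj_mem_closure_conjPows (h : HasPolynomialGrowth G d) (t e : G) :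
    ∃ j : ℕ, ∀ l : ℕ, t ^ l * e * (t ^ l)⁻¹ ∈ Subgroup.closure (conjPows t e j) := by
  obtain ⟨j, a, ha, b, hb, hab⟩ := h.exists_mul_left_eq_mul_right (e * t) t
  refine ⟨j, conj_pow_mem_closure_conjPows ?_⟩
  obtain rfl : a * e = b := mul_right_cancel ((mul_assoc a e t).trans hab)
  have hquot : t ^ j * e * (t ^ j)⁻¹ = (a * (t ^ j)⁻¹)⁻¹ * (a * e * (t ^ j)⁻¹) := by group
  rw [hquot]
  exact mul_mem (inv_mem (mul_inv_pow_mem_closure_conjPows t e j ha))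
    (mul_inv_pow_mem_closure_conjPows t e j hb)

theorem exists_finite_conj_zpow_mem_closure (h : HasPolynomialGrowth G d) (t e : G) :
    ∃ F ⊆ Set.range fun n : ℤ ↦ t ^ n * e * (t ^ n)⁻¹, F.Finite ∧
      ∀ n : ℤ, t ^ n * e * (t ^ n)⁻¹ ∈ Subgroup.closure F := by
  obtain ⟨j, hj⟩ := h.exists_conj_mem_closure_conjPows t e
  obtain ⟨j', hj'⟩ := h.exists_conj_mem_closure_conjPows t⁻¹ e
  refine ⟨conjPows t e j ∪ conjPows t⁻¹ e j', ?_,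
    (conjPows_finite t e j).union (conjPows_finite t⁻¹ e j'), fun n ↦ ?_⟩
  · rintro _ (⟨i, -, rfl⟩ | ⟨i, -, rfl⟩)
    exacts [⟨i, by simp⟩, ⟨-i, by simp⟩]
  · obtain ⟨l, rfl | rfl⟩ := n.eq_nat_or_neg
    · exact Subgroup.closure_mono Set.subset_union_left (by simpa using hj l)
    · exact Subgroup.closure_mono Set.subset_union_right (by simpa using hj' l)

theorem ker_fg (h : HasPolynomialGrowth G d) [hG : Group.FG G] (φ : G →* Multiplicative ℤ)
    {t : G} (ht : φ t = Multiplicative.ofAdd 1) : φ.ker.FG := by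
  obtain ⟨X, hX⟩ := hG.out
  choose F hFsub hFfin hF using
    fun x ↦ h.exists_finite_conj_zpow_mem_closure t (x * (t ^ (φ x).toAdd)⁻¹)
  rw [Subgroup.fg_iff]
  refine ⟨⋃ x ∈ X, F x, ?_, X.finite_toSet.biUnion fun x _ ↦ hFfin x⟩
  rw [ker_eq_closure_conj φ ht hX]
  apply le_antisymm
  · refine Subgroup.closure_mono (Set.iUnion₂_subset fun x hx y hy ↦ ?_)
    obtain ⟨n, rfl⟩ := hFsub x hy
    exact ⟨x, hx, n, rfl⟩
  · rw [Subgroup.closure_le]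
    rintro _ ⟨x, hx, n, rfl⟩
    exact Subgroup.closure_mono (Set.subset_biUnion_of_mem (u := F) hx) (hF x n)

theorem ker (h : HasPolynomialGrowth G (d + 1)) (φ : G →* Multiplicative ℤ)
    {t : G} (ht : φ t = Multiplicative.ofAdd 1) : HasPolynomialGrowth φ.ker d := by
  intro S hS
  obtain ⟨C, hC⟩ := h (φ.ker.subtype '' S ∪ {1, t}) ((hS.image _).union (Set.toFinite _))
  refine ⟨C * 2 ^ (d + 1), fun r ↦ Nat.le_of_mul_le_mul_right ?_ r.succ_pos⟩
  calc (S ^ r).ncard * (r + 1)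
      ≤ C * (2 * r + 1) ^ (d + 1) := (ncard_pow_mul_succ_le φ ht hS r).trans (hC _)
    _ ≤ C * (2 * (r + 1)) ^ (d + 1) := by gcongr; lia
    _ = C * 2 ^ (d + 1) * (r + 1) ^ d * (r + 1) := by rw [mul_pow]; ring

end HasPolynomialGrowth

end Growth

/-! ### Isometric representations of groups of polynomial growth -/

section Norm

variable {G : Type u} [Group G] {A : Type v} [NormedRing A] {ρ : G →* Aˣ}

theorem norm_map_mul_sub_one_le (hρ : ∀ g, ‖(ρ g : A)‖ ≤ 1) (x y : G) :
    ‖(ρ (x * y) : A) - 1‖ ≤ ‖(ρ x : A) - 1‖ + ‖(ρ y : A) - 1‖ :=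
  calc ‖(ρ (x * y) : A) - 1‖ = ‖ρ x * ((ρ y : A) - 1) + (ρ x - 1)‖ := by
        rw [map_mul, Units.val_mul]; noncomm_ring
    _ ≤ ‖(ρ x : A)‖ * ‖(ρ y : A) - 1‖ + ‖(ρ x : A) - 1‖ :=
        norm_add_le_of_le (norm_mul_le _ _) le_rfl
    _ ≤ ‖(ρ x : A) - 1‖ + ‖(ρ y : A) - 1‖ := by
        rw [add_comm]; gcongr; exact mul_le_of_le_one_left (norm_nonneg _) (hρ x)

theorem norm_map_pow_sub_one_le (hρ : ∀ g, ‖(ρ g : A)‖ ≤ 1) (x : G) (n : ℕ) :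
    ‖(ρ (x ^ n) : A) - 1‖ ≤ n * ‖(ρ x : A) - 1‖ := by
  induction n with
  | zero => simp
  | succ n ih =>
    have := norm_map_mul_sub_one_le hρ (x ^ n) x
    rw [pow_succ]; push_cast; linarith

theorem norm_map_commutatorElement_sub_one_le (hρ : ∀ g, ‖(ρ g : A)‖ ≤ 1) (x y : G) :
    ‖(ρ ⁅x, y⁆ : A) - 1‖ ≤ 2 * ‖(ρ x : A) - 1‖ * ‖(ρ y : A) - 1‖ := by
  have hfactor : (ρ ⁅x, y⁆ : A) - 1 =
      (((ρ x : A) - 1) * (ρ y - 1) - (ρ y - 1) * (ρ x - 1)) * ρ (x⁻¹ * y⁻¹) := by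
    have hone : (ρ y : A) * ρ x * ρ (x⁻¹ * y⁻¹) = 1 := by
      simp only [← Units.val_mul, ← map_mul]; simp [mul_assoc]
    have hcomm : (ρ ⁅x, y⁆ : A) = ρ x * ρ y * ρ (x⁻¹ * y⁻¹) := by
      simp only [← Units.val_mul, ← map_mul, commutatorElement_def, mul_assoc]
    calc (ρ ⁅x, y⁆ : A) - 1 = ρ x * ρ y * ρ (x⁻¹ * y⁻¹) - ρ y * ρ x * ρ (x⁻¹ * y⁻¹) := by
          rw [hcomm, hone]
      _ = _ := by noncomm_ring
  rw [hfactor]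
  calc _ ≤ _ := (norm_mul_le _ _).trans (mul_le_of_le_one_right (norm_nonneg _) (hρ _))
    _ ≤ _ := norm_sub_le_of_le (norm_mul_le _ _) (norm_mul_le _ _)
    _ = _ := by ring

theorem half_norm_sub_one_le_norm_map_pow_sub_one [NormedAlgebra ℝ A]
    (hρ : ∀ g, ‖(ρ g : A)‖ ≤ 1) {x : G} {m n : ℕ} (hm : m * ‖(ρ x : A) - 1‖ ≤ 1 / 2)
    (hn : 1 ≤ n) (hnm : n ≤ m) : ‖(ρ x : A) - 1‖ / 2 ≤ ‖(ρ (x ^ n) : A) - 1‖ := by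
  set δ := ‖(ρ x : A) - 1‖ with hδ
  have hlinear : ∀ n ≤ m, ‖(ρ (x ^ n) : A) - 1 - n • ((ρ x : A) - 1)‖ ≤ n * (δ / 2) := by
    intro n
    induction n with
    | zero => simp
    | succ n ih =>
      intro h
      have hsplit : (ρ (x ^ (n + 1)) : A) - 1 - (n + 1) • ((ρ x : A) - 1) =
          ((ρ (x ^ n) : A) - 1 - n • ((ρ x : A) - 1)) + (ρ (x ^ n) - 1) * (ρ x - 1) := by
        rw [pow_succ, map_mul, Units.val_mul, add_smul]; noncomm_ring
      have hnδ : (n : ℝ) * δ ≤ 1 / 2 := le_trans (by gcongr; lia) hm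
      rw [hsplit]
      calc _ ≤ _ := norm_add_le_of_le (ih (by lia)) (norm_mul_le _ _)
        _ ≤ n * (δ / 2) + 1 / 2 * δ := by
            gcongr; exact (norm_map_pow_sub_one_le hρ x n).trans hnδ
        _ = (n + 1 : ℕ) * (δ / 2) := by push_cast; ring
  have hnorm : ‖n • ((ρ x : A) - 1)‖ = n * δ := by rw [RCLike.norm_nsmul ℝ, nsmul_eq_mul, hδ]
  have htriangle := norm_sub_norm_le (n • ((ρ x : A) - 1)) ((ρ (x ^ n) : A) - 1)
  rw [norm_sub_rev (n • _), hnorm] at htriangle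
  have hn1 : (1 : ℝ) ≤ n := mod_cast hn
  nlinarith [hlinear n hnm, norm_nonneg ((ρ x : A) - 1)]

theorem ncard_powers_mul [NormedAlgebra ℝ A] (hρ : ∀ g, ‖(ρ g : A)‖ ≤ 1) {x : G} {M : ℕ}
    {P : Set G} {r : ℝ} (hM : M * ‖(ρ x : A) - 1‖ ≤ 1 / 2) (hP : ∀ p ∈ P, ‖(ρ p : A) - 1‖ ≤ r)
    (hr : 4 * r < ‖(ρ x : A) - 1‖) :
    ((x ^ ·) '' Set.Iio M * P).ncard = M * P.ncard := by
  have hne : ∀ i j, i < j → j < M → ∀ p ∈ P, ∀ q ∈ P, x ^ i * q ≠ x ^ j * p := by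
    intro i j hij hj p hp q hq heq
    have hq_eq : q = x ^ (j - i) * p := by
      rw [← Nat.add_sub_cancel' hij.le, pow_add, mul_assoc] at heq
      exact mul_left_cancel heq
    have hlower := half_norm_sub_one_le_norm_map_pow_sub_one hρ hM
      (Nat.sub_pos_of_lt hij) (by lia : j - i ≤ M)
    have hpow_eq : x ^ (j - i) = q * p⁻¹ := by rw [hq_eq, mul_inv_cancel_right]
    have hinv : ‖(ρ p⁻¹ : A) - 1‖ ≤ ‖(ρ p : A) - 1‖ := by
      calc ‖(ρ p⁻¹ : A) - 1‖ = ‖(ρ p⁻¹ : A) * (1 - ρ p)‖ := by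
            rw [mul_sub, mul_one, ← Units.val_mul, ← map_mul]; simp
        _ ≤ _ := (norm_mul_le _ _).trans (mul_le_of_le_one_left (norm_nonneg _) (hρ _))
        _ = _ := norm_sub_rev _ _
    rw [hpow_eq] at hlower
    linarith [norm_map_mul_sub_one_le hρ q p⁻¹, hP p hp, hP q hq]
  have hinj : Set.InjOn (fun z : ℕ × G ↦ x ^ z.1 * z.2) (Set.Iio M ×ˢ P) := by
    rintro ⟨i, p⟩ ⟨hi, hp⟩ ⟨j, q⟩ ⟨hj, hq⟩ heq
    obtain hij | rfl | hij := lt_trichotomy i j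
    · exact (hne i j hij hj q hq p hp heq).elim
    · exact Prod.ext rfl (mul_left_cancel heq)
    · exact (hne j i hij hi p hp q hq heq.symm).elim
  have himage : (x ^ ·) '' Set.Iio M * P = (fun z : ℕ × G ↦ x ^ z.1 * z.2) '' Set.Iio M ×ˢ P := by
    ext; simp [Set.mem_mul, and_assoc]
  rw [himage, hinj.ncard_image, Set.ncard_prod, Set.ncard_eq_toFinset_card']
  simp

/-- The set of products `h 0 ^ i₀ * h 1 ^ i₁ * ⋯ * h (k - 1) ^ iₖ₋₁` with all exponents less
than `M`. -/
def powProducts (M : ℕ) : ℕ → (ℕ → G) → Set G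
  | 0, _ => {1}
  | k + 1, h => (h 0 ^ ·) '' Set.Iio M * powProducts M k (fun n ↦ h (n + 1))

theorem norm_map_sub_one_le_of_mem_powProducts (hρ : ∀ g, ‖(ρ g : A)‖ ≤ 1) {M k : ℕ} {h : ℕ → G}
    (hh : ∀ n, ‖(ρ (h (n + 1)) : A) - 1‖ ≤ ‖(ρ (h n) : A) - 1‖ / 2) {p : G}
    (hp : p ∈ powProducts M k h) : ‖(ρ p : A) - 1‖ ≤ 2 * M * ‖(ρ (h 0) : A) - 1‖ := by
  induction k generalizing h p with
  | zero =>
    rw [powProducts, Set.mem_singleton_iff] at hp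
    rw [hp, map_one, Units.val_one, sub_self, norm_zero]; positivity
  | succ k ih =>
    obtain ⟨_, ⟨i, hi, rfl⟩, q, hq, rfl⟩ := hp
    have hiM : (i : ℝ) ≤ M := mod_cast (Set.mem_Iio.1 hi).le
    calc _ ≤ _ := norm_map_mul_sub_one_le hρ (h 0 ^ i) q
      _ ≤ M * ‖(ρ (h 0) : A) - 1‖ + 2 * M * (‖(ρ (h 0) : A) - 1‖ / 2) := by
          gcongr
          · exact (norm_map_pow_sub_one_le hρ _ i).trans (by gcongr)
          · exact (ih (fun n ↦ hh (n + 1)) hq).trans (by gcongr; exact hh 0)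
      _ = 2 * M * ‖(ρ (h 0) : A) - 1‖ := by ring

theorem ncard_powProducts [NormedAlgebra ℝ A] (hρ : ∀ g, ‖(ρ g : A)‖ ≤ 1) {M : ℕ} {h : ℕ → G}
    (hM : 1 ≤ M) (hh : ∀ n, 16 * M * ‖(ρ (h (n + 1)) : A) - 1‖ ≤ ‖(ρ (h n) : A) - 1‖)
    (h0 : M * ‖(ρ (h 0) : A) - 1‖ ≤ 1 / 2) (hne : ∀ n, (ρ (h n) : A) ≠ 1) (k : ℕ) :
    (powProducts M k h).ncard = M ^ k := by
  have hM1 : (1 : ℝ) ≤ M := mod_cast hM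
  have hpos n : 0 < ‖(ρ (h n) : A) - 1‖ := norm_pos_iff.2 (sub_ne_zero.2 (hne n))
  have hhalf n : ‖(ρ (h (n + 1)) : A) - 1‖ ≤ ‖(ρ (h n) : A) - 1‖ / 2 := by
    nlinarith [hh n, hpos (n + 1)]
  induction k generalizing h with
  | zero => simp [powProducts]
  | succ k ih =>
    rw [powProducts, ncard_powers_mul hρ h0
      (fun p hp ↦ norm_map_sub_one_le_of_mem_powProducts hρ (fun n ↦ hhalf (n + 1)) hp)
      (by linarith [hh 0, hpos 0]), pow_succ']
    refine congrArg (M * ·) (ih (fun n ↦ hh (n + 1)) (le_trans ?_ h0) (fun n ↦ hne (n + 1))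
      (fun n ↦ hpos (n + 1)) (fun n ↦ hhalf (n + 1)))
    gcongr
    linarith [hhalf 0, hpos 0]

theorem powProducts_subset_pow {S : Set G} (hS : 1 ∈ S) {h : ℕ → G} {w : ℕ → ℕ}
    (hw : ∀ n, h n ∈ S ^ w n) (M k : ℕ) :
    powProducts M k h ⊆ S ^ (M * ∑ n ∈ Finset.range k, w n) := by
  induction k generalizing h w with
  | zero => simp [powProducts]
  | succ k ih =>
    rw [powProducts, Finset.sum_range_succ', add_comm, mul_add, pow_add]
    refine Set.mul_subset_mul ?_ (ih fun n ↦ hw (n + 1))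
    rintro _ ⟨i, hi, rfl⟩
    have hpow := Set.pow_mem_pow (n := i) (hw 0)
    rw [← pow_mul, mul_comm] at hpow
    exact Set.pow_subset_pow_right hS (Nat.mul_le_mul_right _ (Set.mem_Iio.1 hi).le) hpow

/-- Otherwise `(2 * 4 ^ d) ^ k` products of powers of the `h n` would lie in a ball of radius
`O(4 ^ k)`, which has only `O(4 ^ (d * k))` elements. -/
theorem HasPolynomialGrowth.exists_map_eq_one [NormedAlgebra ℝ A] {d : ℕ}
    (hG : HasPolynomialGrowth G d) (hρ : ∀ g, ‖(ρ g : A)‖ ≤ 1) {S : Set G} (hfin : S.Finite)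
    (hS : 1 ∈ S) {h : ℕ → G} (hmem : ∀ n, h n ∈ S ^ 4 ^ n)
    (hh : ∀ n, 32 * 4 ^ d * ‖(ρ (h (n + 1)) : A) - 1‖ ≤ ‖(ρ (h n) : A) - 1‖)
    (h0 : 4 * 4 ^ d * ‖(ρ (h 0) : A) - 1‖ ≤ 1) : ∃ n, (ρ (h n) : A) = 1 := by
  by_contra! hne
  obtain ⟨C, hC⟩ := hG S hfin
  set M := 2 * 4 ^ d with hM
  have hM1 : 1 ≤ M := Nat.mul_pos two_pos (by positivity)
  have hMcast : (M : ℝ) = 2 * 4 ^ d := by simp [hM]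
  have hhM n : 16 * M * ‖(ρ (h (n + 1)) : A) - 1‖ ≤ ‖(ρ (h n) : A) - 1‖ := by
    rw [hMcast]; linarith [hh n]
  have h0M : M * ‖(ρ (h 0) : A) - 1‖ ≤ 1 / 2 := by rw [hMcast]; linarith
  have hcard (k : ℕ) : 2 ^ k * (4 ^ d) ^ k ≤ C * (2 * M) ^ d * (4 ^ d) ^ k :=
    calc 2 ^ k * (4 ^ d) ^ k = (powProducts M k h).ncard := by
          rw [← mul_pow, ncard_powProducts hρ hM1 hhM h0M hne k]
      _ ≤ (S ^ (M * ∑ n ∈ Finset.range k, 4 ^ n)).ncard :=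
          Set.ncard_le_ncard (powProducts_subset_pow hS hmem M k) (finite_pow hfin _)
      _ ≤ C * (M * ∑ n ∈ Finset.range k, 4 ^ n + 1) ^ d := hC _
      _ ≤ C * (M * 4 ^ k + M * 4 ^ k) ^ d := by
          gcongr
          · exact (Nat.geomSum_lt (by lia) fun n hn ↦ Finset.mem_range.1 hn).le
          · exact Nat.mul_pos hM1 (by positivity)
      _ = C * (2 * M) ^ d * (4 ^ d) ^ k := by
          rw [← two_mul, ← mul_assoc, mul_pow, ← mul_assoc, pow_right_comm]
  exact (Nat.lt_two_pow_self (n := C * (2 * M) ^ d)).not_ge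
    (Nat.le_of_mul_le_mul_right (hcard _) (by positivity))

theorem commutatorElement_mem_pow {S : Set G} (h1 : 1 ∈ S) (hinv : S⁻¹ = S) {g z : G} {n : ℕ}
    (hn : 1 ≤ n) (hg : g ∈ S ^ n) (hz : z ∈ S) : ⁅g, z⁆ ∈ S ^ (4 * n) := by
  have hS : S ⊆ S ^ n := by simpa using Set.pow_subset_pow_right h1 hn
  have hinv_mem {u : G} (hu : u ∈ S ^ n) : u⁻¹ ∈ S ^ n := by rwa [← Set.mem_inv, ← inv_pow, hinv]
  rw [show 4 * n = n + n + n + n by ring, pow_add, pow_add, pow_add]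
  exact Set.mul_mem_mul (Set.mul_mem_mul (Set.mul_mem_mul hg (hS hz)) (hinv_mem hg))
    (hinv_mem (hS hz))

theorem HasPolynomialGrowth.exists_map_eq_one_of_commutators [NormedAlgebra ℝ A] {d : ℕ}
    (hG : HasPolynomialGrowth G d) (hρ : ∀ g, ‖(ρ g : A)‖ ≤ 1) {X : Set G} (hfin : X.Finite)
    {ε : ℝ} (hε : 64 * 4 ^ d * ε ≤ 1) (hX : ∀ x ∈ X, ‖(ρ x : A) - 1‖ ≤ ε) {h z : ℕ → G}
    (h0 : h 0 ∈ X) (hz : ∀ n, z n ∈ X) (hsucc : ∀ n, h (n + 1) = ⁅h n, z n⁆) :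
    ∃ n, (ρ (h n) : A) = 1 := by
  let S := symmetrization X
  have hS : 1 ∈ S := one_mem_symmetrization X
  have hmem (n : ℕ) : h n ∈ S ^ 4 ^ n := by
    induction n with
    | zero => exact (pow_one S).symm ▸ subset_symmetrization X h0
    | succ n ih =>
      rw [hsucc, pow_succ']
      exact commutatorElement_mem_pow hS (inv_symmetrization X) (Nat.one_le_pow n 4 four_pos) ih
        (subset_symmetrization X (hz n))
  refine hG.exists_map_eq_one hρ (symmetrization_finite hfin) hS hmem
    (fun n ↦ ?_) (le_trans ?_ hε)
  · calc 32 * 4 ^ d * ‖(ρ (h (n + 1)) : A) - 1‖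
        ≤ 32 * 4 ^ d * (2 * ‖(ρ (h n) : A) - 1‖ * ‖(ρ (z n) : A) - 1‖) := by
          rw [hsucc]; gcongr; exact norm_map_commutatorElement_sub_one_le hρ _ _
      _ ≤ 32 * 4 ^ d * (2 * ‖(ρ (h n) : A) - 1‖ * ε) := by gcongr; exact hX _ (hz n)
      _ = 64 * 4 ^ d * ε * ‖(ρ (h n) : A) - 1‖ := by ring
      _ ≤ ‖(ρ (h n) : A) - 1‖ := mul_le_of_le_one_left (norm_nonneg _) hε
  · calc 4 * 4 ^ d * ‖(ρ (h 0) : A) - 1‖ ≤ 4 * 4 ^ d * ε := by gcongr; exact hX _ h0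
      _ ≤ 64 * 4 ^ d * ε := by
        have := (norm_nonneg _).trans (hX _ h0)
        gcongr
        norm_num

end Norm

section Linear

theorem eq_one_of_pow_eq_one_of_norm_sub_one_lt {μ : ℂ} {n : ℕ} (hn : n ≠ 0) (hμ : μ ^ n = 1)
    (h : n * ‖μ - 1‖ < 1) : μ = 1 := by
  by_contra hne
  have hnorm : ‖μ‖ = 1 := Complex.norm_eq_one_of_pow_eq_one hμ hn
  have hgeom : ∑ i ∈ Finset.range n, μ ^ i = 0 := by
    simpa [hμ, sub_ne_zero.2 hne] using geom_sum_mul μ n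
  have hpow : ∀ i : ℕ, ‖1 - μ ^ i‖ ≤ i * ‖μ - 1‖ := by
    intro i
    induction i with
    | zero => simp
    | succ i ih =>
      calc ‖1 - μ ^ (i + 1)‖ = ‖(1 - μ ^ i) - μ ^ i * (μ - 1)‖ := by ring_nf
        _ ≤ i * ‖μ - 1‖ + ‖μ ^ i * (μ - 1)‖ := norm_sub_le_of_le ih le_rfl
        _ = (i + 1 : ℕ) * ‖μ - 1‖ := by rw [norm_mul, norm_pow, hnorm]; push_cast; ring
  have hle : (n : ℝ) ≤ n * (n * ‖μ - 1‖) :=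
    calc (n : ℝ) = ‖∑ i ∈ Finset.range n, (1 - μ ^ i)‖ := by simp [Finset.sum_sub_distrib, hgeom]
      _ ≤ ∑ _i ∈ Finset.range n, n * ‖μ - 1‖ := norm_sum_le_of_le _ fun _ hi ↦ (hpow _).trans (by
          gcongr; exact (Finset.mem_range.1 hi).le)
      _ = n * (n * ‖μ - 1‖) := by simp
  have hnpos : (0 : ℝ) < n := by positivity
  nlinarith

variable {K : Type*} [Field K] {V : Type*} [AddCommGroup V] [Module K V]

theorem pow_finrank_eq_one_of_mul_eq_smul_mul {A X : Module.End K V} (hA : IsUnit A)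
    (hX : IsUnit X) {μ : K} (h : A * X = μ • (X * A)) : μ ^ Module.finrank K V = 1 := by
  have hdet := congrArg LinearMap.det h
  rw [LinearMap.det_smul, map_mul, map_mul, mul_comm (LinearMap.det A)] at hdet
  exact mul_eq_right₀ ((hX.map LinearMap.det).mul (hA.map LinearMap.det)).ne_zero |>.1 hdet.symm

variable [FiniteDimensional K V]

/-- On the `μ`-eigenspace of the commutator `f` of `A` and `X`, one has `A * X = μ • (X * A)`. -/
theorem pow_finrank_eigenspace_eq_one {A X f : Module.End K V} (hA : IsUnit A) (hX : IsUnit X)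
    (hf : f * (X * A) = A * X) (hfA : Commute f A) (hfX : Commute f X) (μ : K) :
    μ ^ Module.finrank K (f.eigenspace μ) = 1 := by
  have hmaps {T : Module.End K V} (hT : Commute f T) : ∀ v ∈ f.eigenspace μ, T v ∈ f.eigenspace μ :=
    Module.End.mapsTo_genEigenspace_of_comm hT μ 1
  have hunit {T : Module.End K V} (hT : IsUnit T) (hfT : Commute f T) :
      IsUnit (T.restrict (hmaps hfT)) :=
    LinearMap.isUnit_iff_ker_eq_bot _ |>.2 <| LinearMap.ker_eq_bot.2 fun _ _ h ↦
      Subtype.ext (((Module.End.isUnit_iff T).1 hT).1 (congrArg Subtype.val h))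
  refine pow_finrank_eq_one_of_mul_eq_smul_mul (hunit hA hfA) (hunit hX hfX) ?_
  ext v
  calc A (X v) = f (X (A v)) := (LinearMap.congr_fun hf v).symm
    _ = μ • X (A v) := Module.End.mem_eigenspace_iff.1 (hmaps hfX _ (hmaps hfA _ v.2))

variable {W : Type v} [NormedAddCommGroup W] [NormedSpace ℂ W] {f : Module.End ℂ W}

theorem ker_sub_one_pow_le (hf : ∀ v, ‖f v‖ = ‖v‖) (k : ℕ) :
    LinearMap.ker ((f - 1) ^ k) ≤ LinearMap.ker (f - 1) := by
  have hsq : LinearMap.ker ((f - 1) ^ 2) ≤ LinearMap.ker (f - 1) := by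
    intro v hv
    set w := (f - 1) v with hw
    have hfw : f w = w := sub_eq_zero.1 (by rwa [pow_two] at hv)
    have hfv : f v = w + v := (sub_add_cancel (f v) v).symm
    have hfpow (n : ℕ) : (f ^ n) v = v + n • w := by
      induction n with
      | zero => simp
      | succ n ih =>
        rw [pow_succ', Module.End.mul_apply, ih, map_add, map_nsmul, hfw, hfv, succ_nsmul]
        abel
    have hnorm (n : ℕ) : ‖(f ^ n) v‖ = ‖v‖ := by
      induction n with
      | zero => simp
      | succ n ih => rw [pow_succ', Module.End.mul_apply, hf, ih]
    have hbound (n : ℕ) : n * ‖w‖ ≤ 2 * ‖v‖ :=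
      calc n * ‖w‖ = ‖(f ^ n) v - v‖ := by
            rw [hfpow, add_sub_cancel_left, RCLike.norm_nsmul ℂ, nsmul_eq_mul]
        _ ≤ 2 * ‖v‖ := (norm_sub_le _ _).trans_eq (by rw [hnorm, two_mul])
    by_contra hne
    obtain ⟨n, hn⟩ := Archimedean.arch (2 * ‖v‖ + 1) (norm_pos_iff.2 hne)
    rw [nsmul_eq_mul] at hn
    linarith [hbound n]
  induction k with
  | zero => rw [pow_zero, Module.End.one_eq_id, LinearMap.ker_id]; exact bot_le
  | succ k ih =>
    intro v hv
    rw [pow_succ, LinearMap.mem_ker, Module.End.mul_apply] at hv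
    exact hsq (by simpa [pow_two] using ih hv)

theorem eq_one_of_forall_hasEigenvalue_eq_one [FiniteDimensional ℂ W] (hf : ∀ v, ‖f v‖ = ‖v‖)
    (h : ∀ μ, f.HasEigenvalue μ → μ = 1) : f = 1 := by
  have hle (μ : ℂ) : f.maxGenEigenspace μ ≤ LinearMap.ker (f - 1) := by
    by_cases hμ : f.HasEigenvalue μ
    · intro v hv
      obtain ⟨k, hk⟩ := Module.End.mem_maxGenEigenspace f μ v |>.1 hv
      rw [h μ hμ, one_smul] at hk
      exact ker_sub_one_pow_le hf k hk
    · have hbot : f.maxGenEigenspace μ = ⊥ := by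
        by_contra hne
        have htop : f.HasUnifEigenvalue μ ⊤ := hne
        exact hμ (htop.lt one_pos)
      exact hbot.trans_le bot_le
  have htop : LinearMap.ker (f - 1) = ⊤ :=
    top_le_iff.1 (Module.End.iSup_maxGenEigenspace_eq_top f ▸ iSup_le hle)
  exact sub_eq_zero.1 (LinearMap.ker_eq_top.1 htop)

end Linear

section Representation

variable {G : Type u} [Group G]

theorem commute_map_of_mem_closure {H : Type v} [Group H] {ρ : G →* H} {X : Set G} {u : H}
    (h : ∀ x ∈ X, Commute u (ρ x)) : ∀ k ∈ Subgroup.closure X, Commute u (ρ k) :=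
  fun _ hk ↦ (Subgroup.closure_le ((Subgroup.centralizer {u}).comap ρ)).2
    (fun x hx ↦ Subgroup.mem_centralizer_singleton_iff.2 (h x hx).eq.symm) hk
    |> Subgroup.mem_centralizer_singleton_iff.1 |>.symm

theorem finiteIndex_closure_norm_map_sub_one_lt {A : Type v} [NormedRing A] [ProperSpace A]
    {ρ : G →* Aˣ} (hρ : ∀ g, ‖(ρ g : A)‖ ≤ 1) {ε : ℝ} (hε : 0 < ε) :
    (Subgroup.closure {g | ‖(ρ g : A) - 1‖ < ε}).FiniteIndex := by
  obtain ⟨T, hT, hcover⟩ := Metric.totallyBounded_iff.1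
    (isCompact_closedBall (0 : A) 1).totallyBounded (ε / 2) (by positivity)
  have hnear (g : G) : ∃ y : T, dist (ρ g : A) y < ε / 2 := by
    obtain ⟨y, hy, hgy⟩ := Set.mem_iUnion₂.1 (hcover (mem_closedBall_zero_iff.2 (hρ g)))
    exact ⟨⟨y, hy⟩, hgy⟩
  choose Y hY using hnear
  have : Finite T := hT
  have hfinite : Finite (G ⧸ Subgroup.closure {g | ‖(ρ g : A) - 1‖ < ε}) := by
    refine .of_injective (fun q ↦ Y q.out) fun p q hpq ↦ ?_
    rw [← p.out_eq', ← q.out_eq', QuotientGroup.eq]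
    refine Subgroup.subset_closure ?_
    calc ‖(ρ (p.out⁻¹ * q.out) : A) - 1‖ = ‖(ρ p.out⁻¹ : A) * (ρ q.out - ρ p.out)‖ := by
          rw [mul_sub, ← Units.val_mul, ← Units.val_mul, ← map_mul, ← map_mul]; simp
      _ ≤ dist (ρ q.out : A) (ρ p.out) := dist_eq_norm (ρ q.out : A) (ρ p.out) ▸
          (norm_mul_le _ _).trans (mul_le_of_le_one_left (norm_nonneg _) (hρ _))
      _ ≤ dist (ρ q.out : A) (Y q.out) + dist (ρ p.out : A) (Y q.out) := dist_triangle_right _ _ _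
      _ < ε / 2 + ε / 2 := add_lt_add (hY _) ((show Y p.out = Y q.out from hpq) ▸ hY _)
      _ = ε := add_halves ε
  exact Subgroup.finiteIndex_of_finite_quotient

variable {W : Type v} [NormedAddCommGroup W] [NormedSpace ℂ W] {ρ : G →* (W →L[ℂ] W)ˣ}

theorem norm_map_le_one (hρ : ∀ g v, ‖(ρ g : W →L[ℂ] W) v‖ = ‖v‖) (g : G) :
    ‖(ρ g : W →L[ℂ] W)‖ ≤ 1 :=
  ContinuousLinearMap.opNorm_le_bound _ zero_le_one fun v ↦ by rw [hρ, one_mul]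

variable [FiniteDimensional ℂ W]

theorem map_commutatorElement_eq_one_of_norm_lt (hρ : ∀ g v, ‖(ρ g : W →L[ℂ] W) v‖ = ‖v‖) {x y : G}
    (hx : Commute (ρ ⁅x, y⁆) (ρ x)) (hy : Commute (ρ ⁅x, y⁆) (ρ y))
    (h : Module.finrank ℂ W * ‖(ρ ⁅x, y⁆ : W →L[ℂ] W) - 1‖ < 1) : ρ ⁅x, y⁆ = 1 := by
  let toEnd := ContinuousLinearMap.toLinearMapRingHom (R₁ := ℂ) (M₁ := W)
  let f : Module.End ℂ W := toEnd (ρ ⁅x, y⁆)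
  have hcomm : f * (toEnd (ρ y) * toEnd (ρ x)) = toEnd (ρ x) * toEnd (ρ y) := by
    simp only [f, ← map_mul, ← Units.val_mul, commutatorElement_def]; simp
  have heigen (μ : ℂ) (hμ : f.HasEigenvalue μ) : μ = 1 := by
    obtain ⟨v, hv⟩ := hμ.exists_hasEigenvector
    have hroot := pow_finrank_eigenspace_eq_one ((ρ x).isUnit.map toEnd)
      ((ρ y).isUnit.map toEnd) hcomm (hx.map (toEnd.toMonoidHom.comp (Units.coeHom _)))
      (hy.map (toEnd.toMonoidHom.comp (Units.coeHom _))) μ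
    have hdist : ‖μ - 1‖ ≤ ‖(ρ ⁅x, y⁆ : W →L[ℂ] W) - 1‖ := by
      have happly : ((ρ ⁅x, y⁆ : W →L[ℂ] W) - 1) v = (μ - 1) • v := by
        rw [sub_smul, one_smul, ← hv.apply_eq_smul]; rfl
      have hle := ((ρ ⁅x, y⁆ : W →L[ℂ] W) - 1).le_opNorm v
      rw [happly, norm_smul] at hle
      exact le_of_mul_le_mul_right hle (norm_pos_iff.2 hv.2)
    refine eq_one_of_pow_eq_one_of_norm_sub_one_lt ?_ hroot (lt_of_le_of_lt ?_ h)
    · exact Submodule.finrank_eq_zero.not.2 hμ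
    · gcongr; exact Submodule.finrank_le _
  have hf : f = 1 := eq_one_of_forall_hasEigenvalue_eq_one (hρ _) heigen
  exact Units.ext (ContinuousLinearMap.coe_injective hf)

theorem exists_not_commute_map_commutatorElement (hρ : ∀ g v, ‖(ρ g : W →L[ℂ] W) v‖ = ‖v‖)
    {X : Set G} {g z : G} (hg : g ∈ Subgroup.closure X) (hz : z ∈ X) (hgz : ¬Commute (ρ g) (ρ z))
    (h : Module.finrank ℂ W * ‖(ρ ⁅g, z⁆ : W →L[ℂ] W) - 1‖ < 1) :
    ∃ z' ∈ X, ¬Commute (ρ ⁅g, z⁆) (ρ z') := by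
  by_contra! hcentral
  refine hgz (commutatorElement_eq_one_iff_commute.1 ?_)
  rw [← map_commutatorElement]
  exact map_commutatorElement_eq_one_of_norm_lt hρ (commute_map_of_mem_closure hcentral g hg)
    (hcentral z hz) h

/-- If `x` and `y` did not commute, iterated commutators with `x` and `y` would never become
trivial, since a commutator close to `1` and central in the subgroup generated by `x` and `y` is
trivial. -/
theorem HasPolynomialGrowth.commute_map {d : ℕ} (hG : HasPolynomialGrowth G d)
    (hρ : ∀ g v, ‖(ρ g : W →L[ℂ] W) v‖ = ‖v‖) {ε : ℝ} (hε : 64 * 4 ^ d * ε ≤ 1)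
    (hε' : Module.finrank ℂ W * ε < 1) {x y : G} (hx : ‖(ρ x : W →L[ℂ] W) - 1‖ ≤ ε)
    (hy : ‖(ρ y : W →L[ℂ] W) - 1‖ ≤ ε) : Commute (ρ x) (ρ y) := by
  by_contra hxy
  have hρ' := norm_map_le_one hρ
  have hε1 : 2 * ε ≤ 1 := by
    nlinarith [norm_nonneg ((ρ x : W →L[ℂ] W) - 1), one_le_pow₀ (n := d) (by simp : (1 : ℝ) ≤ 4)]
  have hnorm : ∀ z ∈ ({x, y} : Set G), ‖(ρ z : W →L[ℂ] W) - 1‖ ≤ ε := by simp [hx, hy]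
  let T := {g : G // g ∈ Subgroup.closure {x, y} ∧ ‖(ρ g : W →L[ℂ] W) - 1‖ ≤ ε ∧
    ∃ z ∈ ({x, y} : Set G), ¬Commute (ρ g) (ρ z)}
  have hstep (g : T) : ∃ g' : T, ∃ z ∈ ({x, y} : Set G), (g' : G) = ⁅(g : G), z⁆ := by
    obtain ⟨g, hgK, hg, z, hz, hgz⟩ := g
    have hg' : ‖(ρ ⁅g, z⁆ : W →L[ℂ] W) - 1‖ ≤ ε :=
      calc _ ≤ _ := norm_map_commutatorElement_sub_one_le hρ' g z
        _ ≤ 2 * ε * ‖(ρ z : W →L[ℂ] W) - 1‖ := by gcongr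
        _ ≤ 1 * ε := by gcongr; exact hnorm z hz
        _ = ε := one_mul ε
    have hzK := Subgroup.subset_closure hz
    have hcK : ⁅g, z⁆ ∈ Subgroup.closure {x, y} :=
      mul_mem (mul_mem (mul_mem hgK hzK) (inv_mem hgK)) (inv_mem hzK)
    have hsmall : Module.finrank ℂ W * ‖(ρ ⁅g, z⁆ : W →L[ℂ] W) - 1‖ < 1 :=
      lt_of_le_of_lt (by gcongr) hε'
    exact ⟨⟨_, hcK, hg', exists_not_commute_map_commutatorElement hρ hgK hz hgz hsmall⟩, z, hz, rfl⟩
  choose next z hz hnext using hstep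
  let h (n : ℕ) : T := next^[n] ⟨x, Subgroup.subset_closure (by simp), hx, y, by simp, hxy⟩
  have hsucc (n : ℕ) : (h (n + 1) : G) = ⁅(h n : G), z (h n)⁆ := by
    rw [← hnext, ← Function.iterate_succ_apply' next n]
  obtain ⟨n, hn⟩ := hG.exists_map_eq_one_of_commutators hρ' (Set.toFinite {x, y}) hε hnorm
    (h := fun n ↦ h n) (by simp [h]) (fun n ↦ hz (h n)) hsucc
  obtain ⟨z, -, hz⟩ := (h n).2.2.2
  rw [Units.val_eq_one] at hn
  exact hz (hn ▸ Commute.one_left _)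

theorem HasPolynomialGrowth.exists_finiteIndex_commute_map {d : ℕ} (hG : HasPolynomialGrowth G d)
    (hρ : ∀ g v, ‖(ρ g : W →L[ℂ] W) v‖ = ‖v‖) :
    ∃ K : Subgroup G, K.FiniteIndex ∧ ∀ a ∈ K, ∀ b ∈ K, Commute (ρ a) (ρ b) := by
  set n : ℝ := (Module.finrank ℂ W : ℝ)
  have hn : 0 ≤ n := Nat.cast_nonneg _
  have h4 : (1 : ℝ) ≤ 4 ^ d := one_le_pow₀ (by norm_num)
  set ε : ℝ := (64 * 4 ^ d * (n + 1))⁻¹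
  have hε : 0 < ε := by positivity
  have hε_mul : 64 * 4 ^ d * (n + 1) * ε = 1 := mul_inv_cancel₀ (by positivity)
  have : ProperSpace (W →L[ℂ] W) := FiniteDimensional.proper ℂ _
  refine ⟨_, finiteIndex_closure_norm_map_sub_one_lt (norm_map_le_one hρ) hε, fun a ha b hb ↦ ?_⟩
  refine commute_map_of_mem_closure (fun y hy ↦ ?_) b hb
  refine (commute_map_of_mem_closure (fun x hx ↦ ?_) a ha).symm
  have h64 : 64 * 4 ^ d * ε ≤ 1 := by nlinarith [mul_nonneg hn hε.le]
  have hfinrank : n * ε < 1 := by nlinarith [mul_nonneg hn hε.le]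
  exact hG.commute_map hρ h64 hfinrank hy.le hx.le

end Representation

/-! ### Harmonic functions -/

section Harmonic

variable {G : Type u} [Group G] {ι : Type v} [Fintype ι] {σ : ι → G}

/-- Harmonicity of `f` for the random walk on `G` whose steps are right multiplications by
the `σ i`, each with weight one. -/
def IsHarmonic (σ : ι → G) (f : G → ℝ) : Prop := ∀ g, ∑ i, (f (g * σ i) - f g) = 0

/-- The Lipschitz harmonic functions for the random walk with steps `σ i`. -/
def lipschitzHarmonic (σ : ι → G) : Submodule ℝ (G → ℝ) where
  carrier := {f | IsHarmonic σ f ∧ ∃ L : ℝ, ∀ g i, |f (g * σ i) - f g| ≤ L}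
  add_mem' := by
    rintro f f' ⟨hf, L, hL⟩ ⟨hf', L', hL'⟩
    refine ⟨fun g ↦ ?_, L + L', fun g i ↦ ?_⟩
    · simp_rw [Pi.add_apply, add_sub_add_comm, Finset.sum_add_distrib, hf g, hf' g, add_zero]
    · rw [Pi.add_apply, Pi.add_apply, add_sub_add_comm]
      exact (abs_add_le _ _).trans (add_le_add (hL g i) (hL' g i))
  zero_mem' := ⟨fun g ↦ by simp, 0, fun g i ↦ by simp⟩
  smul_mem' := by
    rintro c f ⟨hf, L, hL⟩
    refine ⟨fun g ↦ ?_, |c| * L, fun g i ↦ ?_⟩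
    · simp_rw [Pi.smul_apply, ← smul_sub, ← Finset.smul_sum, hf g, smul_zero]
    · rw [Pi.smul_apply, Pi.smul_apply, ← smul_sub, smul_eq_mul, abs_mul]
      exact mul_le_mul_of_nonneg_left (hL g i) (abs_nonneg c)

end Harmonic

section Averaging

open scoped RealInnerProductSpace

variable {G : Type u} [Group G] {H : Type v} [NormedAddCommGroup H] [InnerProductSpace ℝ H]
  (ρ : G →* (H ≃ₗᵢ[ℝ] H)) (S : Finset G)

/-- The average `P` of the operators `ρ s` over `s ∈ S`. -/
noncomputable def averaging : H →ₗ[ℝ] H :=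
  (S.card : ℝ)⁻¹ • ∑ s ∈ S, ((ρ s).toLinearEquiv : H →ₗ[ℝ] H)

/-- The energy `‖v‖² - ‖P v‖²` of a vector. By `sum_norm_map_pairMul_sub_sq` it is, up to a
constant, the total squared displacement of `v` under the products of two elements of `S`. -/
noncomputable def energy (v : H) : ℝ := ‖v‖ ^ 2 - ‖averaging ρ S v‖ ^ 2

/-- The family of all products of two elements of `S`. Its random walk is the square of that
of `S`, so its Markov operator is positive semidefinite. -/
def pairMul (p : S × S) : G := p.1 * p.2

variable {ρ S}

theorem averaging_apply (v : H) : averaging ρ S v = (S.card : ℝ)⁻¹ • ∑ s ∈ S, ρ s v := by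
  simp [averaging, LinearMap.sum_apply]

theorem map_mul_apply (g h : G) (v : H) : ρ (g * h) v = ρ g (ρ h v) := by
  rw [map_mul, LinearIsometryEquiv.coe_mul, Function.comp_apply]

theorem inner_map_left (g : G) (u v : H) : ⟪ρ g u, v⟫ = ⟪u, ρ g⁻¹ v⟫ := by
  rw [← (ρ g).inner_map_map u, ← map_mul_apply, mul_inv_cancel, map_one,
    LinearIsometryEquiv.coe_one, id]

namespace IsSymmGenerating

variable (hS : IsSymmGenerating (S : Set G))
include hS

theorem card_pos : 0 < (S.card : ℝ) := by
  exact_mod_cast Finset.card_pos.2 ⟨1, Finset.mem_coe.1 hS.one_mem⟩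

theorem isSymmetric_averaging : (averaging ρ S).IsSymmetric := fun u v ↦ by
  rw [averaging_apply, averaging_apply, real_inner_smul_left, real_inner_smul_right, sum_inner,
    inner_sum]
  congr 1
  exact Finset.sum_nbij' (·⁻¹) (·⁻¹) (fun s hs ↦ hS.inv_mem hs) (fun s hs ↦ hS.inv_mem hs)
    (by simp) (by simp) (fun s _ ↦ inner_map_left s u v)

theorem sum_map (v : H) : ∑ s : S, ρ s v = (S.card : ℝ) • averaging ρ S v := by
  rw [averaging_apply, smul_inv_smul₀ hS.card_pos.ne', Finset.sum_coe_sort S fun s ↦ ρ s v]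

theorem sum_map_pairMul (v : H) :
    ∑ p, ρ (pairMul S p) v = (S.card : ℝ) ^ 2 • averaging ρ S (averaging ρ S v) := by
  have hrow (s : S) : ∑ t : S, ρ (pairMul S (s, t)) v = ρ s ((S.card : ℝ) • averaging ρ S v) := by
    simp_rw [pairMul, map_mul_apply]
    rw [← map_sum, hS.sum_map]
  simp_rw [Fintype.sum_prod_type, hrow]
  rw [hS.sum_map, map_smul, smul_smul, sq]

theorem sum_norm_map_pairMul_sub_sq (v : H) :
    ∑ p, ‖ρ (pairMul S p) v - v‖ ^ 2 = 2 * (S.card : ℝ) ^ 2 * energy ρ S v := by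
  have hexpand (g : G) : ‖ρ g v - v‖ ^ 2 = 2 * ‖v‖ ^ 2 - 2 * ⟪ρ g v, v⟫ := by
    rw [norm_sub_sq_real, LinearIsometryEquiv.norm_map]; ring
  simp_rw [hexpand, Finset.sum_sub_distrib, ← Finset.mul_sum, ← sum_inner]
  rw [hS.sum_map_pairMul, real_inner_smul_left, hS.isSymmetric_averaging,
    real_inner_self_eq_norm_sq, energy, Finset.sum_const, Finset.card_univ, Fintype.card_prod,
    Fintype.card_coe, nsmul_eq_mul]
  push_cast
  ring

theorem energy_nonneg (v : H) : 0 ≤ energy ρ S v := by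
  have hcard := hS.card_pos
  refine nonneg_of_mul_nonneg_right ?_ (by positivity : 0 < 2 * (S.card : ℝ) ^ 2)
  rw [← hS.sum_norm_map_pairMul_sub_sq]
  positivity

theorem norm_map_pairMul_sub_le (v : H) (p : S × S) :
    ‖ρ (pairMul S p) v - v‖ ≤ 2 * S.card * √(energy ρ S v) := by
  have hle : ‖ρ (pairMul S p) v - v‖ ^ 2 ≤ 2 * (S.card : ℝ) ^ 2 * energy ρ S v := by
    rw [← hS.sum_norm_map_pairMul_sub_sq]
    exact Finset.single_le_sum (f := fun p ↦ ‖ρ (pairMul S p) v - v‖ ^ 2)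
      (fun _ _ ↦ by positivity) (Finset.mem_univ p)
  refine le_of_sq_le_sq (hle.trans ?_) (by positivity)
  rw [mul_pow, Real.sq_sqrt (hS.energy_nonneg v)]
  nlinarith [mul_nonneg (sq_nonneg (S.card : ℝ)) (hS.energy_nonneg (ρ := ρ) v)]

theorem norm_map_sub_le (v : H) {l : ℕ} {x : G} (hx : x ∈ (S : Set G) ^ l) :
    ‖ρ x v - v‖ ≤ l * (2 * S.card * √(energy ρ S v)) := by
  induction l generalizing x with
  | zero =>
    obtain rfl : x = 1 := by simpa using hx
    simp
  | succ l ih =>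
    rw [pow_succ] at hx
    obtain ⟨y, hy, s, hs, rfl⟩ := hx
    have hstep : ‖ρ s v - v‖ ≤ 2 * S.card * √(energy ρ S v) := by
      simpa [pairMul] using
        hS.norm_map_pairMul_sub_le (ρ := ρ) v (⟨s, hs⟩, ⟨1, Finset.mem_coe.1 hS.one_mem⟩)
    calc ‖ρ (y * s) v - v‖ = ‖ρ y (ρ s v - v) + (ρ y v - v)‖ := by
          rw [map_mul_apply, map_sub, sub_add_sub_cancel]
      _ ≤ ‖ρ s v - v‖ + ‖ρ y v - v‖ := by
          simpa only [LinearIsometryEquiv.norm_map] using norm_add_le (ρ y (ρ s v - v)) (ρ y v - v)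
      _ ≤ 2 * S.card * √(energy ρ S v) + l * (2 * S.card * √(energy ρ S v)) :=
          add_le_add hstep (ih hy)
      _ = (l + 1 : ℕ) * (2 * S.card * √(energy ρ S v)) := by push_cast; ring

theorem norm_averaging_averaging_sub_sq (v : H) :
    ‖averaging ρ S (averaging ρ S v) - v‖ ^ 2 =
      energy ρ S v - energy ρ S (averaging ρ S v) := by
  rw [norm_sub_sq_real, hS.isSymmetric_averaging, real_inner_self_eq_norm_sq, energy, energy]
  ring

theorem norm_averaging_pow_le (v : H) (n : ℕ) : ‖(averaging ρ S ^ n) v‖ ≤ ‖v‖ := by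
  induction n with
  | zero => simp
  | succ n ih =>
    have henergy := hS.energy_nonneg (ρ := ρ) ((averaging ρ S ^ n) v)
    rw [energy, sub_nonneg] at henergy
    rw [pow_succ', Module.End.mul_apply]
    exact (le_of_sq_le_sq henergy (norm_nonneg _)).trans ih

theorem energy_averaging_pow_le {η : ℝ} (hη : η ≤ 1)
    (h : ∀ v, η * energy ρ S v ≤ ‖averaging ρ S (averaging ρ S v) - v‖ ^ 2) (v : H) (n : ℕ) :
    energy ρ S ((averaging ρ S ^ n) v) ≤ (1 - η) ^ n * ‖v‖ ^ 2 := by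
  induction n with
  | zero => simp [energy]
  | succ n ih =>
    have hle := h ((averaging ρ S ^ n) v)
    rw [hS.norm_averaging_averaging_sub_sq] at hle
    rw [pow_succ', Module.End.mul_apply]
    calc energy ρ S (averaging ρ S ((averaging ρ S ^ n) v))
        ≤ (1 - η) * energy ρ S ((averaging ρ S ^ n) v) := by linarith
      _ ≤ (1 - η) * ((1 - η) ^ n * ‖v‖ ^ 2) := by gcongr
      _ = (1 - η) ^ (n + 1) * ‖v‖ ^ 2 := by ring

variable {δ : H} (hδ : Orthonormal ℝ fun g ↦ ρ g δ)
include hδ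

theorem inner_map_averaging_pow_sum_eq_one (X : Finset G) (n : ℕ) {g : G}
    (hg : ∀ x ∈ (S : Set G) ^ n, g * x ∈ X) :
    ⟪ρ g ((averaging ρ S ^ n) δ), ∑ x ∈ X, ρ x δ⟫ = 1 := by
  classical
  induction n generalizing g with
  | zero =>
    have hgX : g ∈ X := by simpa using hg
    simp [inner_sum, orthonormal_iff_ite.1 hδ, hgX]
  | succ n ih =>
    have hone (s : G) (hs : s ∈ S) :
        ⟪ρ g (ρ s ((averaging ρ S ^ n) δ)), ∑ x ∈ X, ρ x δ⟫ = 1 := by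
      rw [← map_mul_apply]
      refine ih fun x hx ↦ ?_
      rw [mul_assoc]
      exact hg _ (pow_succ' (S : Set G) n ▸ Set.mul_mem_mul hs hx)
    rw [pow_succ', Module.End.mul_apply, averaging_apply, map_smul, map_sum, real_inner_smul_left,
      sum_inner, Finset.sum_congr rfl hone, Finset.sum_const, nsmul_one,
      inv_mul_cancel₀ hS.card_pos.ne']

theorem one_le_norm_averaging_pow_sq_mul_ncard (n : ℕ) :
    1 ≤ ‖(averaging ρ S ^ n) δ‖ ^ 2 * ((S : Set G) ^ n).ncard := by
  have hfin : ((S : Set G) ^ n).Finite := finite_pow S.finite_toSet n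
  have hone := hS.inner_map_averaging_pow_sum_eq_one hδ hfin.toFinset n (g := 1) (by simp)
  rw [map_one, LinearIsometryEquiv.coe_one, id] at hone
  have hnorm : ‖∑ x ∈ hfin.toFinset, ρ x δ‖ ^ 2 = ((S : Set G) ^ n).ncard := by
    have hinner := hδ.inner_sum (fun _ ↦ 1) (fun _ ↦ 1) hfin.toFinset
    simp only [one_smul] at hinner
    rw [← real_inner_self_eq_norm_sq, hinner, Set.ncard_eq_toFinset_card _ hfin]
    simp
  rw [← hnorm, ← mul_pow, one_le_sq_iff₀ (by positivity), ← hone]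
  exact real_inner_le_norm _ _

theorem one_div_ncard_le_inner_averaging_pow (N : ℕ) :
    1 / (((S : Set G) ^ N).ncard : ℝ) ≤ ⟪δ, (averaging ρ S ^ (2 * N)) δ⟫ := by
  have hinner : ⟪δ, (averaging ρ S ^ (2 * N)) δ⟫ = ‖(averaging ρ S ^ N) δ‖ ^ 2 := by
    rw [← real_inner_self_eq_norm_sq, hS.isSymmetric_averaging.pow N, ← Module.End.mul_apply,
      ← pow_add, ← two_mul]
  rw [hinner]
  exact div_le_of_le_mul₀ (Nat.cast_nonneg _) (by positivity)
    (hS.one_le_norm_averaging_pow_sq_mul_ncard hδ N)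

/-- Otherwise the powers `S ^ l` would move `u = P ^ (2 * N) δ` so little that `u` correlates with
more than `4 * M ^ 2` vectors of the orthonormal family, against Bessel's inequality. -/
theorem one_lt_mul_sqrt_energy [Infinite G] (N : ℕ) :
    1 < 16 * S.card * (((S : Set G) ^ N).ncard : ℝ) ^ 3 *
      √(energy ρ S ((averaging ρ S ^ (2 * N)) δ)) := by
  classical
  set u := (averaging ρ S ^ (2 * N)) δ
  set M : ℕ := ((S : Set G) ^ N).ncard
  by_contra! hsmall
  have hnorm : ‖δ‖ = 1 := by simpa using hδ.1 1
  have hM : 1 / (M : ℝ) ≤ ⟪δ, u⟫ := hS.one_div_ncard_le_inner_averaging_pow hδ N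
  have hM0 : 0 < M := Set.ncard_pos (finite_pow S.finite_toSet N) |>.2
    ⟨1, Set.one_mem_pow hS.one_mem⟩
  set l := 4 * M ^ 2
  have hcorr (x : G) (hx : x ∈ S ^ l) : 1 / (2 * M : ℝ) ≤ ⟪ρ x δ, u⟫ := by
    have hx' : x⁻¹ ∈ (S : Set G) ^ l :=
      hS.inv_mem_pow (Finset.coe_pow S l ▸ Finset.mem_coe.2 hx)
    have hmove : ‖ρ x⁻¹ u - u‖ ≤ 1 / (2 * M) := by
      refine (hS.norm_map_sub_le u hx').trans ?_
      rw [le_div_iff₀ (by positivity)]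
      push_cast [l]
      linarith
    have hinner := neg_le_of_abs_le (abs_real_inner_le_norm δ (ρ x⁻¹ u - u))
    rw [hnorm, one_mul, inner_sub_right] at hinner
    have hhalf : 1 / (M : ℝ) = 1 / (2 * M) + 1 / (2 * M) := by field_simp; norm_num
    rw [inner_map_left]
    linarith
  have hbessel : ((S ^ l).card : ℝ) * (1 / (2 * M : ℝ)) ^ 2 ≤ 1 := by
    calc ((S ^ l).card : ℝ) * (1 / (2 * M : ℝ)) ^ 2
        ≤ ∑ x ∈ S ^ l, ‖⟪ρ x δ, u⟫‖ ^ 2 := by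
          rw [← nsmul_eq_mul]
          refine Finset.card_nsmul_le_sum _ _ _ fun x hx ↦ ?_
          gcongr
          exact (hcorr x hx).trans (Real.le_norm_self _)
      _ ≤ ‖u‖ ^ 2 := hδ.sum_inner_products_le u
      _ ≤ 1 := pow_le_one₀ (norm_nonneg _) (hnorm ▸ hS.norm_averaging_pow_le δ (2 * N))
  have hcard : (l : ℝ) + 1 ≤ (S ^ l).card := by
    exact_mod_cast Finset.add_one_le_card_pow hS.one_mem
      (by rw [hS.closure_eq_top]; exact Set.infinite_univ) l
  have hl : (l : ℝ) * (1 / (2 * M : ℝ)) ^ 2 = 1 := by push_cast [l]; field_simp; norm_num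
  nlinarith [show 0 < (1 / (2 * M : ℝ)) ^ 2 by positivity]

theorem exists_norm_averaging_averaging_sub_sq_lt [Infinite G] {d : ℕ}
    (hG : HasPolynomialGrowth G d) {η : ℝ} (hη : 0 < η) (hη1 : η < 1) :
    ∃ v : H, ‖averaging ρ S (averaging ρ S v) - v‖ ^ 2 < η * energy ρ S v := by
  by_contra! h
  obtain ⟨C, hC⟩ := hG S S.finite_toSet
  obtain ⟨N, hN⟩ := exists_mul_pow_lt_pow (16 * S.card * C ^ 3) (3 * d)
    ((one_lt_inv₀ (sub_pos.2 hη1)).2 (sub_lt_self 1 hη))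
  have hη0 : 0 < 1 - η := sub_pos.2 hη1
  have hnorm : ‖δ‖ = 1 := by simpa using hδ.1 1
  have henergy : √(energy ρ S ((averaging ρ S ^ (2 * N)) δ)) ≤ (1 - η) ^ N := by
    refine Real.sqrt_le_iff.2 ⟨by positivity, ?_⟩
    simpa [hnorm, ← pow_mul, mul_comm N] using hS.energy_averaging_pow_le hη1.le h δ (2 * N)
  have hM : (((S : Set G) ^ N).ncard : ℝ) ≤ C * (N + 1) ^ d := by exact_mod_cast hC N
  have hlt := hS.one_lt_mul_sqrt_energy hδ N
  have hle : 16 * S.card * (((S : Set G) ^ N).ncard : ℝ) ^ 3 *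
      √(energy ρ S ((averaging ρ S ^ (2 * N)) δ)) ≤ 1 := by
    calc _ ≤ 16 * S.card * (C * ((N : ℝ) + 1) ^ d) ^ 3 * (1 - η) ^ N := by gcongr
      _ = 16 * S.card * C ^ 3 * ((N : ℝ) + 1) ^ (3 * d) * (1 - η) ^ N := by ring
      _ ≤ (1 - η)⁻¹ ^ N * (1 - η) ^ N := by gcongr
      _ = 1 := by rw [← mul_pow, inv_mul_cancel₀ hη0.ne', one_pow]
  exact hlt.not_ge hle

theorem exists_energy_eq_one_norm_averaging_averaging_sub_sq_le [Infinite G] {d : ℕ}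
    (hG : HasPolynomialGrowth G d) {η : ℝ} (hη : 0 < η) (hη1 : η < 1) :
    ∃ w : H, energy ρ S w = 1 ∧ ‖averaging ρ S (averaging ρ S w) - w‖ ^ 2 ≤ η := by
  obtain ⟨v, hv⟩ := hS.exists_norm_averaging_averaging_sub_sq_lt hδ hG hη hη1
  have henergy : 0 < energy ρ S v := pos_of_mul_pos_right ((sq_nonneg _).trans_lt hv) hη.le
  have hsqrt : ‖(√(energy ρ S v))⁻¹‖ ^ 2 = (energy ρ S v)⁻¹ := by
    rw [norm_inv, inv_pow, Real.norm_eq_abs, sq_abs, Real.sq_sqrt henergy.le]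
  refine ⟨(√(energy ρ S v))⁻¹ • v, ?_, ?_⟩
  · rw [energy, map_smul, norm_smul, norm_smul, mul_pow, mul_pow, hsqrt, ← mul_sub, ← energy,
      inv_mul_cancel₀ henergy.ne']
  · rw [map_smul, map_smul, ← smul_sub, norm_smul, mul_pow, hsqrt, inv_mul_le_iff₀ henergy,
      mul_comm]
    exact hv.le

omit hδ in
theorem exists_two_le_norm_map_pairMul_sub_sq {w : H} (hw : energy ρ S w = 1) :
    ∃ p, 2 ≤ ‖ρ (pairMul S p) w - w‖ ^ 2 := by
  by_contra! hlt
  have : Nonempty (S × S) := ⟨⟨1, hS.one_mem⟩, ⟨1, hS.one_mem⟩⟩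
  have hsum_lt := Finset.sum_lt_sum_of_nonempty Finset.univ_nonempty fun p _ ↦ hlt p
  rw [hS.sum_norm_map_pairMul_sub_sq, hw] at hsum_lt
  simp [sq, mul_comm] at hsum_lt

/-- The correlations of the cocycle `g ↦ ρ g w - w` with one of its values are almost harmonic
when `w` has energy one and is almost fixed by the square of the averaging operator. -/
theorem exists_approx_harmonic [Infinite G] {d : ℕ} (hG : HasPolynomialGrowth G d) {ε : ℝ}
    (hε : 0 < ε) (hε1 : ε < 1) :
    ∃ f : G → ℝ, (∀ g, |∑ p, (f (g * pairMul S p) - f g)| ≤ 2 * (S.card : ℝ) ^ 3 * ε) ∧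
      (∀ g p, |f (g * pairMul S p) - f g| ≤ 4 * (S.card : ℝ) ^ 2) ∧
      (∀ l : ℕ, ∀ g ∈ (S : Set G) ^ l, |f g| ≤ 4 * (S.card : ℝ) ^ 2 * l) ∧
      f 1 = 0 ∧ ∃ p, 2 ≤ f (pairMul S p) := by
  obtain ⟨w, hw, hfix⟩ := hS.exists_energy_eq_one_norm_averaging_averaging_sub_sq_le hδ hG
    (pow_pos hε 2) (pow_lt_one₀ hε.le hε1 two_ne_zero)
  have hfix : ‖averaging ρ S (averaging ρ S w) - w‖ ≤ ε := le_of_sq_le_sq hfix hε.le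
  have hcard := hS.card_pos
  let b (g : G) : H := ρ g w - w
  have hb (p : S × S) : ‖b (pairMul S p)‖ ≤ 2 * S.card := by
    simpa [hw] using hS.norm_map_pairMul_sub_le (ρ := ρ) w p
  have hcocycle (g x : G) : b (g * x) - b g = ρ g (b x) := by
    simp only [b, map_mul_apply, map_sub]; abel
  have hsum : ∑ p, b (pairMul S p) =
      (S.card : ℝ) ^ 2 • (averaging ρ S (averaging ρ S w) - w) := by
    rw [Finset.sum_sub_distrib, hS.sum_map_pairMul, smul_sub, Finset.sum_const, Finset.card_univ,
      Fintype.card_prod, Fintype.card_coe, ← Nat.cast_smul_eq_nsmul ℝ, Nat.cast_mul, ← sq]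
  obtain ⟨q, hq⟩ := hS.exists_two_le_norm_map_pairMul_sub_sq hw
  refine ⟨fun g ↦ ⟪b g, b (pairMul S q)⟫, fun g ↦ ?_, fun g p ↦ ?_, fun l g hg ↦ ?_, by simp [b], q,
    by simpa only [real_inner_self_eq_norm_sq] using hq⟩
  · simp_rw [← inner_sub_left, hcocycle, ← sum_inner, ← map_sum, hsum]
    calc _ ≤ ‖ρ g ((S.card : ℝ) ^ 2 • (averaging ρ S (averaging ρ S w) - w))‖ *
            ‖b (pairMul S q)‖ := abs_real_inner_le_norm _ _
      _ = (S.card : ℝ) ^ 2 * ‖averaging ρ S (averaging ρ S w) - w‖ * ‖b (pairMul S q)‖ := by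
          rw [LinearIsometryEquiv.norm_map, norm_smul, Real.norm_of_nonneg (by positivity)]
      _ ≤ (S.card : ℝ) ^ 2 * ε * (2 * S.card) := by gcongr; exact hb q
      _ = 2 * (S.card : ℝ) ^ 3 * ε := by ring
  · rw [← inner_sub_left, hcocycle]
    calc _ ≤ ‖ρ g (b (pairMul S p))‖ * ‖b (pairMul S q)‖ := abs_real_inner_le_norm _ _
      _ ≤ 2 * S.card * (2 * S.card) := by
          rw [LinearIsometryEquiv.norm_map]; gcongr <;> exact hb _
      _ = 4 * (S.card : ℝ) ^ 2 := by ring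
  · calc _ ≤ ‖b g‖ * ‖b (pairMul S q)‖ := abs_real_inner_le_norm _ _
      _ ≤ l * (2 * S.card) * (2 * S.card) := by
          gcongr
          · simpa [hw] using hS.norm_map_sub_le (ρ := ρ) w hg
          · exact hb q
      _ = 4 * (S.card : ℝ) ^ 2 * l := by ring

theorem exists_nonconstant_lipschitzHarmonic_of_orthonormal [Infinite G] {d : ℕ}
    (hG : HasPolynomialGrowth G d) :
    ∃ f ∈ lipschitzHarmonic (pairMul S), ∃ g, f g ≠ f 1 := by
  open Filter Topology in
  have happrox (k : ℕ) := hS.exists_approx_harmonic hδ hG (ε := 1 / ((k : ℝ) + 2)) (by positivity)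
    ((div_lt_one (by positivity)).2 (by linarith [(k.cast_nonneg : (0 : ℝ) ≤ k)]))
  choose F hharm hlip hbound hone p hp using happrox
  choose l hl using hS.exists_mem_pow
  let B (g : G) : ℝ := 4 * (S.card : ℝ) ^ 2 * l g
  obtain ⟨f, -, hf⟩ := (isCompact_univ_pi fun g ↦ isCompact_Icc (a := -B g) (b := B g)
    ).ultrafilter_le_nhds ((hyperfilter ℕ).map F) (le_principal_iff.2 <| Eventually.of_forall
      (f := (hyperfilter ℕ : Filter ℕ)) fun k g _ ↦ abs_le.1 (hbound k _ g (hl g)))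
  have hlim (g : G) : Tendsto (F · g) (hyperfilter ℕ) (𝓝 (f g)) := tendsto_pi_nhds.1 hf g
  have hf1 : f 1 = 0 := tendsto_nhds_unique (hlim 1) (by simp [hone])
  refine ⟨f, ⟨fun g ↦ ?_, _, fun g p ↦ le_of_tendsto ((hlim _).sub (hlim g)).abs
    (.of_forall fun k ↦ hlip k g p)⟩, ?_⟩
  · refine tendsto_nhds_unique (tendsto_finsetSum _ fun p _ ↦ (hlim _).sub (hlim g))
      (squeeze_zero_norm (hharm · g) ?_)
    have hzero : Tendsto (fun k : ℕ ↦ 1 / ((k : ℝ) + 2)) atTop (𝓝 0) :=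
      (tendsto_const_nhds.div_atTop (tendsto_atTop_add_const_right _ _ tendsto_natCast_atTop_atTop))
    simpa using (hzero.mono_left Nat.hyperfilter_le_atTop).const_mul (2 * (S.card : ℝ) ^ 3)
  · by_contra! hconst
    have hlt : ∀ᶠ k in (hyperfilter ℕ : Filter ℕ), ∀ p, F k (pairMul S p) < 2 :=
      eventually_all.2 fun p ↦ (hlim (pairMul S p)).eventually_lt_const (by simp [hconst, hf1])
    obtain ⟨k, hk⟩ := hlt.exists
    exact (hp k).not_gt (hk (p k))

end IsSymmGenerating

end Averaging

section RegularRepresentation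

open scoped RealInnerProductSpace lp

variable {G : Type u} [Group G]

theorem memℓp_comp_equiv {α : Type*} (e : α ≃ α) {f : α → ℝ} (hf : Memℓp f 2) :
    Memℓp (f ∘ e) 2 := by
  rw [memℓp_gen_iff (by norm_num)] at hf ⊢
  exact (Equiv.summable_iff e).2 hf

/-- The left regular representation of `G` on `ℓ²(G)`. -/
noncomputable def regularRepresentation : G →* (ℓ²(G, ℝ) ≃ₗᵢ[ℝ] ℓ²(G, ℝ)) where
  toFun g :=
    { toFun f := ⟨f ∘ Equiv.mulLeft g⁻¹, memℓp_comp_equiv _ (lp.memℓp f)⟩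
      invFun f := ⟨f ∘ Equiv.mulLeft g, memℓp_comp_equiv _ (lp.memℓp f)⟩
      map_add' f f' := rfl
      map_smul' c f := rfl
      left_inv f := by ext x; simp
      right_inv f := by ext x; simp
      norm_map' f := by
        rw [← sq_eq_sq₀ (norm_nonneg _) (norm_nonneg _), ← real_inner_self_eq_norm_sq,
          ← real_inner_self_eq_norm_sq, lp.inner_eq_tsum, lp.inner_eq_tsum]
        exact (Equiv.mulLeft g⁻¹).tsum_eq fun x ↦ ⟪f x, f x⟫ }
  map_one' := by ext f x; simp
  map_mul' g h := by ext f x; simp [mul_assoc]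

theorem regularRepresentation_apply (g : G) (f : ℓ²(G, ℝ)) (x : G) :
    regularRepresentation g f x = f (g⁻¹ * x) := rfl

theorem regularRepresentation_single [DecidableEq G] (g : G) :
    regularRepresentation g (lp.single 2 1 (1 : ℝ)) = lp.single 2 g (1 : ℝ) := by
  ext x
  rw [regularRepresentation_apply, lp.single_apply, lp.single_apply, Pi.single_apply,
    Pi.single_apply]
  simp only [inv_mul_eq_one, eq_comm]

theorem IsSymmGenerating.exists_nonconstant_lipschitzHarmonic [Infinite G] {S : Finset G}
    (hS : IsSymmGenerating (S : Set G)) {d : ℕ} (hG : HasPolynomialGrowth G d) :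
    ∃ f ∈ lipschitzHarmonic (pairMul S), ∃ g, f g ≠ f 1 := by
  classical
  refine hS.exists_nonconstant_lipschitzHarmonic_of_orthonormal
    (ρ := regularRepresentation) (δ := lp.single 2 1 1) ?_ hG
  simp_rw [regularRepresentation_single, orthonormal_iff_ite, lp.inner_single_left,
    lp.single_apply, Pi.single_apply]
  simp

end RegularRepresentation

/-! ### Finite dimension of the space of Lipschitz harmonic functions -/

section Determinant

open Matrix
open scoped Finset

variable {n : Type*} [Fintype n]

theorem dotProduct_transpose_mul_mul_mulVec (B M : Matrix n n ℝ) (x : n → ℝ) :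
    x ⬝ᵥ (Bᵀ * M * B) *ᵥ x = (B *ᵥ x) ⬝ᵥ M *ᵥ (B *ᵥ x) := by
  rw [← mulVec_mulVec, ← mulVec_mulVec, dotProduct_mulVec, vecMul_transpose]

theorem card_lt_le_of_forall_mem_ker {X : Type*} [Fintype X] (T : (n → ℝ) →ₗ[ℝ] (X → ℝ))
    {μ : n → ℝ} {η : ℝ} (hT : ∀ x, T x = 0 → ∑ i, μ i * x i ^ 2 ≤ η * ∑ i, x i ^ 2) :
    #{i | η < μ i} ≤ Fintype.card X := by
  classical
  by_contra! hlt
  let I : Finset n := {i | η < μ i}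
  obtain ⟨x, hx, hx0⟩ := Submodule.exists_mem_ne_zero_of_ne_bot <|
    LinearMap.ker_ne_bot_of_finrank_lt
      (f := T.prod (LinearMap.funLeft ℝ ℝ (Subtype.val : (Iᶜ : Finset n) → n))) <| by
    rw [Module.finrank_prod, Module.finrank_fintype_fun_eq_card,
      Module.finrank_fintype_fun_eq_card, Module.finrank_fintype_fun_eq_card, Fintype.card_coe]
    have := I.card_add_card_compl
    lia
  replace hx := Prod.mk_eq_zero.1 (LinearMap.mem_ker.1 hx)
  have hx_compl (i : n) (hi : i ∉ I) : x i = 0 := congrFun hx.2 ⟨i, Finset.mem_compl.2 hi⟩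
  obtain ⟨i, hi⟩ := Function.ne_iff.1 hx0
  have hiI : i ∈ I := by_contra fun h ↦ hi (hx_compl i h)
  refine (hT x hx.1).not_gt ?_
  rw [Finset.mul_sum]
  refine Finset.sum_lt_sum (fun j _ ↦ ?_) ⟨i, Finset.mem_univ i, ?_⟩
  · by_cases hj : j ∈ I
    · gcongr
      exact (Finset.mem_filter.1 hj).2.le
    · simp [hx_compl j hj]
  · exact mul_lt_mul_of_pos_right (Finset.mem_filter.1 hiI).2 (sq_pos_of_ne_zero hi)

theorem prod_le_pow_card_sub {μ : n → ℝ} (h0 : ∀ i, 0 ≤ μ i) (h1 : ∀ i, μ i ≤ 1) {η : ℝ}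
    (hη : 0 ≤ η) (hη1 : η ≤ 1) {k : ℕ} (hk : #{i | η < μ i} ≤ k) :
    ∏ i, μ i ≤ η ^ (Fintype.card n - k) := by
  classical
  let I : Finset n := {i | η < μ i}
  calc ∏ i, μ i = (∏ i ∈ I, μ i) * ∏ i ∈ Iᶜ, μ i := (Finset.prod_mul_prod_compl I μ).symm
    _ ≤ 1 * ∏ _i ∈ Iᶜ, η := by
        gcongr with i hi
        · exact Finset.prod_nonneg fun i _ ↦ h0 i
        · exact Finset.prod_le_one (fun i _ ↦ h0 i) fun i _ ↦ h1 i
        · exact fun i _ ↦ h0 i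
        · exact not_lt.1 fun h ↦ Finset.mem_compl.1 hi (by simpa [I] using h)
    _ = η ^ #Iᶜ := by rw [one_mul, Finset.prod_const]
    _ ≤ η ^ (Fintype.card n - k) := by
        apply pow_le_pow_of_le_one hη hη1
        rw [Finset.card_compl]
        exact Nat.sub_le_sub_left hk _

variable [DecidableEq n] {P Q : Matrix n n ℝ}

open scoped MatrixOrder in
theorem exists_transpose_mul_mul_eq_one (hQ : Q.PosDef) : ∃ B : Matrix n n ℝ, Bᵀ * Q * B = 1 := by
  have hsq : CFC.sqrt Q * CFC.sqrt Q = Q :=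
    CFC.sqrt_mul_sqrt_self Q (nonneg_iff_posSemidef.2 hQ.posSemidef)
  have hsymm : (CFC.sqrt Q)ᵀ = CFC.sqrt Q := by
    simpa using (nonneg_iff_posSemidef.1 (CFC.sqrt_nonneg Q)).1.eq
  have hdet : IsUnit (CFC.sqrt Q).det :=
    isUnit_of_mul_isUnit_left (by rw [← det_mul, hsq]; exact hQ.det_pos.ne'.isUnit)
  refine ⟨(CFC.sqrt Q)⁻¹, ?_⟩
  rw [transpose_nonsing_inv, hsymm, ← congrArg (_ * · * _) hsq, ← mul_assoc, nonsing_inv_mul _ hdet,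
    one_mul, mul_nonsing_inv _ hdet]

theorem exists_transpose_mul_mul_eq_diagonal (hP : P.IsHermitian) (hQ : Q.PosDef) :
    ∃ (B : Matrix n n ℝ) (μ : n → ℝ), Bᵀ * P * B = diagonal μ ∧ Bᵀ * Q * B = 1 := by
  obtain ⟨B, hB⟩ := exists_transpose_mul_mul_eq_one hQ
  have hH : (Bᵀ * P * B).IsHermitian := by simpa using isHermitian_conjTranspose_mul_mul B hP
  let U : Matrix n n ℝ := hH.eigenvectorUnitary
  refine ⟨B * U, hH.eigenvalues, ?_, ?_⟩
  · have := hH.conjStarAlgAut_star_eigenvectorUnitary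
    rw [Unitary.conjStarAlgAut_star_apply, star_eq_conjTranspose] at this
    simpa [U, mul_assoc] using this
  · have := Unitary.coe_star_mul_self hH.eigenvectorUnitary
    rw [star_eq_conjTranspose, conjTranspose_eq_transpose_of_trivial] at this
    rw [transpose_mul, ← mul_assoc, mul_assoc _ _ Q, mul_assoc _ _ B, hB, mul_one, this]

theorem dotProduct_diagonal_mulVec (μ x : n → ℝ) :
    x ⬝ᵥ diagonal μ *ᵥ x = ∑ i, μ i * x i ^ 2 := by
  simp only [dotProduct, mulVec_diagonal]
  exact Finset.sum_congr rfl fun i _ ↦ by ring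

theorem det_le_pow_mul_det (hP : P.PosSemidef) (hQ : Q.PosDef)
    (hPQ : ∀ x : n → ℝ, x ⬝ᵥ P *ᵥ x ≤ x ⬝ᵥ Q *ᵥ x) {X : Type*} [Fintype X]
    (T : (n → ℝ) →ₗ[ℝ] (X → ℝ)) {η : ℝ} (hη : 0 ≤ η) (hη1 : η ≤ 1)
    (hT : ∀ x, T x = 0 → x ⬝ᵥ P *ᵥ x ≤ η * (x ⬝ᵥ Q *ᵥ x)) {k : ℕ} (hk : Fintype.card X ≤ k) :
    P.det ≤ η ^ (Fintype.card n - k) * Q.det := by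
  obtain ⟨B, μ, hBP, hBQ⟩ := exists_transpose_mul_mul_eq_diagonal hP.1 hQ
  have hformP (x : n → ℝ) : (B *ᵥ x) ⬝ᵥ P *ᵥ (B *ᵥ x) = ∑ i, μ i * x i ^ 2 := by
    rw [← dotProduct_transpose_mul_mul_mulVec, hBP, dotProduct_diagonal_mulVec]
  have hformQ (x : n → ℝ) : (B *ᵥ x) ⬝ᵥ Q *ᵥ (B *ᵥ x) = ∑ i, x i ^ 2 := by
    rw [← dotProduct_transpose_mul_mul_mulVec, hBQ, ← diagonal_one, dotProduct_diagonal_mulVec]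
    simp
  have hμ0 (i : n) : 0 ≤ μ i := by
    have := hP.dotProduct_mulVec_nonneg (B *ᵥ Pi.single i 1)
    rw [star_trivial, hformP] at this
    simpa [Pi.single_apply] using this
  have hμ1 (i : n) : μ i ≤ 1 := by
    have := hPQ (B *ᵥ Pi.single i 1)
    rw [hformP, hformQ] at this
    simpa [Pi.single_apply] using this
  have hcard : #{i | η < μ i} ≤ k :=
    (card_lt_le_of_forall_mem_ker (T ∘ₗ B.mulVecLin) fun x hx ↦ by
      simpa only [hformP, hformQ] using hT (B *ᵥ x) hx).trans hk
  have hdetP : B.det ^ 2 * P.det = ∏ i, μ i := by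
    rw [← det_diagonal, ← hBP, det_mul, det_mul, det_transpose]; ring
  have hdetQ : B.det ^ 2 * Q.det = 1 := by
    rw [← det_one (n := n), ← hBQ, det_mul, det_mul, det_transpose]; ring
  calc P.det = (B.det ^ 2 * P.det) * Q.det := by linear_combination -P.det * hdetQ
    _ ≤ η ^ (Fintype.card n - k) * Q.det := by
        rw [hdetP]
        gcongr
        · exact hQ.det_pos.le
        · exact prod_le_pow_card_sub hμ0 hμ1 hη hη1 hcard

end Determinant

section Walk

variable {G : Type u} [Group G] [DecidableEq G] {ι : Type v} [Fintype ι]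

/-- A symmetric random walk on `G`, which can stay in place and can reach every element. -/
structure IsSymmWalk {G : Type u} [Group G] {ι : Type v} (σ : ι → G) : Prop where
  exists_eq_one : ∃ i, σ i = 1
  exists_equiv : ∃ τ : ι ≃ ι, ∀ i, σ (τ i) = (σ i)⁻¹
  closure_range_eq_top : Subgroup.closure (Set.range σ) = ⊤

/-- The elements which the walk with steps `σ i` started at `1` can reach in exactly `r` steps;
for an `IsSymmWalk` this is the ball of radius `r`. -/
def stepBall (σ : ι → G) (r : ℕ) : Finset G := Finset.univ.image σ ^ r

/-- The Dirichlet energy of `f` on the ball of radius `r`. -/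
def dirichletEnergy (σ : ι → G) (f : G → ℝ) (r : ℕ) : ℝ :=
  ∑ b ∈ stepBall σ r, ∑ i, (f (b * σ i) - f b) ^ 2

/-- The squared `ℓ²` norm of `f` on the ball of radius `r`. -/
def sumSq (σ : ι → G) (f : G → ℝ) (r : ℕ) : ℝ := ∑ b ∈ stepBall σ r, f b ^ 2

variable {σ : ι → G} {f : G → ℝ} {r s t : ℕ} {a b : G}

theorem mul_mem_stepBall_add (ha : a ∈ stepBall σ r) (hb : b ∈ stepBall σ s) :
    a * b ∈ stepBall σ (r + s) := by
  rw [stepBall, pow_add]; exact Finset.mul_mem_mul ha hb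

theorem apply_mem_stepBall_one (i : ι) : σ i ∈ stepBall σ 1 := by
  rw [stepBall, pow_one]; exact Finset.mem_image_of_mem _ (Finset.mem_univ _)

theorem mul_apply_mem_stepBall (ha : a ∈ stepBall σ r) (i : ι) : a * σ i ∈ stepBall σ (r + 1) :=
  mul_mem_stepBall_add ha (apply_mem_stepBall_one i)

theorem mem_stepBall_zero : a ∈ stepBall σ 0 ↔ a = 1 := by
  rw [stepBall, pow_zero, Finset.mem_one]

theorem mem_stepBall_succ : a ∈ stepBall σ (r + 1) ↔ ∃ z ∈ stepBall σ r, ∃ i, z * σ i = a := by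
  simp [stepBall, pow_succ, Finset.mem_mul]

theorem coe_stepBall (r : ℕ) : (stepBall σ r : Set G) = Set.range σ ^ r := by
  simp [stepBall]

theorem sumSq_nonneg : 0 ≤ sumSq σ f r := Finset.sum_nonneg fun _ _ ↦ sq_nonneg _

theorem dirichletEnergy_nonneg : 0 ≤ dirichletEnergy σ f r :=
  Finset.sum_nonneg fun _ _ ↦ Finset.sum_nonneg fun _ _ ↦ sq_nonneg _

namespace IsSymmWalk

theorem isSymmGenerating {G : Type u} [Group G] {ι : Type v} {σ : ι → G} (hσ : IsSymmWalk σ) :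
    IsSymmGenerating (Set.range σ) where
  one_mem := hσ.exists_eq_one
  inv_eq := by
    obtain ⟨τ, hτ⟩ := hσ.exists_equiv
    rw [← Set.image_inv_eq_inv, ← Set.range_comp, ← τ.surjective.range_comp σ]
    exact congrArg Set.range (funext fun i ↦ (hτ i).symm)
  closure_eq_top := hσ.closure_range_eq_top

theorem induction_on {G : Type u} [Group G] {ι : Type v} {σ : ι → G} (hσ : IsSymmWalk σ)
    {P : G → Prop} (g : G) (one : P 1) (mul : ∀ g i, P g → P (g * σ i)) : P g := by
  obtain ⟨τ, hτ⟩ := hσ.exists_equiv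
  have hg : g ∈ Subgroup.closure (Set.range σ) := hσ.closure_range_eq_top ▸ Subgroup.mem_top g
  induction hg using Subgroup.closure_induction_right with
  | one => exact one
  | mul_right x _ y hy hx => obtain ⟨i, rfl⟩ := hy; exact mul x i hx
  | mul_inv_cancel x _ y hy hx => obtain ⟨i, rfl⟩ := hy; exact hτ i ▸ mul x (τ i) hx

variable (hσ : IsSymmWalk σ)
include hσ

theorem stepBall_mono (hrs : r ≤ s) : stepBall σ r ⊆ stepBall σ s :=
  Finset.pow_subset_pow_right (by simpa using hσ.exists_eq_one) hrs

theorem mul_mem_stepBall (ha : a ∈ stepBall σ r) (hb : b ∈ stepBall σ s) (hrs : r + s ≤ t) :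
    a * b ∈ stepBall σ t := hσ.stepBall_mono hrs (mul_mem_stepBall_add ha hb)

theorem one_mem_stepBall : 1 ∈ stepBall σ r :=
  hσ.stepBall_mono r.zero_le (mem_stepBall_zero.2 rfl)

theorem inv_mem_stepBall (ha : a ∈ stepBall σ r) : a⁻¹ ∈ stepBall σ r := by
  rw [← Finset.mem_coe, coe_stepBall] at ha ⊢
  exact hσ.isSymmGenerating.inv_mem_pow ha

theorem card_stepBall_pos : 0 < (stepBall σ r).card := Finset.card_pos.2 ⟨1, hσ.one_mem_stepBall⟩

theorem exists_mem_stepBall (g : G) : ∃ r, g ∈ stepBall σ r := by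
  simp_rw [← Finset.mem_coe, coe_stepBall]
  exact hσ.isSymmGenerating.exists_mem_pow g

theorem sumSq_mono (hrs : r ≤ s) : sumSq σ f r ≤ sumSq σ f s :=
  Finset.sum_le_sum_of_subset_of_nonneg (hσ.stepBall_mono hrs) fun _ _ _ ↦ sq_nonneg _

theorem sum_mul_right_le {F : G → ℝ} (hF : ∀ g, 0 ≤ F g) (ha : a ∈ stepBall σ s)
    (hrs : r + s ≤ t) : ∑ b ∈ stepBall σ r, F (b * a) ≤ ∑ b ∈ stepBall σ t, F b := by
  calc ∑ b ∈ stepBall σ r, F (b * a)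
      = ∑ g ∈ (stepBall σ r).map (mulRightEmbedding a), F g := by simp
    _ ≤ _ := by
      refine Finset.sum_le_sum_of_subset_of_nonneg (fun g hg ↦ ?_) fun _ _ _ ↦ hF _
      obtain ⟨b, hb, rfl⟩ := Finset.mem_map.1 hg
      exact hσ.mul_mem_stepBall hb ha hrs

theorem sum_sq_mul_right_sub_le (ha : a ∈ stepBall σ s) (hrs : r + s ≤ t) :
    ∑ b ∈ stepBall σ r, (f (b * a) - f b) ^ 2 ≤ (s : ℝ) ^ 2 * dirichletEnergy σ f t := by
  induction s generalizing a with
  | zero => simp [mem_stepBall_zero.1 ha]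
  | succ s ih =>
    obtain ⟨z, hz, i, rfl⟩ := mem_stepBall_succ.1 ha
    have hstep : ∑ b ∈ stepBall σ r, (f (b * z * σ i) - f (b * z)) ^ 2 ≤ dirichletEnergy σ f t :=
      (hσ.sum_mul_right_le (F := fun g ↦ (f (g * σ i) - f g) ^ 2) (fun _ ↦ sq_nonneg _) hz
        (by lia)).trans <| Finset.sum_le_sum fun b _ ↦ Finset.single_le_sum
          (f := fun i ↦ (f (b * σ i) - f b) ^ 2) (fun _ _ ↦ sq_nonneg _) (Finset.mem_univ i)
    rcases s.eq_zero_or_pos with rfl | hs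
    · simpa [mem_stepBall_zero.1 hz] using hstep
    have : (0 : ℝ) < s := Nat.cast_pos.2 hs
    have hsq (x y : ℝ) : (y + x) ^ 2 ≤ (1 + 1 / (s : ℝ)) * x ^ 2 + (1 + s) * y ^ 2 := by
      rw [← sub_nonneg]
      calc 0 ≤ (x - s * y) ^ 2 / s := by positivity
        _ = _ := by field_simp; ring
    calc ∑ b ∈ stepBall σ r, (f (b * (z * σ i)) - f b) ^ 2
        ≤ ∑ b ∈ stepBall σ r, ((1 + 1 / (s : ℝ)) * (f (b * z) - f b) ^ 2
            + (1 + s) * (f (b * z * σ i) - f (b * z)) ^ 2) := by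
          gcongr with b
          simpa [mul_assoc] using hsq (f (b * z) - f b) (f (b * z * σ i) - f (b * z))
      _ = (1 + 1 / (s : ℝ)) * ∑ b ∈ stepBall σ r, (f (b * z) - f b) ^ 2
            + (1 + s) * ∑ b ∈ stepBall σ r, (f (b * z * σ i) - f (b * z)) ^ 2 := by
          rw [Finset.sum_add_distrib, Finset.mul_sum, Finset.mul_sum]
      _ ≤ (1 + 1 / (s : ℝ)) * ((s : ℝ) ^ 2 * dirichletEnergy σ f t)
            + (1 + s) * dirichletEnergy σ f t := by
          gcongr
          exact ih hz (by lia)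
      _ = ((s + 1 : ℕ) : ℝ) ^ 2 * dirichletEnergy σ f t := by push_cast; field_simp; ring

/-- The Poincaré inequality. -/
theorem card_mul_sumSq_le (hf : ∑ b ∈ stepBall σ r, f b = 0) :
    ((stepBall σ r).card : ℝ) * sumSq σ f r ≤
      (stepBall σ (2 * r)).card * (2 * (r : ℝ) ^ 2 * dirichletEnergy σ f (3 * r)) := by
  have hpairs : ∑ b ∈ stepBall σ r, ∑ c ∈ stepBall σ r, (f c - f b) ^ 2 =
      2 * ((stepBall σ r).card * sumSq σ f r) := by
    simp_rw [sub_sq, Finset.sum_add_distrib, Finset.sum_sub_distrib, mul_assoc, ← Finset.mul_sum,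
      ← Finset.sum_mul, hf]
    simp [sumSq, ← Finset.mul_sum]
    ring
  have hle (b : G) (hb : b ∈ stepBall σ r) : ∑ c ∈ stepBall σ r, (f c - f b) ^ 2 ≤
      ∑ y ∈ stepBall σ (2 * r), (f (b * y) - f b) ^ 2 := by
    calc ∑ c ∈ stepBall σ r, (f c - f b) ^ 2
        = ∑ y ∈ (stepBall σ r).map (mulLeftEmbedding b⁻¹), (f (b * y) - f b) ^ 2 := by simp
      _ ≤ _ := by
        refine Finset.sum_le_sum_of_subset_of_nonneg (fun y hy ↦ ?_) fun _ _ _ ↦ sq_nonneg _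
        obtain ⟨c, hc, rfl⟩ := Finset.mem_map.1 hy
        exact hσ.mul_mem_stepBall (hσ.inv_mem_stepBall hb) hc (by lia)
  have hdispl : ∑ b ∈ stepBall σ r, ∑ c ∈ stepBall σ r, (f c - f b) ^ 2 ≤
      (stepBall σ (2 * r)).card * (((2 * r : ℕ) : ℝ) ^ 2 * dirichletEnergy σ f (3 * r)) := by
    calc _ ≤ ∑ b ∈ stepBall σ r, ∑ y ∈ stepBall σ (2 * r), (f (b * y) - f b) ^ 2 :=
          Finset.sum_le_sum hle
      _ = ∑ y ∈ stepBall σ (2 * r), ∑ b ∈ stepBall σ r, (f (b * y) - f b) ^ 2 := Finset.sum_comm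
      _ ≤ ∑ _y ∈ stepBall σ (2 * r), ((2 * r : ℕ) : ℝ) ^ 2 * dirichletEnergy σ f (3 * r) :=
          Finset.sum_le_sum fun y hy ↦ hσ.sum_sq_mul_right_sub_le hy (by lia)
      _ = _ := by rw [Finset.sum_const, nsmul_eq_mul]
  rw [hpairs] at hdispl
  push_cast at hdispl
  linarith

theorem sum_mul_right_eq {F : G → ℝ} (hF : ∀ g, F g ≠ 0 → g ∈ stepBall σ r) (i : ι) :
    ∑ g ∈ stepBall σ (r + 1), F (g * σ i) = ∑ g ∈ stepBall σ (r + 1), F g := by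
  rw [← finsum_eq_sum_of_support_subset, ← finsum_eq_sum_of_support_subset]
  · exact finsum_comp_equiv (Equiv.mulRight (σ i)) (f := F)
  · exact fun g hg ↦ hσ.stepBall_mono r.le_succ (hF g hg)
  · intro g hg
    simpa using hσ.mul_mem_stepBall (hF _ hg)
      (hσ.inv_mem_stepBall (apply_mem_stepBall_one (σ := σ) i)) le_rfl

omit [DecidableEq G] in
theorem sum_sub_mul_inv_eq_zero (hf : IsHarmonic σ f) (g : G) :
    ∑ i, (f g - f (g * (σ i)⁻¹)) = 0 := by
  obtain ⟨τ, hτ⟩ := hσ.exists_equiv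
  rw [← neg_eq_zero, ← Finset.sum_neg_distrib, ← hf g, ← Equiv.sum_comp τ]
  simp [hτ]

/-- Summation by parts. -/
theorem sum_sub_mul_sub_eq_zero (hf : IsHarmonic σ f) {w : G → ℝ}
    (hw : ∀ g, w g ≠ 0 → g ∈ stepBall σ r) :
    ∑ g ∈ stepBall σ (r + 1), ∑ i, (f (g * σ i) - f g) * (w (g * σ i) - w g) = 0 := by
  have hfst : ∑ g ∈ stepBall σ (r + 1), ∑ i, (f (g * σ i) - f g) * w g = 0 :=
    Finset.sum_eq_zero fun g _ ↦ by rw [← Finset.sum_mul, hf g, zero_mul]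
  have hsnd : ∑ g ∈ stepBall σ (r + 1), ∑ i, (f (g * σ i) - f g) * w (g * σ i) = 0 := by
    rw [Finset.sum_comm]
    calc _ = ∑ i, ∑ g ∈ stepBall σ (r + 1), (f g - f (g * (σ i)⁻¹)) * w g := by
          refine Finset.sum_congr rfl fun i _ ↦ ?_
          rw [← hσ.sum_mul_right_eq (fun g hg ↦ hw g (right_ne_zero_of_mul hg)) i]
          simp
      _ = 0 := by
          rw [Finset.sum_comm]
          exact Finset.sum_eq_zero fun g _ ↦ by
            rw [← Finset.sum_mul, hσ.sum_sub_mul_inv_eq_zero hf, zero_mul]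
  simp_rw [mul_sub, Finset.sum_sub_distrib, hfst, hsnd, sub_zero]

end IsSymmWalk

/-- A Lipschitz cutoff function: equal to `1` on the ball of radius `R + 1` and supported in the
ball of radius `2 * R`. -/
noncomputable def cutoff (σ : ι → G) (R : ℕ) (g : G) : ℝ :=
  ((Finset.range R).filter fun j ↦ g ∈ stepBall σ (R + j + 1)).card / R

theorem cutoff_le_add (hab : ∀ j, a ∈ stepBall σ j → b ∈ stepBall σ (j + 1)) (R : ℕ) :
    cutoff σ R a ≤ cutoff σ R b + 1 / R := by
  rw [cutoff, cutoff, ← add_div]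
  gcongr
  norm_cast
  refine le_trans ?_ (Finset.card_insert_le R _)
  rw [← Finset.card_map (addRightEmbedding 1)]
  refine Finset.card_le_card fun j hj ↦ ?_
  obtain ⟨i, hi, rfl⟩ := Finset.mem_map.1 hj
  rw [Finset.mem_filter, Finset.mem_range] at hi
  rw [Finset.mem_insert, Finset.mem_filter, Finset.mem_range, addRightEmbedding_apply]
  exact (Nat.eq_or_lt_of_le hi.1).imp_right fun h ↦ ⟨h, hab _ hi.2⟩

namespace IsSymmWalk

variable (hσ : IsSymmWalk σ)
include hσ

theorem mem_stepBall_of_cutoff_ne_zero (ha : cutoff σ t a ≠ 0) : a ∈ stepBall σ (2 * t) := by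
  contrapose! ha
  rw [cutoff, Finset.filter_false_of_mem, Finset.card_empty, Nat.cast_zero, zero_div]
  exact fun j hj hmem ↦ ha (hσ.stepBall_mono (by have := Finset.mem_range.1 hj; lia) hmem)

theorem cutoff_eq_one (ht : 0 < t) (ha : a ∈ stepBall σ (t + 1)) : cutoff σ t a = 1 := by
  rw [cutoff, Finset.filter_true_of_mem fun j _ ↦ hσ.stepBall_mono (by lia) ha, Finset.card_range,
    div_self (by positivity)]

theorem sq_cutoff_sub_le (R : ℕ) (g : G) (i : ι) :
    (cutoff σ R g - cutoff σ R (g * σ i)) ^ 2 ≤ (1 / (R : ℝ)) ^ 2 := by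
  have hle := cutoff_le_add (fun j (hj : g ∈ stepBall σ j) ↦ mul_apply_mem_stepBall hj i) R
  have hge := cutoff_le_add (a := g * σ i) (b := g) (fun j hj ↦ by
    simpa using hσ.mul_mem_stepBall hj (hσ.inv_mem_stepBall (apply_mem_stepBall_one i)) le_rfl) R
  exact sq_le_sq' (by linarith) (by linarith)

theorem sum_mul_sq_cutoff_sub_le (R : ℕ) (i : ι) :
    ∑ g ∈ stepBall σ (2 * R + 1), f g * f (g * σ i) * (cutoff σ R g - cutoff σ R (g * σ i)) ^ 2 ≤
      (1 / (R : ℝ)) ^ 2 * sumSq σ f (2 * R + 2) := by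
  have hamgm (x y : ℝ) : x * y ≤ (x ^ 2 + y ^ 2) / 2 := by linarith [two_mul_le_add_sq x y]
  have hshift : ∑ g ∈ stepBall σ (2 * R + 1), f (g * σ i) ^ 2 ≤ sumSq σ f (2 * R + 2) :=
    hσ.sum_mul_right_le (F := fun g ↦ f g ^ 2) (fun _ ↦ sq_nonneg _) (apply_mem_stepBall_one i)
      le_rfl
  calc _ ≤ ∑ g ∈ stepBall σ (2 * R + 1),
          (f g ^ 2 + f (g * σ i) ^ 2) / 2 * (1 / (R : ℝ)) ^ 2 := by
        refine Finset.sum_le_sum fun g _ ↦ ?_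
        exact mul_le_mul (hamgm _ _) (hσ.sq_cutoff_sub_le R g i) (sq_nonneg _) (by positivity)
    _ = (1 / (R : ℝ)) ^ 2 * ((sumSq σ f (2 * R + 1) +
          ∑ g ∈ stepBall σ (2 * R + 1), f (g * σ i) ^ 2) / 2) := by
        rw [← Finset.sum_mul, ← Finset.sum_div, Finset.sum_add_distrib, sumSq, mul_comm]
    _ ≤ (1 / (R : ℝ)) ^ 2 * ((sumSq σ f (2 * R + 2) + sumSq σ f (2 * R + 2)) / 2) := by
        gcongr
        exact hσ.sumSq_mono (by lia)
    _ = _ := by ring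

/-- The Caccioppoli inequality. -/
theorem sq_mul_dirichletEnergy_le (hf : IsHarmonic σ f) {R : ℕ} (hR : 0 < R) :
    (R : ℝ) ^ 2 * dirichletEnergy σ f R ≤ Fintype.card ι * sumSq σ f (4 * R) := by
  set φ := cutoff σ R with hφ
  have hgreen := hσ.sum_sub_mul_sub_eq_zero hf (w := fun g ↦ φ g ^ 2 * f g) (r := 2 * R)
    fun g hg ↦ hσ.mem_stepBall_of_cutoff_ne_zero (pow_ne_zero_iff two_ne_zero |>.1
      (left_ne_zero_of_mul hg))
  have hid (g : G) (i : ι) : (f (g * σ i) - f g) * (φ (g * σ i) ^ 2 * f (g * σ i) - φ g ^ 2 * f g) =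
      (φ (g * σ i) * f (g * σ i) - φ g * f g) ^ 2 -
        f g * f (g * σ i) * (φ g - φ (g * σ i)) ^ 2 := by ring
  simp_rw [hid, Finset.sum_sub_distrib, sub_eq_zero] at hgreen
  have hinner : dirichletEnergy σ f R ≤
      ∑ g ∈ stepBall σ (2 * R + 1), ∑ i, (φ (g * σ i) * f (g * σ i) - φ g * f g) ^ 2 := by
    calc dirichletEnergy σ f R
        = ∑ g ∈ stepBall σ R, ∑ i, (φ (g * σ i) * f (g * σ i) - φ g * f g) ^ 2 := by
          refine Finset.sum_congr rfl fun g hg ↦ Finset.sum_congr rfl fun i _ ↦ ?_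
          rw [hφ, hσ.cutoff_eq_one hR (hσ.stepBall_mono R.le_succ hg),
            hσ.cutoff_eq_one hR (mul_apply_mem_stepBall hg i), one_mul, one_mul]
      _ ≤ _ := Finset.sum_le_sum_of_subset_of_nonneg (hσ.stepBall_mono (by lia)) fun _ _ _ ↦
          Finset.sum_nonneg fun _ _ ↦ sq_nonneg _
  calc (R : ℝ) ^ 2 * dirichletEnergy σ f R
      ≤ (R : ℝ) ^ 2 * ∑ i, (1 / (R : ℝ)) ^ 2 * sumSq σ f (4 * R) := by
        gcongr
        refine (hinner.trans_eq hgreen).trans ?_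
        rw [Finset.sum_comm]
        gcongr with i
        refine (hσ.sum_mul_sq_cutoff_sub_le R i).trans ?_
        gcongr
        exact hσ.sumSq_mono (by lia)
    _ = Fintype.card ι * sumSq σ f (4 * R) := by
        rw [Finset.sum_const, Finset.card_univ, nsmul_eq_mul]
        field_simp

end IsSymmWalk

end Walk

section Net

variable {G : Type u} [Group G] [DecidableEq G]

theorem exists_pairwiseDisjoint_smul_subset_mul_div (A : Finset G) {B : Finset G}
    (hB : B.Nonempty) :
    ∃ F ⊆ A, (F : Set G).PairwiseDisjoint (· • B) ∧ A ⊆ F * (B / B) := by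
  classical
  obtain ⟨F, hF⟩ := (A.powerset.filter fun F : Finset G ↦
    (F : Set G).PairwiseDisjoint (· • B)).exists_maximal ⟨∅, by simp⟩
  rw [Maximal, Finset.mem_filter, Finset.mem_powerset] at hF
  obtain ⟨⟨hFA, hdisj⟩, hmax⟩ := hF
  refine ⟨F, hFA, hdisj, fun a ha ↦ ?_⟩
  by_cases haF : a ∈ F
  · exact Finset.subset_mul_left _ hB.one_mem_div haF
  obtain ⟨x, hx, hax⟩ : ∃ x ∈ F, ¬ Disjoint (a • B) (x • B) := by
    by_contra! H
    refine haF (hmax ?_ (Finset.subset_insert a F) (Finset.mem_insert_self a F))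
    rw [Finset.mem_filter, Finset.mem_powerset, Finset.insert_subset_iff, Finset.coe_insert]
    exact ⟨⟨ha, hFA⟩, hdisj.insert fun x hx _ ↦ H x hx⟩
  obtain ⟨c, hca, hcx⟩ := Finset.not_disjoint_iff.1 hax
  rw [← Finset.inv_smul_mem_iff] at hca hcx
  exact Finset.mem_mul.2 ⟨x, hx, x⁻¹ * a, Finset.mem_div.2 ⟨_, hcx, _, hca, by simp⟩, by simp⟩

theorem card_mul_card_le_of_pairwiseDisjoint_smul {F B C : Finset G}
    (hF : (F : Set G).PairwiseDisjoint (· • B)) (hC : F * B ⊆ C) : F.card * B.card ≤ C.card := by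
  rw [← Finset.card_mul_iff.2 (Finset.pairwiseDisjoint_smul_iff.1 hF)]
  exact Finset.card_le_card hC

end Net

section Walk

variable {G : Type u} [Group G] [DecidableEq G] {ι : Type v} [Fintype ι] {σ : ι → G} {f : G → ℝ}
  {X : Finset G} {r R K : ℕ}

theorem sumSq_le_sum_of_subset_mul (hX : stepBall σ R ⊆ X * stepBall σ r) :
    sumSq σ f R ≤ ∑ x ∈ X, sumSq σ (fun g ↦ f (x * g)) r := by
  calc sumSq σ f R ≤ ∑ g ∈ X * stepBall σ r, f g ^ 2 :=
        Finset.sum_le_sum_of_subset_of_nonneg hX fun _ _ _ ↦ sq_nonneg _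
    _ ≤ ∑ p ∈ X ×ˢ stepBall σ r, f (p.1 * p.2) ^ 2 :=
        Finset.sum_image_le_of_nonneg fun _ _ ↦ sq_nonneg _
    _ = _ := Finset.sum_product ..

namespace IsSymmWalk

variable (hσ : IsSymmWalk σ)
include hσ

theorem sumSq_le_of_card_le (hf : ∑ b ∈ stepBall σ r, f b = 0)
    (hK : (stepBall σ (2 * r)).card ≤ K * (stepBall σ r).card) :
    sumSq σ f r ≤ 2 * K * (r : ℝ) ^ 2 * dirichletEnergy σ f (3 * r) := by
  have hpos : (0 : ℝ) < (stepBall σ r).card := Nat.cast_pos.2 hσ.card_stepBall_pos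
  refine le_of_mul_le_mul_left ?_ hpos
  calc ((stepBall σ r).card : ℝ) * sumSq σ f r
      ≤ (stepBall σ (2 * r)).card * (2 * (r : ℝ) ^ 2 * dirichletEnergy σ f (3 * r)) :=
        hσ.card_mul_sumSq_le hf
    _ ≤ (K * (stepBall σ r).card : ℕ) * (2 * (r : ℝ) ^ 2 * dirichletEnergy σ f (3 * r)) := by
        have := dirichletEnergy_nonneg (σ := σ) (f := f) (r := 3 * r)
        gcongr
    _ = _ := by push_cast; ring

theorem card_filter_inv_mul_mem_le {s t : ℕ}
    (hX : (X : Set G).PairwiseDisjoint (· • stepBall σ r))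
    (hK : (stepBall σ t).card ≤ K * (stepBall σ r).card) (hrst : s + r ≤ t) (g : G) :
    (X.filter fun x ↦ x⁻¹ * g ∈ stepBall σ s).card ≤ K := by
  refine Nat.le_of_mul_le_mul_right (le_trans ?_ hK) hσ.card_stepBall_pos
  rw [← Finset.card_smul_finset g (stepBall σ t)]
  refine card_mul_card_le_of_pairwiseDisjoint_smul
    (hX.subset (Finset.coe_subset.2 (Finset.filter_subset _ _))) fun z hz ↦ ?_
  obtain ⟨x, hx, b, hb, rfl⟩ := Finset.mem_mul.1 hz
  have hmem := hσ.mul_mem_stepBall (hσ.inv_mem_stepBall (Finset.mem_filter.1 hx).2) hb hrst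
  exact Finset.mem_smul_finset.2 ⟨_, hmem, by simp [mul_assoc]⟩

theorem sum_dirichletEnergy_le {s t : ℕ} (hXR : X ⊆ stepBall σ R) (hRst : R + s ≤ t)
    (hX : ∀ g, (X.filter fun x ↦ x⁻¹ * g ∈ stepBall σ s).card ≤ K) :
    ∑ x ∈ X, dirichletEnergy σ (fun g ↦ f (x * g)) s ≤ K * dirichletEnergy σ f t := by
  set e : G → ℝ := fun g ↦ ∑ i, (f (g * σ i) - f g) ^ 2 with he
  have he_nonneg (g : G) : 0 ≤ e g := Finset.sum_nonneg fun _ _ ↦ sq_nonneg _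
  have henergy {x : G} (hx : x ∈ X) : dirichletEnergy σ (fun g ↦ f (x * g)) s =
      ∑ g ∈ stepBall σ t, if x⁻¹ * g ∈ stepBall σ s then e g else 0 := by
    calc _ = ∑ b ∈ stepBall σ s, e (x * b) := by simp [dirichletEnergy, he, mul_assoc]
      _ = ∑ g ∈ (stepBall σ s).map (mulLeftEmbedding x), e g := by simp
      _ = _ := by
        rw [← Finset.sum_filter]
        congr 1
        ext g
        rw [Finset.mem_filter, Finset.mem_map]
        constructor
        · rintro ⟨b, hb, rfl⟩
          exact ⟨hσ.mul_mem_stepBall (hXR hx) hb hRst, by simpa⟩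
        · exact fun hg ↦ ⟨_, hg.2, by simp⟩
  calc _ = ∑ x ∈ X, ∑ g ∈ stepBall σ t, if x⁻¹ * g ∈ stepBall σ s then e g else 0 :=
        Finset.sum_congr rfl fun _ ↦ henergy
    _ = ∑ g ∈ stepBall σ t, (X.filter fun x ↦ x⁻¹ * g ∈ stepBall σ s).card * e g := by
        rw [Finset.sum_comm]
        simp_rw [← Finset.sum_filter, Finset.sum_const, nsmul_eq_mul]
    _ ≤ ∑ g ∈ stepBall σ t, K * e g := by
        exact Finset.sum_le_sum fun g _ ↦
          mul_le_mul_of_nonneg_right (Nat.cast_le.2 (hX g)) (he_nonneg g)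
    _ = K * dirichletEnergy σ f t := by rw [← Finset.mul_sum, dirichletEnergy]

theorem exists_sumSq_le_mul_sumSq {k : ℕ} (hr : 0 < r) (hrR : 16 * r ≤ R)
    (hK : (stepBall σ (256 * r)).card ≤ K * (stepBall σ r).card)
    (hk : (stepBall σ (16 * R)).card ≤ k * (stepBall σ r).card) :
    ∃ X : Finset G, X.card ≤ k ∧ ∀ f : G → ℝ, IsHarmonic σ f →
      (∀ x ∈ X, ∑ b ∈ stepBall σ (16 * r), f (x * b) = 0) →
      sumSq σ f R ≤ 32 * K ^ 2 * Fintype.card ι * (r / R : ℝ) ^ 2 * sumSq σ f (16 * R) := by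
  obtain ⟨X, hXR, hdisj, hcov⟩ := exists_pairwiseDisjoint_smul_subset_mul_div (stepBall σ R)
    (Finset.card_pos.1 (hσ.card_stepBall_pos (r := r)))
  have hdiv : stepBall σ r / stepBall σ r ⊆ stepBall σ (16 * r) := fun g hg ↦ by
    obtain ⟨a, ha, b, hb, rfl⟩ := Finset.mem_div.1 hg
    rw [div_eq_mul_inv]
    exact hσ.mul_mem_stepBall ha (hσ.inv_mem_stepBall hb) (by lia)
  refine ⟨X, ?_, fun f hf hmean ↦ ?_⟩
  · refine Nat.le_of_mul_le_mul_right (le_trans ?_ hk) hσ.card_stepBall_pos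
    refine card_mul_card_le_of_pairwiseDisjoint_smul hdisj fun z hz ↦ ?_
    obtain ⟨x, hx, b, hb, rfl⟩ := Finset.mem_mul.1 hz
    exact hσ.mul_mem_stepBall (hXR hx) hb (by lia)
  have hdouble : (stepBall σ (2 * (16 * r))).card ≤ K * (stepBall σ (16 * r)).card :=
    (Finset.card_le_card (hσ.stepBall_mono (by lia))).trans
      (hK.trans (Nat.mul_le_mul_left K (Finset.card_le_card (hσ.stepBall_mono (by lia)))))
  have hR : (0 : ℝ) < R := Nat.cast_pos.2 (by lia)
  have henergy : dirichletEnergy σ f (4 * R) ≤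
      Fintype.card ι * sumSq σ f (16 * R) / (16 * (R : ℝ) ^ 2) := by
    rw [le_div_iff₀ (by positivity)]
    have := hσ.sq_mul_dirichletEnergy_le hf (R := 4 * R) (by lia)
    rw [← mul_assoc 4 4 R] at this
    push_cast at this
    linarith
  calc sumSq σ f R
      ≤ ∑ x ∈ X, sumSq σ (fun g ↦ f (x * g)) (16 * r) :=
        sumSq_le_sum_of_subset_mul (hcov.trans (Finset.mul_subset_mul_left hdiv))
    _ ≤ ∑ x ∈ X, 2 * K * ((16 * r : ℕ) : ℝ) ^ 2 *
          dirichletEnergy σ (fun g ↦ f (x * g)) (3 * (16 * r)) := by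
        gcongr with x hx
        exact hσ.sumSq_le_of_card_le (hmean x hx) hdouble
    _ ≤ 2 * K * ((16 * r : ℕ) : ℝ) ^ 2 *
          (K * (Fintype.card ι * sumSq σ f (16 * R) / (16 * (R : ℝ) ^ 2))) := by
        rw [← Finset.mul_sum]
        gcongr
        refine (hσ.sum_dirichletEnergy_le (t := 4 * R) hXR (by lia) fun g ↦
          hσ.card_filter_inv_mul_mem_le hdisj hK (by lia) g).trans ?_
        gcongr
    _ = _ := by push_cast; field_simp; ring

end IsSymmWalk

end Walk

section Scale

theorem exists_lt_add_one_of_le_linear {Ψ : ℕ → ℝ} {j₀ : ℕ} {a b : ℝ} (ha : a < 1)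
    (hΨ : ∀ q ≥ j₀, Ψ q ≤ a * q + b) : ∃ q ≥ j₀, Ψ (q + 1) < Ψ q + 1 := by
  by_contra! hstep
  have hlin (J : ℕ) : Ψ j₀ + J ≤ Ψ (j₀ + J) := by
    induction J with
    | zero => simp
    | succ J ih =>
      have := hstep (j₀ + J) (by lia)
      rw [← add_assoc]
      push_cast
      linarith
  obtain ⟨J, hJ⟩ := exists_nat_gt ((a * j₀ + b - Ψ j₀) / (1 - a))
  rw [div_lt_iff₀ (by linarith)] at hJ
  have hle := (hlin J).trans (hΨ (j₀ + J) (by lia))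
  push_cast at hle
  linarith

theorem sum_range_succ_add (h : ℕ → ℝ) (q m : ℕ) : ∑ s ∈ Finset.range m, h (q + 1 + s) =
    ∑ s ∈ Finset.range m, h (q + s) + (h (q + m) - h q) := by
  have hsucc := Finset.sum_range_succ (fun s ↦ h (q + s)) m
  rw [Finset.sum_range_succ', add_zero] at hsucc
  simp_rw [add_assoc q 1, add_comm 1]
  linarith

theorem sum_range_add_le {h : ℕ → ℝ} {A B : ℝ} (hmono : Monotone h)
    (hh : ∀ j : ℕ, h j ≤ A * j + B) (q m : ℕ) :
    ∑ s ∈ Finset.range m, h (q + s) ≤ m * (A * (q + m) + B) := by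
  calc ∑ s ∈ Finset.range m, h (q + s) ≤ ∑ _s ∈ Finset.range m, (A * (q + m) + B) := by
        gcongr with s hs
        exact (hmono (by have := Finset.mem_range.1 hs; lia)).trans
          ((hh (q + m)).trans_eq (by push_cast; rfl))
    _ = m * (A * (q + m) + B) := by rw [Finset.sum_const, Finset.card_range, nsmul_eq_mul]

/-- Both inequalities on `h` and the one on `Δ` fail at a fraction of scales which is too small to
exhaust them; this is detected by a single potential, whose increments add up the three defects. -/
theorem exists_good_scale {h Δ : ℕ → ℝ} {A B A' B' : ℝ} {j₀ m : ℕ} (p : ℕ) (hA : 0 < A)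
    (hA' : 0 < A') (hm : 0 < m) (hh_mono : Monotone h) (hΔ_mono : ∀ j ≥ j₀, Δ j ≤ Δ (j + 1))
    (hh : ∀ j : ℕ, h j ≤ A * j + B) (hΔ : ∀ j ≥ j₀, Δ j ≤ A' * j + B') :
    ∃ q ≥ j₀, h (q + 2) < h q + 8 * A ∧ h (q + m) < h q + 4 * m * A ∧
      Δ (q + p + 1) < Δ (q + p) + 4 * A' := by
  have : (0 : ℝ) < m := Nat.cast_pos.2 hm
  have hgrowth (q : ℕ) (hq : q ≥ j₀) : (h q + h (q + 1)) / (8 * A) +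
      (∑ s ∈ Finset.range m, h (q + s)) / (4 * m * A) + Δ (q + p) / (4 * A') ≤
        3 / 4 * q + ((A + 2 * B) / (8 * A) + (A * m + B) / (4 * A) + (A' * p + B') / (4 * A')) := by
    have hsum := sum_range_add_le hh_mono hh q m
    have hsucc := hh (q + 1)
    have hΔq := hΔ (q + p) (by lia)
    push_cast at hsucc hΔq
    calc _ ≤ (A * q + B + (A * (q + 1) + B)) / (8 * A) + m * (A * (q + m) + B) / (4 * m * A) +
          (A' * (q + p) + B') / (4 * A') := by gcongr; exact hh q
      _ = _ := by field_simp; ring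
  obtain ⟨q, hq, hlt⟩ := exists_lt_add_one_of_le_linear (by norm_num) hgrowth
  have hincr : (h (q + 2) - h q) / (8 * A) + (h (q + m) - h q) / (4 * m * A) +
      (Δ (q + p + 1) - Δ (q + p)) / (4 * A') < 1 := by
    rw [sum_range_succ_add, add_assoc q 1 1, one_add_one_eq_two, add_right_comm q 1 p, add_div,
      add_div, add_div] at hlt
    simp only [sub_div] at hlt ⊢
    linarith
  have hdouble : 0 ≤ (h (q + 2) - h q) / (8 * A) :=
    div_nonneg (sub_nonneg.2 (hh_mono (by lia))) (by positivity)
  have hwindow : 0 ≤ (h (q + m) - h q) / (4 * m * A) :=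
    div_nonneg (sub_nonneg.2 (hh_mono (by lia))) (by positivity)
  have hdet : 0 ≤ (Δ (q + p + 1) - Δ (q + p)) / (4 * A') :=
    div_nonneg (sub_nonneg.2 (hΔ_mono _ (by lia))) (by positivity)
  refine ⟨q, hq, ?_, ?_, ?_⟩ <;> rw [← sub_lt_iff_lt_add', ← div_lt_one (by positivity)] <;>
    linarith

end Scale

section Gram

variable {G : Type u} [Group G] [DecidableEq G] {ι : Type v} [Fintype ι] {σ : ι → G}
  {n : Type*} [Fintype n] {F : n → G → ℝ} {r R : ℕ}

open Matrix

/-- The Gram matrix of a family of functions for the inner product of `ℓ²` of the ball of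
radius `r`. -/
def ballGram (σ : ι → G) (F : n → G → ℝ) (r : ℕ) : Matrix n n ℝ :=
  Matrix.of fun i j ↦ ∑ g ∈ stepBall σ r, F i g * F j g

theorem dotProduct_ballGram_mulVec (x : n → ℝ) :
    x ⬝ᵥ ballGram σ F r *ᵥ x = sumSq σ (Fintype.linearCombination ℝ F x) r := by
  simp only [dotProduct, mulVec, ballGram, sumSq, Fintype.linearCombination_apply, of_apply,
    Finset.sum_apply, Pi.smul_apply, smul_eq_mul, sq, Finset.sum_mul, Finset.mul_sum]
  rw [Finset.sum_congr rfl fun i _ ↦ Finset.sum_comm, Finset.sum_comm]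
  refine Finset.sum_congr rfl fun g _ ↦ ?_
  rw [Finset.sum_comm]
  exact Finset.sum_congr rfl fun i _ ↦ Finset.sum_congr rfl fun j _ ↦ by ring

omit [Fintype n] in
theorem posSemidef_ballGram [Finite n] : (ballGram σ F r).PosSemidef := by
  have := Fintype.ofFinite n
  refine .of_dotProduct_mulVec_nonneg (by ext i j; simp [ballGram, mul_comm]) fun x ↦ ?_
  rw [star_trivial, dotProduct_ballGram_mulVec]
  exact sumSq_nonneg

theorem det_ballGram_le [DecidableEq n] {L : ℝ} (hL : ∀ i, ∀ g ∈ stepBall σ r, |F i g| ≤ L) :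
    (ballGram σ F r).det ≤
      (Fintype.card n).factorial * ((stepBall σ r).card * L ^ 2) ^ Fintype.card n := by
  refine (le_abs_self _).trans ?_
  rw [← nsmul_eq_mul]
  refine det_le (abv := IsAbsoluteValue.toAbsoluteValue (abs : ℝ → ℝ)) fun i j ↦ ?_
  calc |∑ g ∈ stepBall σ r, F i g * F j g| ≤ ∑ g ∈ stepBall σ r, |F i g * F j g| :=
        Finset.abs_sum_le_sum_abs ..
    _ ≤ ∑ _g ∈ stepBall σ r, L ^ 2 := by
        gcongr with g hg
        rw [abs_mul, sq]
        exact mul_le_mul (hL i g hg) (hL j g hg) (abs_nonneg _) ((abs_nonneg _).trans (hL i g hg))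
    _ = _ := by simp

namespace IsSymmWalk

variable (hσ : IsSymmWalk σ)
include hσ

omit [Fintype n] in
theorem exists_forall_posDef_ballGram [Finite n] (hF : LinearIndependent ℝ F) :
    ∃ r₀, ∀ r ≥ r₀, (ballGram σ F r).PosDef := by
  have := Fintype.ofFinite n
  let N (r : ℕ) : Submodule ℝ (n → ℝ) := LinearMap.ker
    (LinearMap.funLeft ℝ ℝ ((↑) : stepBall σ r → G) ∘ₗ Fintype.linearCombination ℝ F)
  have hN {r : ℕ} {x : n → ℝ} :
      x ∈ N r ↔ ∀ g ∈ stepBall σ r, Fintype.linearCombination ℝ F x g = 0 := by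
    simp [N, funext_iff, LinearMap.funLeft_apply]
  have hanti : Antitone N := fun r s hrs x hx ↦
    hN.2 fun g hg ↦ hN.1 hx g (hσ.stepBall_mono hrs hg)
  obtain ⟨r₀, hr₀⟩ := IsArtinian.monotone_stabilizes (⟨N, hanti⟩ : ℕ →o (Submodule ℝ (n → ℝ))ᵒᵈ)
  have hbot : N r₀ = ⊥ := by
    refine (Submodule.eq_bot_iff _).2 fun x hx ↦ ?_
    have hker : Fintype.linearCombination ℝ F x = 0 := by
      funext g
      obtain ⟨s, hs⟩ := hσ.exists_mem_stepBall g
      have hstable : N r₀ = N (r₀ + s) := hr₀ (r₀ + s) (by lia)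
      exact hN.1 (hstable ▸ hx) g (hσ.stepBall_mono (by lia) hs)
    exact linearIndependent_iff_injective_fintypeLinearCombination.1 hF (by rw [hker, map_zero])
  refine ⟨r₀, fun r hr ↦ .of_dotProduct_mulVec_pos posSemidef_ballGram.1 fun x hx ↦ ?_⟩
  rw [star_trivial, dotProduct_ballGram_mulVec]
  refine sumSq_nonneg.lt_of_ne' fun h0 ↦ hx ?_
  have hzero := (Finset.sum_eq_zero_iff_of_nonneg fun g _ ↦ sq_nonneg _).1 h0
  exact (Submodule.eq_bot_iff _).1 hbot x
    (hanti hr (hN.2 fun g hg ↦ pow_eq_zero_iff two_ne_zero |>.1 (hzero g hg)))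

variable [DecidableEq n]

theorem det_ballGram_mono (hrR : r ≤ R) (hR : (ballGram σ F R).PosDef) :
    (ballGram σ F r).det ≤ (ballGram σ F R).det := by
  have hle (x : n → ℝ) : x ⬝ᵥ ballGram σ F r *ᵥ x ≤ x ⬝ᵥ ballGram σ F R *ᵥ x := by
    simp_rw [dotProduct_ballGram_mulVec]
    exact hσ.sumSq_mono hrR
  simpa using det_le_pow_mul_det posSemidef_ballGram hR hle (0 : (n → ℝ) →ₗ[ℝ] (Empty → ℝ))
    zero_le_one le_rfl (fun x _ ↦ (hle x).trans_eq (one_mul _).symm) le_rfl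

theorem det_ballGram_le_pow_mul (hF : ∀ i, F i ∈ lipschitzHarmonic σ) {K k : ℕ} (hr : 0 < r)
    (hrR : 16 * r ≤ R) (hK : (stepBall σ (256 * r)).card ≤ K * (stepBall σ r).card)
    (hk : (stepBall σ (16 * R)).card ≤ k * (stepBall σ r).card)
    (hR : (ballGram σ F (16 * R)).PosDef) {η : ℝ} (hη1 : η ≤ 1)
    (hη : 32 * K ^ 2 * Fintype.card ι * (r / R : ℝ) ^ 2 ≤ η) :
    (ballGram σ F R).det ≤ η ^ (Fintype.card n - k) * (ballGram σ F (16 * R)).det := by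
  obtain ⟨X, hX, hle⟩ := hσ.exists_sumSq_le_mul_sumSq hr hrR hK hk
  let T : (n → ℝ) →ₗ[ℝ] (X → ℝ) :=
    LinearMap.pi fun x : X ↦ ∑ b ∈ stepBall σ (16 * r),
      LinearMap.proj (R := ℝ) (φ := fun _ : G ↦ ℝ) (x * b) ∘ₗ Fintype.linearCombination ℝ F
  refine det_le_pow_mul_det posSemidef_ballGram hR (fun x ↦ ?_) T
    ((by positivity : (0 : ℝ) ≤ _).trans hη) hη1 (fun x hx ↦ ?_) (by simpa using hX)
  · simp_rw [dotProduct_ballGram_mulVec]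
    exact hσ.sumSq_mono (by lia)
  · simp_rw [dotProduct_ballGram_mulVec]
    have hharm : Fintype.linearCombination ℝ F x ∈ lipschitzHarmonic σ :=
      Submodule.sum_mem _ fun i _ ↦ Submodule.smul_mem _ _ (hF i)
    refine (hle _ hharm.1 fun y hy ↦ ?_).trans ?_
    · simpa [T, LinearMap.sum_apply] using congrFun hx ⟨y, hy⟩
    · exact mul_le_mul_of_nonneg_right hη sumSq_nonneg

end IsSymmWalk

end Gram

section FiniteDimensional

open Real

theorem logb_le_mul_add_logb {x c : ℝ} {a j : ℕ} (hx : 0 < x) (hxc : x ≤ c * 16 ^ (a * j)) :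
    logb 16 x ≤ a * j + logb 16 c := by
  have hc : 0 < c := pos_of_mul_pos_left (hx.trans_le hxc) (by positivity)
  calc logb 16 x ≤ logb 16 (c * 16 ^ (a * j)) := logb_le_logb_of_le (by norm_num) hx hxc
    _ = a * j + logb 16 c := by
      rw [logb_mul hc.ne' (by positivity), logb_pow, logb_self_eq_one (by norm_num)]
      push_cast
      ring

theorem le_pow_mul_of_logb_le {x y : ℕ} {N : ℕ} (hx : 0 < x) (hy : 0 < y)
    (hxy : logb 16 x ≤ logb 16 y + N) : x ≤ 16 ^ N * y := by
  have hx' : (0 : ℝ) < x := Nat.cast_pos.2 hx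
  have hy' : (0 : ℝ) < y := Nat.cast_pos.2 hy
  have hlog : logb 16 x ≤ logb 16 (16 ^ N * y) := by
    rw [logb_mul (by positivity) hy'.ne', logb_pow, logb_self_eq_one (by norm_num)]
    linarith
  exact_mod_cast (logb_le_logb (by norm_num) hx' (by positivity)).1 hlog

variable {G : Type u} [Group G] [DecidableEq G] {ι : Type v} [Fintype ι] {σ : ι → G}
  {n : Type*} {F : n → G → ℝ} {C d : ℕ}

theorem abs_le_of_mem_stepBall {f : G → ℝ} {L : ℝ} (hL : ∀ g i, |f (g * σ i) - f g| ≤ L) {r : ℕ}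
    {g : G} (hg : g ∈ stepBall σ r) : |f g| ≤ |f 1| + L * r := by
  induction r generalizing g with
  | zero => simp [mem_stepBall_zero.1 hg]
  | succ r ih =>
    obtain ⟨z, hz, i, rfl⟩ := mem_stepBall_succ.1 hg
    have htri := abs_add_le (f (z * σ i) - f z) (f z)
    rw [sub_add_cancel] at htri
    push_cast
    linarith [ih hz, hL z i]

theorem exists_forall_abs_le_of_mem_lipschitzHarmonic [Finite n]
    (hF : ∀ i, F i ∈ lipschitzHarmonic σ) :
    ∃ L : ℝ, ∀ i r, ∀ g ∈ stepBall σ r, |F i g| ≤ L * (r + 1) := by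
  choose L hL using fun i ↦ (hF i).2
  obtain ⟨M, hM⟩ := (Set.finite_range fun i ↦ |F i 1| + |L i|).bddAbove
  refine ⟨M, fun i r g hg ↦ ?_⟩
  have hMi : |F i 1| + |L i| ≤ M := hM ⟨i, rfl⟩
  calc |F i g| ≤ |F i 1| + L i * r := abs_le_of_mem_stepBall (hL i) hg
    _ ≤ |F i 1| * (r + 1) + |L i| * (r + 1) := by
      gcongr
      · exact le_mul_of_one_le_right (abs_nonneg _) (by simp)
      · exact le_abs_self _
      · simp
    _ = (|F i 1| + |L i|) * (r + 1) := by ring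
    _ ≤ M * (r + 1) := by gcongr

theorem card_stepBall_pow_le (hC : ∀ r, (stepBall σ r).card ≤ C * (r + 1) ^ d) (j : ℕ) :
    ((stepBall σ (16 ^ j)).card : ℝ) ≤ C * 2 ^ d * 16 ^ (d * j) := by
  have hone : 1 ≤ 16 ^ j := Nat.one_le_pow _ _ (by norm_num)
  have hnat : (stepBall σ (16 ^ j)).card ≤ C * 2 ^ d * 16 ^ (d * j) := by
    calc (stepBall σ (16 ^ j)).card ≤ C * (16 ^ j + 1) ^ d := hC _
      _ ≤ C * (2 * 16 ^ j) ^ d := by gcongr; lia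
      _ = C * 2 ^ d * 16 ^ (d * j) := by rw [mul_pow, ← pow_mul, mul_comm j d, mul_assoc]
  exact_mod_cast hnat

theorem exists_det_ballGram_le [Fintype n] [DecidableEq n]
    (hC : ∀ r, (stepBall σ r).card ≤ C * (r + 1) ^ d) (hF : ∀ i, F i ∈ lipschitzHarmonic σ) :
    ∃ c : ℝ, ∀ j, (ballGram σ F (16 ^ j)).det ≤ c * 16 ^ (Fintype.card n * (d + 2) * j) := by
  obtain ⟨L, hL⟩ := exists_forall_abs_le_of_mem_lipschitzHarmonic hF
  refine ⟨(Fintype.card n).factorial * (C * 2 ^ d * (2 * L) ^ 2) ^ Fintype.card n, fun j ↦ ?_⟩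
  have hone : (1 : ℝ) ≤ 16 ^ j := one_le_pow₀ (by norm_num)
  have hbound (i : n) (g : G) (hg : g ∈ stepBall σ (16 ^ j)) : |F i g| ≤ |L| * (2 * 16 ^ j) := by
    calc |F i g| ≤ L * ((16 ^ j : ℕ) + 1) := hL i _ g hg
      _ ≤ |L| * (2 * 16 ^ j) := by
        push_cast
        gcongr
        · exact le_abs_self L
        · linarith
  calc (ballGram σ F (16 ^ j)).det
      ≤ (Fintype.card n).factorial *
          ((stepBall σ (16 ^ j)).card * (|L| * (2 * 16 ^ j)) ^ 2) ^ Fintype.card n :=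
        det_ballGram_le hbound
    _ ≤ (Fintype.card n).factorial *
          (C * 2 ^ d * 16 ^ (d * j) * (|L| * (2 * 16 ^ j)) ^ 2) ^ Fintype.card n := by
        gcongr
        exact card_stepBall_pow_le hC j
    _ = _ := by
        rw [mul_pow |L|, sq_abs]
        ring

theorem thirtyTwo_mul_card_mul_le (ι : Type v) [Fintype ι] (d q : ℕ) {p : ℕ}
    (hp : Fintype.card ι + 12 * d + 9 ≤ p) :
    32 * ((16 ^ (8 * d) : ℕ) : ℝ) ^ 2 * Fintype.card ι *
      ((16 ^ q : ℕ) / (16 ^ (q + p) : ℕ) : ℝ) ^ 2 ≤ (16 ^ (8 * (d + 2)))⁻¹ := by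
  have hι : (Fintype.card ι : ℝ) ≤ 16 ^ Fintype.card ι := by
    exact_mod_cast (Nat.lt_pow_self (by norm_num)).le
  rw [← one_div, le_div_iff₀ (by positivity)]
  push_cast
  calc _ ≤ (16 : ℝ) ^ 2 * (16 ^ (8 * d)) ^ 2 * 16 ^ Fintype.card ι * (16 ^ q / 16 ^ (q + p)) ^ 2 *
          16 ^ (8 * (d + 2)) := by gcongr; norm_num
    _ = 16 ^ (Fintype.card ι + 24 * d + 18) / 16 ^ (2 * p) := by
        field_simp
        ring
    _ ≤ 1 := by
        rw [div_le_one (by positivity)]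
        exact pow_le_pow_right₀ (by norm_num) (by lia)

namespace IsSymmWalk

variable (hσ : IsSymmWalk σ)
include hσ

theorem logb_det_ballGram_add_le [Fintype n] [DecidableEq n] {p k q : ℕ}
    (hp : Fintype.card ι + 12 * d + 9 ≤ p) (hF : ∀ i, F i ∈ lipschitzHarmonic σ)
    (hR : (ballGram σ F (16 ^ (q + p))).PosDef) (hR' : (ballGram σ F (16 ^ (q + p + 1))).PosDef)
    (hK : (stepBall σ (16 ^ (q + 2))).card ≤ 16 ^ (8 * d) * (stepBall σ (16 ^ q)).card)
    (hk : (stepBall σ (16 ^ (q + (p + 1)))).card ≤ k * (stepBall σ (16 ^ q)).card) :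
    logb 16 (ballGram σ F (16 ^ (q + p))).det + (Fintype.card n - k : ℕ) * (8 * (d + 2)) ≤
      logb 16 (ballGram σ F (16 ^ (q + p + 1))).det := by
  have hpow (j : ℕ) : 16 ^ (j + 1) = 16 * 16 ^ j := pow_succ' 16 j
  have hdet := hσ.det_ballGram_le_pow_mul hF (r := 16 ^ q) (R := 16 ^ (q + p)) (k := k)
    (by positivity) (by rw [← hpow]; exact Nat.pow_le_pow_right (by norm_num) (by lia))
    (by rwa [show 256 * 16 ^ q = 16 ^ (q + 2) by ring]) (by rwa [← hpow])
    (by rwa [← hpow]) (inv_le_one_of_one_le₀ (one_le_pow₀ (by norm_num)))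
    (thirtyTwo_mul_card_mul_le ι d q hp)
  rw [← hpow] at hdet
  have hlog := logb_le_logb_of_le (by norm_num : (1 : ℝ) < 16) hR.det_pos hdet
  rw [logb_mul (by positivity) hR'.det_pos.ne', logb_pow, logb_inv, logb_pow,
    logb_self_eq_one (by norm_num)] at hlog
  push_cast at hlog
  linarith

theorem not_linearIndependent_of_card_eq [Fintype n] {p : ℕ} (hd : 0 < d)
    (hp : Fintype.card ι + 12 * d + 9 ≤ p)
    (hC : ∀ r, (stepBall σ r).card ≤ C * (r + 1) ^ d) (hF : ∀ i, F i ∈ lipschitzHarmonic σ)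
    (hn : Fintype.card n = 2 * 16 ^ (4 * (p + 1) * d)) : ¬ LinearIndependent ℝ F := by
  classical
  intro hli
  obtain ⟨j₀, hj₀⟩ := hσ.exists_forall_posDef_ballGram hli
  obtain ⟨c, hc⟩ := exists_det_ballGram_le hC hF
  have hdef {j : ℕ} (hj : j ≥ j₀) : (ballGram σ F (16 ^ j)).PosDef :=
    hj₀ _ (hj.le.trans (Nat.lt_pow_self (by norm_num)).le)
  have hmono : Monotone fun j : ℕ ↦ 16 ^ j := pow_right_monotone (by norm_num : 1 ≤ 16)
  have hpos (j : ℕ) : 0 < (stepBall σ (16 ^ j)).card := hσ.card_stepBall_pos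
  obtain ⟨q, hq, hdouble, hwindow, hdet⟩ := exists_good_scale
    (h := fun j ↦ logb 16 (stepBall σ (16 ^ j)).card)
    (Δ := fun j ↦ logb 16 (ballGram σ F (16 ^ j)).det)
    (A := d) (A' := (Fintype.card n * (d + 2) : ℕ)) (j₀ := j₀) (m := p + 1) p
    (Nat.cast_pos.2 hd) (Nat.cast_pos.2 (by rw [hn]; positivity)) p.succ_pos
    (fun i j hij ↦ logb_le_logb_of_le (by norm_num) (Nat.cast_pos.2 (hpos i))
      (Nat.cast_le.2 (Finset.card_le_card (hσ.stepBall_mono (hmono hij)))))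
    (fun j hj ↦ logb_le_logb_of_le (by norm_num) (hdef hj).det_pos
      (hσ.det_ballGram_mono (hmono j.le_succ) (hdef (by lia))))
    (fun j ↦ logb_le_mul_add_logb (Nat.cast_pos.2 (hpos j)) (card_stepBall_pow_le hC j))
    (fun j hj ↦ logb_le_mul_add_logb (hdef hj).det_pos (hc j))
  have hK := le_pow_mul_of_logb_le (N := 8 * d) (hpos _) (hpos _)
    (by push_cast; exact hdouble.le)
  have hk := le_pow_mul_of_logb_le (N := 4 * (p + 1) * d) (hpos _) (hpos _)
    (by push_cast at hwindow ⊢; exact hwindow.le)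
  have hincr := hσ.logb_det_ballGram_add_le hp hF (hdef (by lia)) (hdef (by lia)) hK hk
  have hcontra := hincr.trans_lt hdet
  rw [hn, two_mul, Nat.add_sub_cancel] at hcontra
  push_cast at hcontra
  linarith

omit [DecidableEq G] in
theorem finiteDimensional_lipschitzHarmonic (hG : HasPolynomialGrowth G d) :
    FiniteDimensional ℝ (lipschitzHarmonic σ) := by
  classical
  obtain ⟨C, hC⟩ := hG (Set.range σ) (Set.finite_range σ)
  have hcard (r : ℕ) : (stepBall σ r).card ≤ C * (r + 1) ^ (d + 1) := by
    rw [← Set.ncard_coe_finset, coe_stepBall]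
    exact (hC r).trans (Nat.mul_le_mul_left C (Nat.pow_le_pow_right r.succ_pos d.le_succ))
  by_contra hinf
  have hrank (N : ℕ) : (N : Cardinal) ≤ Module.rank ℝ (lipschitzHarmonic σ) :=
    Cardinal.natCast_lt_aleph0.le.trans (not_lt.1 (mt Module.rank_lt_aleph0_iff.1 hinf))
  obtain ⟨s, hs, hli⟩ := exists_finset_linearIndependent_of_le_rank (hrank
    (2 * 16 ^ (4 * (Fintype.card ι + 12 * (d + 1) + 9 + 1) * (d + 1))))
  exact hσ.not_linearIndependent_of_card_eq d.succ_pos le_rfl hcard (F := fun f : s ↦ f.1.1)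
    (fun f ↦ f.1.2) (by rwa [Fintype.card_coe])
    (hli.map' (lipschitzHarmonic σ).subtype (Submodule.ker_subtype _))

end IsSymmWalk

theorem IsSymmGenerating.isSymmWalk_pairMul {G : Type u} [Group G] {S : Finset G}
    (hS : IsSymmGenerating (S : Set G)) : IsSymmWalk (pairMul S) where
  exists_eq_one := ⟨(⟨1, hS.one_mem⟩, ⟨1, hS.one_mem⟩), mul_one 1⟩
  exists_equiv :=
    let inv : S ≃ S := (Equiv.inv G).subtypeEquiv fun _ ↦ ⟨hS.inv_mem, fun h ↦ by
      simpa using hS.inv_mem h⟩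
    ⟨(Equiv.prodComm S S).trans (inv.prodCongr inv), fun p ↦ (mul_inv_rev _ _).symm⟩
  closure_range_eq_top := by
    rw [← top_le_iff, ← hS.closure_eq_top]
    exact Subgroup.closure_mono fun s hs ↦ ⟨(⟨s, hs⟩, ⟨1, hS.one_mem⟩), mul_one s⟩

end FiniteDimensional

/-! ### Finite index subgroups with infinite abelianization -/

section Gradient

open scoped BoundedContinuousFunction

variable {G : Type u} [Group G] {ι : Type v} {σ : ι → G} {f : G → ℝ}

section Translation

variable [TopologicalSpace G] [DiscreteTopology G] [TopologicalSpace ι]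

/-- The left translation of functions on `G × ι` by `g : G`, acting on the first variable. -/
noncomputable def leftTranslate (ι : Type v) [TopologicalSpace ι] (g : G) :
    (G × ι →ᵇ ℂ) →ₗ[ℂ] (G × ι →ᵇ ℂ) where
  toFun u := u.compContinuous ⟨fun x ↦ (g⁻¹ * x.1, x.2), by fun_prop⟩
  map_add' _ _ := rfl
  map_smul' _ _ := rfl

theorem leftTranslate_apply (g : G) (u : G × ι →ᵇ ℂ) (x : G × ι) :
    leftTranslate ι g u x = u (g⁻¹ * x.1, x.2) := rfl

theorem leftTranslate_mul (g h : G) :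
    leftTranslate ι (g * h) = leftTranslate ι g * leftTranslate ι h := by
  ext u x
  simp [leftTranslate_apply, mul_assoc]

theorem leftTranslate_one : leftTranslate ι (1 : G) = 1 := by
  ext u x
  simp [leftTranslate_apply]

theorem norm_leftTranslate_le (g : G) (u : G × ι →ᵇ ℂ) : ‖leftTranslate ι g u‖ ≤ ‖u‖ :=
  (BoundedContinuousFunction.norm_le (norm_nonneg _)).2 fun _ ↦ u.norm_coe_le_norm _

theorem norm_leftTranslate (g : G) (u : G × ι →ᵇ ℂ) : ‖leftTranslate ι g u‖ = ‖u‖ := by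
  refine (norm_leftTranslate_le g u).antisymm ?_
  calc ‖u‖ = ‖leftTranslate ι g⁻¹ (leftTranslate ι g u)‖ := by
        rw [← Module.End.mul_apply, ← leftTranslate_mul, inv_mul_cancel, leftTranslate_one,
          Module.End.one_apply]
    _ ≤ ‖leftTranslate ι g u‖ := norm_leftTranslate_le _ _

end Translation

variable [Fintype ι]

theorem mul_left_mem_lipschitzHarmonic (hf : f ∈ lipschitzHarmonic σ) (g : G) :
    (fun x ↦ f (g * x)) ∈ lipschitzHarmonic σ := by
  obtain ⟨hf, L, hL⟩ := hf
  refine ⟨fun x ↦ ?_, L, fun x i ↦ ?_⟩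
  · simpa only [mul_assoc] using hf (g * x)
  · simpa only [mul_assoc] using hL (g * x) i

variable [TopologicalSpace G] [DiscreteTopology G] [TopologicalSpace ι] [DiscreteTopology ι]

/-- The gradient of a Lipschitz harmonic function: its increments along the steps of the walk.
The values are complex to make room for eigenvectors of the translations. -/
noncomputable def gradient (σ : ι → G) : lipschitzHarmonic σ →ₗ[ℝ] (G × ι →ᵇ ℂ) where
  toFun f := BoundedContinuousFunction.ofNormedAddCommGroupDiscrete
    (fun x : G × ι ↦ ((f.1 (x.1 * σ x.2) - f.1 x.1 : ℝ) : ℂ)) f.2.2.choose fun x ↦ by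
      rw [Complex.norm_real]
      exact f.2.2.choose_spec x.1 x.2
  map_add' f g := by
    ext x
    simp [add_sub_add_comm]
  map_smul' c f := by
    ext x
    simp [mul_sub]

theorem gradient_apply (f : lipschitzHarmonic σ) (x : G × ι) :
    gradient σ f x = ((f.1 (x.1 * σ x.2) - f.1 x.1 : ℝ) : ℂ) := rfl

theorem leftTranslate_gradient (g : G) (f : lipschitzHarmonic σ) :
    leftTranslate ι g (gradient σ f) =
      gradient σ ⟨_, mul_left_mem_lipschitzHarmonic f.2 g⁻¹⟩ := by
  ext x
  simp [leftTranslate_apply, gradient_apply, mul_assoc]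

/-- The complex span of the gradients of the Lipschitz harmonic functions. -/
noncomputable def gradientSpan (σ : ι → G) : Submodule ℂ (G × ι →ᵇ ℂ) :=
  Submodule.span ℂ (LinearMap.range (gradient σ))

theorem leftTranslate_mem_gradientSpan (g : G) {u : G × ι →ᵇ ℂ} (hu : u ∈ gradientSpan σ) :
    leftTranslate ι g u ∈ gradientSpan σ := by
  suffices gradientSpan σ ≤ (gradientSpan σ).comap (leftTranslate ι g) from this hu
  refine Submodule.span_le.2 ?_
  rintro _ ⟨f, rfl⟩
  exact Submodule.subset_span ⟨_, (leftTranslate_gradient g f).symm⟩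

theorem finiteDimensional_gradientSpan [FiniteDimensional ℝ (lipschitzHarmonic σ)] :
    FiniteDimensional ℂ (gradientSpan σ) := by
  obtain ⟨t, ht⟩ : (LinearMap.range (gradient σ)).FG := Module.Finite.iff_fg.1 inferInstance
  rw [gradientSpan, ← ht, Submodule.span_span_of_tower]
  exact FiniteDimensional.span_finset ℂ t

/-- The isometric representation of `G` on `gradientSpan σ` by left translations. -/
noncomputable def gradientRep (σ : ι → G) [FiniteDimensional ℂ (gradientSpan σ)] :
    G →* (gradientSpan σ →L[ℂ] gradientSpan σ) where
  toFun g := LinearMap.toContinuousLinearMap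
    ((leftTranslate ι g).restrict fun _ ↦ leftTranslate_mem_gradientSpan g)
  map_one' := by
    ext u x
    simp [leftTranslate_one]
  map_mul' g h := by
    ext u x
    simp [leftTranslate_mul]

theorem coe_gradientRep_apply [FiniteDimensional ℂ (gradientSpan σ)] (g : G)
    (u : gradientSpan σ) : (gradientRep σ g u : G × ι →ᵇ ℂ) = leftTranslate ι g u := rfl

theorem HasPolynomialGrowth.exists_finiteIndex_commute_gradientRep {d : ℕ}
    [FiniteDimensional ℂ (gradientSpan σ)] (hG : HasPolynomialGrowth G d) :
    ∃ K : Subgroup G, K.FiniteIndex ∧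
      ∀ a ∈ K, ∀ b ∈ K, Commute (gradientRep σ a) (gradientRep σ b) := by
  obtain ⟨K, hK, hcomm⟩ := hG.exists_finiteIndex_commute_map
    (ρ := (gradientRep σ).toHomUnits) fun g v ↦ norm_leftTranslate g v.1
  exact ⟨K, hK, fun a ha b hb ↦ (hcomm a ha b hb).units_val⟩

theorem IsSymmWalk.sub_eq_sub_of_gradientRep_eq_one (hσ : IsSymmWalk σ)
    [FiniteDimensional ℂ (gradientSpan σ)] {g : G} (hg : gradientRep σ g = 1)
    (hf : f ∈ lipschitzHarmonic σ) (x : G) : f (g⁻¹ * x) - f x = f g⁻¹ - f 1 := by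
  have hgrad (x : G) (i : ι) : f (g⁻¹ * x * σ i) - f (g⁻¹ * x) = f (x * σ i) - f x := by
    have := DFunLike.congr_fun
      (coe_gradientRep_apply g ⟨gradient σ ⟨f, hf⟩, Submodule.subset_span ⟨_, rfl⟩⟩) (x, i)
    rw [hg] at this
    exact (Complex.ofReal_injective this).symm
  induction x using hσ.induction_on with
  | one => rw [mul_one]
  | mul x i hx => rw [← mul_assoc]; linarith [hgrad x i]

end Gradient

section LeftStabilizer

variable {G : Type u} [Group G] {β : Type v} {f : G → β}

/-- The subgroup of all `g : G` such that `f` is invariant under left multiplication by `g`. -/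
def leftStabilizer (f : G → β) : Subgroup G where
  carrier := {g | ∀ x, f (g * x) = f x}
  one_mem' x := by rw [one_mul]
  mul_mem' ha hb x := by rw [mul_assoc, ha, hb]
  inv_mem' {g} hg x := by rw [← hg, mul_inv_cancel_left]

theorem mem_leftStabilizer {g : G} : g ∈ leftStabilizer f ↔ ∀ x, f (g * x) = f x := Iff.rfl

theorem finite_range_of_finiteIndex_leftStabilizer [(leftStabilizer f).FiniteIndex] :
    (Set.range f).Finite := by
  have : Finite (G ⧸ leftStabilizer f) := Subgroup.finite_quotient_of_finiteIndex
  refine (Set.finite_range fun q : G ⧸ leftStabilizer f ↦ f q.out⁻¹).subset ?_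
  rintro _ ⟨x, rfl⟩
  let q : G ⧸ leftStabilizer f := (x⁻¹ : G)
  have hmem : x * q.out ∈ leftStabilizer f := by
    simpa [q] using QuotientGroup.eq.1 (QuotientGroup.out_eq' q).symm
  exact ⟨q, by simpa using (mem_leftStabilizer.1 hmem q.out⁻¹).symm⟩

end LeftStabilizer

section Abelianization

variable {G : Type u} [Group G] {ι : Type v} [Fintype ι] {σ : ι → G} {f : G → ℝ}

theorem IsHarmonic.eq_apply_one_of_finite_range (hf : IsHarmonic σ f) (hσ : IsSymmWalk σ)
    (hfin : (Set.range f).Finite) (g : G) : f g = f 1 := by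
  obtain ⟨_, ⟨m, rfl⟩, hm⟩ := hfin.exists_maximal (Set.range_nonempty f)
  have hmax (x : G) : f x ≤ f m := (le_total (f x) (f m)).elim id fun h ↦ hm ⟨x, rfl⟩ h
  have hconst (x : G) : f (m * x) = f m := by
    induction x using hσ.induction_on with
    | one => rw [mul_one]
    | mul x i hx =>
      have hterm := (Finset.sum_eq_zero_iff_of_nonpos fun j _ ↦ by
        rw [hx]; exact sub_nonpos.2 (hmax _)).1 (hf (m * x)) i (Finset.mem_univ i)
      rw [← mul_assoc, ← hx, ← sub_eq_zero, hterm]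
  have key (x : G) : f x = f m := by simpa using hconst (m⁻¹ * x)
  rw [key g, key 1]

theorem commutator_le_leftStabilizer {N : Subgroup G}
    (hN : ∀ g ∈ N, ∀ x, f (g * x) - f x = f g - f 1) : ⁅N, N⁆ ≤ leftStabilizer f := by
  refine Subgroup.commutator_le.2 fun a ha b hb x ↦ ?_
  have hab := hN a ha (b * (a⁻¹ * b⁻¹ * x))
  have hb₁ := hN b hb (a⁻¹ * b⁻¹ * x)
  have hba := hN b hb (b⁻¹ * x)
  have ha₁ := hN a ha (a⁻¹ * b⁻¹ * x)
  simp only [commutatorElement_def, mul_assoc, mul_inv_cancel_left] at *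
  linarith

theorem commutator_le_ker_of_commute {M : Type*} [Monoid M] {φ : G →* M} {K : Subgroup G}
    (hK : ∀ a ∈ K, ∀ b ∈ K, Commute (φ a) (φ b)) : ⁅K, K⁆ ≤ φ.ker := by
  refine Subgroup.commutator_le.2 fun a ha b hb ↦ ?_
  have hab : φ (a * b) = φ (b * a) := by rw [map_mul, map_mul, (hK a ha b hb).eq]
  rw [MonoidHom.mem_ker, show ⁅a, b⁆ = a * b * (b * a)⁻¹ by group, map_mul, hab, ← map_mul,
    mul_inv_cancel, map_one]

theorem IsSymmWalk.exists_not_finiteIndex_commutator {d : ℕ} (hσ : IsSymmWalk σ)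
    (hG : HasPolynomialGrowth G d) (hf : f ∈ lipschitzHarmonic σ) (hne : ∃ g, f g ≠ f 1) :
    ∃ H : Subgroup G, H.FiniteIndex ∧ ¬ ⁅H, H⁆.FiniteIndex := by
  let : TopologicalSpace G := ⊥
  have : DiscreteTopology G := ⟨rfl⟩
  let : TopologicalSpace ι := ⊥
  have : DiscreteTopology ι := ⟨rfl⟩
  have := hσ.finiteDimensional_lipschitzHarmonic hG
  have := finiteDimensional_gradientSpan (σ := σ)
  obtain ⟨K, hK, hcomm⟩ := hG.exists_finiteIndex_commute_gradientRep (σ := σ)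
  by_contra! hfi
  have hshift (g : G) (hg : g ∈ ⁅K, K⁆) (x : G) : f (g * x) - f x = f g - f 1 := by
    simpa using hσ.sub_eq_sub_of_gradientRep_eq_one
      (commutator_le_ker_of_commute hcomm (inv_mem hg)) hf x
  have := hfi _ (hfi K hK)
  have := Subgroup.finiteIndex_of_le (commutator_le_leftStabilizer hshift)
  obtain ⟨g, hg⟩ := hne
  exact hg (hf.1.eq_apply_one_of_finite_range hσ finite_range_of_finiteIndex_leftStabilizer g)

theorem not_finiteIndex_commutator_subtype {H : Subgroup G} [H.FiniteIndex]
    (hH : ¬ ⁅H, H⁆.FiniteIndex) : ¬ (commutator H).FiniteIndex := fun h ↦ hH ⟨by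
  rw [← H.map_subtype_commutator, Subgroup.index_map_subtype]
  exact mul_ne_zero h.index_ne_zero Subgroup.FiniteIndex.index_ne_zero⟩

theorem exists_addMonoidHom_int_apply_eq_one (M : Type*) [AddCommGroup M] [AddGroup.FG M]
    [Infinite M] : ∃ (φ : M →+ ℤ) (x : M), φ x = 1 := by
  have : Module.Finite ℤ M := Module.Finite.iff_addGroup_fg.2 inferInstance
  let Q := M ⧸ Submodule.torsion ℤ M
  have : Nontrivial Q := by
    refine Submodule.Quotient.nontrivial_iff.2 fun htop ↦ ?_
    have := Module.finite_of_fg_torsion M ((Submodule.isTorsion'_iff_torsion'_eq_top _).2 htop)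
    exact not_finite M
  let b := Module.Free.chooseBasis ℤ Q
  obtain ⟨i⟩ := b.index_nonempty
  obtain ⟨x, hx⟩ := Submodule.mkQ_surjective _ (b i)
  exact ⟨((b.coord i).comp (Submodule.mkQ _)).toAddMonoidHom, x, by simp [hx]⟩

theorem exists_monoidHom_int_apply_eq_ofAdd_one {H : Type*} [Group H] [Group.FG H]
    (hH : ¬ (commutator H).FiniteIndex) :
    ∃ (φ : H →* Multiplicative ℤ) (t : H), φ t = Multiplicative.ofAdd 1 := by
  have : Group.FG (Abelianization H) := inferInstanceAs (Group.FG (H ⧸ commutator H))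
  have : Infinite (Additive (Abelianization H)) := not_finite_iff_infinite.1 fun h ↦
    have : Finite (H ⧸ commutator H) := h
    hH Subgroup.finiteIndex_of_finite_quotient
  obtain ⟨φ, x, hx⟩ := exists_addMonoidHom_int_apply_eq_one (Additive (Abelianization H))
  obtain ⟨t, ht⟩ := QuotientGroup.mk_surjective (s := commutator H) x.toMul
  refine ⟨(AddMonoidHom.toMultiplicativeLeft φ).comp Abelianization.of, t, ?_⟩
  exact congrArg Multiplicative.ofAdd ((congrArg φ ht).trans hx)

theorem HasPolynomialGrowth.exists_finiteIndex_monoidHom_int [Infinite G] [Group.FG G] {d : ℕ}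
    (hG : HasPolynomialGrowth G d) :
    ∃ H : Subgroup G, H.FiniteIndex ∧
      ∃ (φ : H →* Multiplicative ℤ) (t : H), φ t = Multiplicative.ofAdd 1 := by
  classical
  obtain ⟨S, hS⟩ := exists_isSymmGenerating (G := G)
  obtain ⟨f, hf, hne⟩ := hS.exists_nonconstant_lipschitzHarmonic hG
  obtain ⟨H, hH, hcomm⟩ := hS.isSymmWalk_pairMul.exists_not_finiteIndex_commutator hG hf hne
  exact ⟨H, hH, exists_monoidHom_int_apply_eq_ofAdd_one (not_finiteIndex_commutator_subtype hcomm)⟩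

end Abelianization

/-! ### Unipotence of the conjugation action -/

section Expansion

variable {G : Type u} [Group G] {d : ℕ} {A : Subgroup G} [A.Normal] {t : G}
  {ψ : Additive A →+ ℂ} {μ : ℂ}

theorem map_conjNormal_pow
    (hψ : ∀ a : A, ψ (.ofMul (MulAut.conjNormal t a)) = μ * ψ (.ofMul a)) (j : ℕ) (a : A) :
    ψ (.ofMul (MulAut.conjNormal (t ^ j) a)) = μ ^ j * ψ (.ofMul a) := by
  induction j with
  | zero => simp
  | succ j ih => rw [pow_succ', map_mul, MulAut.mul_apply, hψ, ih, pow_succ', mul_assoc]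

theorem exists_eq_mul_pow_of_mem_pair_pow (hμ : 3 ≤ ‖μ‖)
    (hψ : ∀ a : A, ψ (.ofMul (MulAut.conjNormal t a)) = μ * ψ (.ofMul a)) (e : A) (j : ℕ) {w : G}
    (hw : w ∈ ({e * t, t} : Set G) ^ j) :
    ∃ a : A, w = a * t ^ j ∧ 2 * ‖ψ (.ofMul a)‖ ≤ (‖μ‖ ^ j - 1) * ‖ψ (.ofMul e)‖ := by
  induction j generalizing w with
  | zero => exact ⟨1, by simpa using hw, by simp⟩
  | succ j ih =>
    obtain ⟨w, hw, y, hy, rfl⟩ := hw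
    obtain ⟨a, rfl, ha⟩ := ih hw
    have hgrow : 2 * (‖μ‖ ^ j * ‖ψ (.ofMul e)‖) + (‖μ‖ ^ j - 1) * ‖ψ (.ofMul e)‖ ≤
        (‖μ‖ ^ (j + 1) - 1) * ‖ψ (.ofMul e)‖ := by
      rw [← mul_assoc, ← add_mul, pow_succ]
      gcongr
      nlinarith [pow_nonneg (norm_nonneg μ) j]
    have : 0 ≤ ‖μ‖ ^ j * ‖ψ (.ofMul e)‖ := by positivity
    rcases hy with rfl | rfl
    · refine ⟨a * MulAut.conjNormal (t ^ j) e, ?_, ?_⟩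
      · rw [Subgroup.coe_mul, MulAut.conjNormal_apply, pow_succ]
        group
      · rw [ofMul_mul, map_add, map_conjNormal_pow hψ]
        have := norm_add_le (ψ (.ofMul a)) (μ ^ j * ψ (.ofMul e))
        rw [norm_mul, norm_pow] at this
        linarith
    · exact ⟨a, (mul_assoc _ _ _).trans (by rw [pow_succ]), by linarith⟩

namespace HasPolynomialGrowth

theorem eq_zero_of_conjNormal_of_three_le (hG : HasPolynomialGrowth G d) (hμ : 3 ≤ ‖μ‖)
    (hψ : ∀ a : A, ψ (.ofMul (MulAut.conjNormal t a)) = μ * ψ (.ofMul a)) : ψ = 0 := by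
  ext e
  change ψ (.ofMul e) = 0
  obtain ⟨j, w, hw, w', hw', heq⟩ := hG.exists_mul_left_eq_mul_right (e * t) t
  obtain ⟨a, rfl, ha⟩ := exists_eq_mul_pow_of_mem_pair_pow hμ hψ e j hw
  obtain ⟨b, rfl, hb⟩ := exists_eq_mul_pow_of_mem_pair_pow hμ hψ e j hw'
  have hab : a * MulAut.conjNormal (t ^ j) e = b := by
    refine Subtype.ext (mul_right_cancel (b := t ^ j) (mul_right_cancel (b := t) ?_))
    rw [Subgroup.coe_mul, MulAut.conjNormal_apply, ← heq]
    group
  have hdiff : μ ^ j * ψ (.ofMul e) = ψ (.ofMul b) - ψ (.ofMul a) := by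
    rw [← hab, ofMul_mul, map_add, map_conjNormal_pow hψ, add_sub_cancel_left]
  have hnorm : ‖μ‖ ^ j * ‖ψ (.ofMul e)‖ ≤ (‖μ‖ ^ j - 1) * ‖ψ (.ofMul e)‖ := by
    rw [← norm_pow, ← norm_mul, hdiff, norm_pow]
    linarith [norm_sub_le (ψ (.ofMul b)) (ψ (.ofMul a))]
  exact norm_le_zero_iff.1 (by linarith)

theorem eq_zero_of_conjNormal (hG : HasPolynomialGrowth G d) (hμ : 1 < ‖μ‖)
    (hψ : ∀ a : A, ψ (.ofMul (MulAut.conjNormal t a)) = μ * ψ (.ofMul a)) : ψ = 0 := by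
  obtain ⟨p, hp⟩ := pow_unbounded_of_one_lt 3 hμ
  exact hG.eq_zero_of_conjNormal_of_three_le (by rw [norm_pow]; exact hp.le)
    (map_conjNormal_pow hψ p)

end HasPolynomialGrowth

end Expansion

section Unipotent

open Polynomial TensorProduct

theorem exists_pow_eq_one_of_mem_roots {q : ℤ[X]} (hq : q.Monic)
    (hroots : ∀ z ∈ (q.map (Int.castRingHom ℂ)).roots, ‖z‖ ≤ 1 ∧ z ≠ 0) :
    ∃ m, 0 < m ∧ ∀ z ∈ (q.map (Int.castRingHom ℂ)).roots, z ^ m = 1 := by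
  have hmahler : (q.map (Int.castRingHom ℂ)).mahlerMeasure = 1 := by
    rw [mahlerMeasure_eq_leadingCoeff_mul_prod_roots, (hq.map _).leadingCoeff, norm_one, one_mul]
    refine Multiset.prod_eq_one fun x hx ↦ ?_
    obtain ⟨z, hz, rfl⟩ := Multiset.mem_map.1 hx
    exact max_eq_left (hroots z hz).1
  have hunity (z : (q.map (Int.castRingHom ℂ)).roots.toFinset) : ∃ n, 0 < n ∧ z.1 ^ n = 1 :=
    have hz := Multiset.mem_toFinset.1 z.2
    pow_eq_one_of_mahlerMeasure_eq_one hmahler (hroots z hz).2 hz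
  choose n hn hzn using hunity
  refine ⟨∏ z, n z, Finset.prod_pos fun z _ ↦ hn z, fun z hz ↦ ?_⟩
  let z' : (q.map (Int.castRingHom ℂ)).roots.toFinset := ⟨z, Multiset.mem_toFinset.2 hz⟩
  exact orderOf_dvd_iff_pow_eq_one.1
    ((orderOf_dvd_of_pow_eq_one (hzn z')).trans (Finset.dvd_prod_of_mem n (Finset.mem_univ z')))

theorem exists_dvd_X_pow_sub_one_pow {q : ℤ[X]} (hq : q.Monic)
    (hroots : ∀ z ∈ (q.map (Int.castRingHom ℂ)).roots, ‖z‖ ≤ 1 ∧ z ≠ 0) :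
    ∃ m, 0 < m ∧ q ∣ (X ^ m - 1) ^ q.natDegree := by
  obtain ⟨m, hm, hz⟩ := exists_pow_eq_one_of_mem_roots hq hroots
  refine ⟨m, hm, (map_dvd_map (Int.castRingHom ℂ) Int.cast_injective hq).1 ?_⟩
  have hsplits := IsAlgClosed.splits (q.map (Int.castRingHom ℂ))
  have hdvd (z : ℂ) (hzr : z ∈ (q.map (Int.castRingHom ℂ)).roots) : X - C z ∣ X ^ m - 1 :=
    dvd_iff_isRoot.2 (by simp [hz z hzr])
  calc q.map (Int.castRingHom ℂ) = _ := hsplits.eq_prod_roots_of_monic (hq.map _)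
    _ ∣ ((q.map (Int.castRingHom ℂ)).roots.map fun _ ↦ X ^ m - 1).prod :=
      Multiset.prod_dvd_prod_of_dvd _ _ hdvd
    _ = ((X ^ m - 1) ^ q.natDegree : ℤ[X]).map (Int.castRingHom ℂ) := by
      simp [← hsplits.natDegree_eq_card_roots, hq.natDegree_map]

theorem exists_eigenfunctional {F : Type*} [AddCommGroup F] [Module.Finite ℤ F] [Module.Free ℤ F]
    {γ : Module.End ℤ F} {z : ℂ} (hz : z ∈ (γ.charpoly.map (Int.castRingHom ℂ)).roots) :
    ∃ ψ : F →+ ℂ, ψ ≠ 0 ∧ ∀ x, ψ (γ x) = z * ψ x := by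
  let γC : Module.End ℂ (ℂ ⊗[ℤ] F) := γ.baseChange ℂ
  have heig : γC.HasEigenvalue z := by
    rw [Module.End.hasEigenvalue_iff_isRoot_charpoly, LinearMap.charpoly_baseChange]
    exact isRoot_of_mem_roots hz
  have hrange : LinearMap.range (γC - algebraMap ℂ _ z) < ⊤ := by
    rw [lt_top_iff_ne_top, Ne, ← LinearMap.ker_eq_bot_iff_range_eq_top]
    rw [Algebra.algebraMap_eq_smul_one, ← Module.End.eigenspace_def]
    exact Module.End.hasEigenvalue_iff.1 heig
  obtain ⟨φ, hφ0, hφ⟩ := Submodule.exists_le_ker_of_lt_top _ hrange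
  refine ⟨φ.toAddMonoidHom.comp (TensorProduct.mk ℤ ℂ F 1).toAddMonoidHom, fun h ↦ hφ0 ?_,
    fun x ↦ ?_⟩
  · ext x
    exact DFunLike.congr_fun h x
  · have := hφ ⟨1 ⊗ₜ x, rfl⟩
    simpa [γC, sub_eq_zero] using this

theorem exists_isNilpotent_pow_sub_one_of_free {F : Type*} [AddCommGroup F] [Module.Finite ℤ F]
    [Module.Free ℤ F] {γ : Module.End ℤ F}
    (hγ : ∀ (ψ : F →+ ℂ) (z : ℂ), ψ ≠ 0 → (∀ x, ψ (γ x) = z * ψ x) → ‖z‖ ≤ 1 ∧ z ≠ 0) :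
    ∃ m, 0 < m ∧ IsNilpotent (γ ^ m - 1) := by
  obtain ⟨m, hm, hdvd⟩ := exists_dvd_X_pow_sub_one_pow γ.charpoly_monic fun z hz ↦ by
    obtain ⟨ψ, hψ0, hψ⟩ := exists_eigenfunctional hz
    exact hγ ψ z hψ0 hψ
  refine ⟨m, hm, γ.charpoly.natDegree, ?_⟩
  simpa [LinearMap.aeval_self_charpoly] using map_dvd (aeval γ) hdvd

theorem isNilpotent_of_mapQ {R M : Type*} [Ring R] [AddCommGroup M] [Module R M]
    {N : Submodule R M} {β : Module.End R M} (hN : N ≤ N.comap β) (hβN : ∀ x ∈ N, β x = 0)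
    (hβ : IsNilpotent (N.mapQ N β hN)) : IsNilpotent β := by
  obtain ⟨n, hn⟩ := hβ
  refine ⟨n + 1, LinearMap.ext fun x ↦ ?_⟩
  rw [← N.mapQ_pow] at hn
  rw [pow_succ', Module.End.mul_apply]
  exact hβN _ ((Submodule.Quotient.mk_eq_zero N).1 (LinearMap.congr_fun hn (N.mkQ x)))

theorem torsion_le_comap {R M : Type*} [CommSemiring R] [AddCommMonoid M] [Module R M]
    (β : M →ₗ[R] M) : Submodule.torsion R M ≤ (Submodule.torsion R M).comap β :=
  fun x ⟨a, ha⟩ ↦ ⟨a, by rw [← β.map_smul_of_tower, ha, map_zero]⟩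

theorem exists_pow_apply_eq_self_of_mem_torsion {A : Type*} [AddCommGroup A] [Module.Finite ℤ A]
    (α : A ≃ₗ[ℤ] A) :
    ∃ m, 0 < m ∧ ∀ x ∈ Submodule.torsion ℤ A, ((α : Module.End ℤ A) ^ m) x = x := by
  have hmem (x : A) : α x ∈ Submodule.torsion ℤ A ↔ x ∈ Submodule.torsion ℤ A :=
    ⟨fun h ↦ by simpa using torsion_le_comap (α.symm : A →ₗ[ℤ] A) h,
      fun h ↦ torsion_le_comap (α : A →ₗ[ℤ] A) h⟩
  have : Finite (Submodule.torsion ℤ A) :=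
    Module.finite_of_fg_torsion _ Submodule.torsion_isTorsion
  let e : Equiv.Perm (Submodule.torsion ℤ A) := Equiv.Perm.subtypePerm α.toEquiv hmem
  refine ⟨orderOf e, orderOf_pos e, fun x hx ↦ ?_⟩
  have he := congr(($(pow_orderOf_eq_one e) ⟨x, hx⟩ : A))
  rw [Equiv.Perm.subtypePerm_pow, Equiv.Perm.subtypePerm_apply] at he
  rw [Module.End.pow_apply]
  exact (congrFun (Equiv.Perm.iterate_eq_pow _ _) x).trans he

theorem pow_sub_one_pow_eq_zero {R : Type*} [Ring R] {x : R} {l : ℕ} (h : (x - 1) ^ l = 0)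
    (k : ℕ) : (x ^ k - 1) ^ l = 0 := by
  have hcomm : Commute (x - 1) (∑ i ∈ Finset.range k, x ^ i) := by
    rw [Commute, SemiconjBy, mul_geom_sum, geom_sum_mul]
  rw [← mul_geom_sum, hcomm.mul_pow, h, zero_mul]

theorem exists_isNilpotent_pow_sub_one {A : Type*} [AddCommGroup A] [Module.Finite ℤ A]
    (α : A ≃ₗ[ℤ] A)
    (hα : ∀ (ψ : A →+ ℂ) (z : ℂ), 1 < ‖z‖ → (∀ x, ψ (α x) = z * ψ x) → ψ = 0) :
    ∃ m, 0 < m ∧ IsNilpotent ((α : Module.End ℤ A) ^ m - 1) := by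
  let T := Submodule.torsion ℤ A
  let γ : Module.End ℤ (A ⧸ T) := T.mapQ T α (torsion_le_comap _)
  obtain ⟨m, hm, l, hl⟩ : ∃ m, 0 < m ∧ IsNilpotent (γ ^ m - 1) := by
    refine exists_isNilpotent_pow_sub_one_of_free fun ψ z hψ0 hψ ↦ ?_
    let ψA : A →+ ℂ := ψ.comp T.mkQ.toAddMonoidHom
    have hψA (x : A) : ψA (α x) = z * ψA x := hψ (T.mkQ x)
    have hψA0 : ψA ≠ 0 := fun h ↦ hψ0 <| DFunLike.ext _ _ <| T.mkQ_surjective.forall.2 <|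
      DFunLike.congr_fun h
    refine ⟨not_lt.1 fun hz ↦ hψA0 (hα ψA z hz hψA), fun hz ↦ hψA0 (DFunLike.ext _ _ fun x ↦ ?_)⟩
    simpa [hz] using hψA (α.symm x)
  obtain ⟨n, hn, hnT⟩ := exists_pow_apply_eq_self_of_mem_torsion α
  refine ⟨n * m, by positivity, isNilpotent_of_mapQ (torsion_le_comap _) (fun x hx ↦ ?_) ⟨l, ?_⟩⟩
  · rw [pow_mul, LinearMap.sub_apply, Module.End.one_apply, sub_eq_zero]
    rw [Module.End.pow_apply]
    exact Function.iterate_fixed (hnT x hx) m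
  · have hmapQ : T.mapQ T (α ^ (n * m) - 1 : Module.End ℤ A) (torsion_le_comap _) =
        (γ ^ m) ^ n - 1 := by
      rw [← pow_mul, mul_comm m n, ← T.mapQ_pow]
      ext x
      rfl
    rw [hmapQ, pow_sub_one_pow_eq_zero hl]

end Unipotent

/-! ### Nilpotent-by-cyclic groups -/

section Commutators

variable {G : Type u} [Group G]

theorem commutator_mem_of_mem_right {B : Subgroup G} [B.Normal] (g : G) {x : G} (hx : x ∈ B) :
    ⁅g, x⁆ ∈ B :=
  B.mul_mem (Subgroup.Normal.conj_mem inferInstance x hx g) (B.inv_mem hx)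

theorem iterate_commutator_mem {B : Subgroup G} [B.Normal] (g : G) {x : G} (hx : x ∈ B) (l : ℕ) :
    (⁅g, ·⁆)^[l] x ∈ B := by
  induction l with
  | zero => exact hx
  | succ l ih => exact Function.iterate_succ_apply' (⁅g, ·⁆) l x ▸ commutator_mem_of_mem_right g ih

theorem map_iterate_commutator {H : Type v} [Group H] (f : G →* H) (g x : G) (l : ℕ) :
    f ((⁅g, ·⁆)^[l] x) = (⁅f g, ·⁆)^[l] (f x) :=
  Function.Semiconj.iterate_right (fun x ↦ map_commutatorElement f g x) l x

theorem mem_upperCentralSeries_succ_of_closure_eq_top {S : Set G} (hS : Subgroup.closure S = ⊤)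
    {x : G} {n : ℕ} (hx : ∀ s ∈ S, ⁅s, x⁆ ∈ Subgroup.upperCentralSeries G n) :
    x ∈ Subgroup.upperCentralSeries G (n + 1) := by
  rw [Subgroup.mem_upperCentralSeries_succ_iff]
  intro y
  let Z := Subgroup.upperCentralSeries G n
  let C := (Subgroup.centralizer {QuotientGroup.mk' Z x}).comap (QuotientGroup.mk' Z)
  have hC (g : G) : g ∈ C ↔ ⁅g, x⁆ ∈ Z := by
    rw [Subgroup.mem_comap, Subgroup.mem_centralizer_singleton_iff,
      ← commutatorElement_eq_one_iff_mul_comm, ← map_commutatorElement, QuotientGroup.mk'_apply,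
      QuotientGroup.eq_one_iff]
  have hC_top : C = ⊤ := top_unique (hS ▸ (Subgroup.closure_le C).2 fun s hs ↦ (hC s).2 (hx s hs))
  rw [← commutatorElement_inv]
  exact Z.inv_mem ((hC y).1 (hC_top ▸ Subgroup.mem_top y))

end Commutators

section NilpotentExtension

variable {G : Type u} [Group G] {M : Subgroup G} {s : G}

theorem mem_upperCentralSeries_add_of_iterate_commutator_mem
    (hgen : Subgroup.closure (M ∪ {s}) = ⊤) {B : Subgroup G} [B.Normal] {n : ℕ}
    (hB : ∀ g ∈ M, ∀ x ∈ B, ⁅g, x⁆ ∈ Subgroup.upperCentralSeries G n) {j : ℕ} {x : G} (hx : x ∈ B)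
    (hj : (⁅s, ·⁆)^[j] x ∈ Subgroup.upperCentralSeries G n) :
    x ∈ Subgroup.upperCentralSeries G (n + j) := by
  induction j generalizing x with
  | zero => exact hj
  | succ j ih =>
    refine mem_upperCentralSeries_succ_of_closure_eq_top hgen ?_
    rintro g (hg | rfl)
    · exact Subgroup.upperCentralSeries_mono G (Nat.le_add_right n j) (hB g hg x hx)
    · exact ih (commutator_mem_of_mem_right g hx) hj

theorem commutator_mem_lowerCentralSeries_succ {i : ℕ} {g x : G} (hg : g ∈ M)
    (hx : x ∈ M.lowerCentralSeries i) : ⁅g, x⁆ ∈ M.lowerCentralSeries (i + 1) := by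
  rw [← commutatorElement_inv]
  exact Subgroup.inv_mem _ (Subgroup.commutator_mem_commutator hx hg)

theorem isNilpotent_of_iterate_commutator_mem [M.Normal] [Group.IsNilpotent M]
    (hgen : Subgroup.closure (M ∪ {s}) = ⊤) {l : ℕ}
    (hs : ∀ i, ∀ x ∈ M.lowerCentralSeries i, (⁅s, ·⁆)^[l] x ∈ M.lowerCentralSeries (i + 1)) :
    Group.IsNilpotent G := by
  obtain ⟨c, hc⟩ := (Subgroup.isNilpotent_iff_lowerCentralSeries M).1 ‹_›
  have hle : ∀ j ≤ c, M.lowerCentralSeries (c - j) ≤ Subgroup.upperCentralSeries G (j * l) := by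
    intro j hj
    induction j with
    | zero => simp [hc]
    | succ j ih =>
      have hsucc : c - j = c - (j + 1) + 1 := by omega
      specialize ih (by omega)
      rw [hsucc] at ih
      rw [add_one_mul]
      exact fun x hx ↦ mem_upperCentralSeries_add_of_iterate_commutator_mem hgen
        (fun g hg x hx ↦ ih (commutator_mem_lowerCentralSeries_succ hg hx)) hx (ih (hs _ x hx))
  have hM : M ≤ Subgroup.upperCentralSeries G (c * l) := by simpa using hle c le_rfl
  refine ⟨c * l + 1, top_unique (hgen ▸ (Subgroup.closure_le _).2 (Set.union_subset ?_ ?_))⟩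
  · exact hM.trans (Subgroup.upperCentralSeries_mono G (Nat.le_succ _))
  · refine Set.singleton_subset_iff.2 (mem_upperCentralSeries_succ_of_closure_eq_top hgen ?_)
    rintro g (hg | rfl)
    · rw [← commutatorElement_inv]
      exact Subgroup.inv_mem _ (hM (commutator_mem_of_mem_right s hg))
    · simp

theorem isNilpotent_sup_zpowers [M.Normal] [Group.IsNilpotent M] {l : ℕ}
    (hs : ∀ i, ∀ x ∈ M.lowerCentralSeries i, (⁅s, ·⁆)^[l] x ∈ M.lowerCentralSeries (i + 1)) :
    Group.IsNilpotent ↥(M ⊔ Subgroup.zpowers s) := by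
  let P := M ⊔ Subgroup.zpowers s
  let s' : P := ⟨s, Subgroup.mem_sup_right (Subgroup.mem_zpowers s)⟩
  have hMP : (M.subgroupOf P).map P.subtype = M := Subgroup.map_subgroupOf_eq_of_le le_sup_left
  have : Group.IsNilpotent (M.subgroupOf P) :=
    Group.nilpotent_of_mulEquiv (Subgroup.subgroupOfEquivOfLe le_sup_left).symm
  have hlcs (i : ℕ) (x : P) :
      (x : G) ∈ M.lowerCentralSeries i ↔ x ∈ (M.subgroupOf P).lowerCentralSeries i := by
    conv_lhs => rw [← hMP, ← Subgroup.map_lowerCentralSeries, ← Subgroup.coe_subtype,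
      Subgroup.mem_map_iff_mem P.subtype_injective]
  have hgen : Subgroup.closure ((M.subgroupOf P : Set P) ∪ {s'}) = ⊤ := by
    apply Subgroup.map_injective P.subtype_injective
    rw [Subgroup.closure_union, Subgroup.closure_eq, ← Subgroup.zpowers_eq_closure,
      Subgroup.map_sup, hMP, MonoidHom.map_zpowers, ← MonoidHom.range_eq_map,
      Subgroup.range_subtype]
    rfl
  refine isNilpotent_of_iterate_commutator_mem (l := l) hgen fun i x hx ↦ (hlcs _ _).1 ?_
  rw [← Subgroup.coe_subtype, map_iterate_commutator]
  exact hs i x ((hlcs i x).2 hx)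

end NilpotentExtension

section AbelianSection

open scoped IsMulCommutative

variable {G : Type u} [Group G] {d : ℕ}

/-- Conjugation by `t` on an abelian normal subgroup `A`, written additively. -/
def conjAdditive (A : Subgroup G) [A.Normal] [IsMulCommutative A] (t : G) :
    Additive A ≃ₗ[ℤ] Additive A :=
  (MulEquiv.toAdditive (MulAut.conjNormal t : MulAut A)).toIntLinearEquiv

variable {A : Subgroup G} [A.Normal] [IsMulCommutative A]

theorem conjAdditive_pow (t : G) (n : ℕ) :
    (conjAdditive A t : Module.End ℤ (Additive A)) ^ n = conjAdditive A (t ^ n) := by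
  induction n with
  | zero => ext; simp [conjAdditive]
  | succ n ih =>
    rw [pow_succ', ih, pow_succ']
    ext
    simp [conjAdditive]

theorem coe_conjAdditive_sub_one_pow (t : G) (l : ℕ) (a : A) :
    ((((conjAdditive A t : Module.End ℤ (Additive A)) - 1) ^ l) (.ofMul a)).toMul =
      (⁅t, ·⁆)^[l] (a : G) := by
  induction l generalizing a with
  | zero => rfl
  | succ l ih =>
    rw [pow_succ', Module.End.mul_apply, LinearMap.sub_apply, toMul_sub, div_eq_mul_inv,
      Function.iterate_succ_apply', ← ih a]
    rfl

namespace HasPolynomialGrowth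

theorem exists_iterate_commutator_eq_one (hG : HasPolynomialGrowth G d) (hA : A.FG) (t : G) :
    ∃ m l, 0 < m ∧ ∀ n, m ∣ n → ∀ x ∈ A, (⁅t ^ n, ·⁆)^[l] x = 1 := by
  have : Group.FG A := (Group.fg_iff_subgroup_fg A).2 hA
  have : Module.Finite ℤ (Additive A) := Module.Finite.iff_addGroup_fg.2 inferInstance
  obtain ⟨m, hm, l, hl⟩ := exists_isNilpotent_pow_sub_one (conjAdditive A t)
    fun ψ z hz hψ ↦ hG.eq_zero_of_conjNormal hz fun a ↦ hψ (.ofMul a)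
  refine ⟨m, l, hm, ?_⟩
  rintro _ ⟨k, rfl⟩ x hx
  rw [← coe_conjAdditive_sub_one_pow (A := A) _ l ⟨x, hx⟩, ← conjAdditive_pow, pow_mul,
    pow_sub_one_pow_eq_zero hl]
  rfl

end HasPolynomialGrowth

end AbelianSection

theorem fg_map {G : Type u} [Group G] {H : Type v} [Group H] {K : Subgroup G} (hK : K.FG)
    (f : G →* H) : (K.map f).FG :=
  (Subgroup.fg_iff_submonoid_fg _).2 (((Subgroup.fg_iff_submonoid_fg K).1 hK).map f)

namespace HasPolynomialGrowth

variable {G : Type u} [Group G] {d : ℕ}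

theorem exists_iterate_commutator_mem (hG : HasPolynomialGrowth G d) {A B : Subgroup G} [A.Normal]
    [B.Normal] (hAB : ⁅A, A⁆ ≤ B) (hA : A.FG) (t : G) :
    ∃ m l, 0 < m ∧ ∀ n, m ∣ n → ∀ x ∈ A, (⁅t ^ n, ·⁆)^[l] x ∈ B := by
  let π := QuotientGroup.mk' B
  have hπ : Function.Surjective π := QuotientGroup.mk'_surjective B
  have : (A.map π).Normal := Subgroup.Normal.map ‹_› π hπ
  have : IsMulCommutative (A.map π) := by
    rw [← Subgroup.commutator_self_eq_bot_iff, ← Subgroup.map_commutator, Subgroup.map_eq_bot_iff,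
      QuotientGroup.ker_mk']
    exact hAB
  obtain ⟨m, l, hm, h⟩ := (hG.of_surjective π hπ).exists_iterate_commutator_eq_one
    (fg_map hA π) (π t)
  refine ⟨m, l, hm, fun n hn x hx ↦ ?_⟩
  rw [← QuotientGroup.eq_one_iff (N := B), ← QuotientGroup.mk'_apply, map_iterate_commutator,
    map_pow]
  exact h n hn _ (Subgroup.mem_map_of_mem π hx)

theorem exists_isNilpotent_sup_zpowers (hG : HasPolynomialGrowth G d) {M : Subgroup G} [M.Normal]
    [Group.IsNilpotent M] (hfg : ∀ K ≤ M, K.FG) (t : G) :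
    ∃ m, 0 < m ∧ Group.IsNilpotent ↥(M ⊔ Subgroup.zpowers (t ^ m)) := by
  have hsec (i : ℕ) := hG.exists_iterate_commutator_mem
    (Subgroup.commutator_mono le_rfl (M.lowerCentralSeries_le_self i))
    (hfg _ (M.lowerCentralSeries_le_self i)) t
  choose m l hm h using hsec
  obtain ⟨c, hc⟩ := (Subgroup.isNilpotent_iff_lowerCentralSeries M).1 ‹_›
  let n := ∏ i ∈ Finset.range c, m i
  have hcomm (i : ℕ) (x : G) (hx : x ∈ M.lowerCentralSeries i) :
      (⁅t ^ n, ·⁆)^[∑ i ∈ Finset.range c, l i] x ∈ M.lowerCentralSeries (i + 1) := by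
    rcases lt_or_ge i c with hi | hi
    · have hi := Finset.mem_range.2 hi
      have hl : l i ≤ ∑ i ∈ Finset.range c, l i :=
        Finset.single_le_sum (fun _ _ ↦ Nat.zero_le _) hi
      rw [← Nat.sub_add_cancel hl, Function.iterate_add_apply]
      exact iterate_commutator_mem _ (h i n (Finset.dvd_prod_of_mem m hi) x hx) _
    · obtain rfl : x = 1 := by simpa [hc] using M.lowerCentralSeries_antitone hi hx
      exact iterate_commutator_mem _ (Subgroup.one_mem _) _
  exact ⟨n, Finset.prod_pos fun i _ ↦ hm i, isNilpotent_sup_zpowers hcomm⟩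

end HasPolynomialGrowth

/-! ### Gromov's theorem -/

section FiniteGeneration

variable {G : Type u} [Group G]

theorem fg_of_fg_map_of_fg_inf_ker {H : Type v} [Group H] (f : G →* H) {K : Subgroup G}
    (hmap : (K.map f).FG) (hker : (K ⊓ f.ker).FG) : K.FG := by
  classical
  obtain ⟨T, hT⟩ := hmap
  have hTK : (T : Set H) ⊆ f '' K := Subgroup.coe_map f K ▸ hT ▸ Subgroup.subset_closure
  obtain ⟨S, hSK, rfl⟩ := Finset.subset_set_image_iff.1 hTK
  rw [Finset.coe_image, ← MonoidHom.map_closure] at hT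
  have hSK : Subgroup.closure S ≤ K := (Subgroup.closure_le K).2 hSK
  suffices hK : K = Subgroup.closure S ⊔ (K ⊓ f.ker) from
    hK ▸ Subgroup.FG.sup ⟨S, rfl⟩ hker
  refine le_antisymm (fun x hx ↦ ?_) (sup_le hSK inf_le_left)
  obtain ⟨y, hy, hyx⟩ : f x ∈ (Subgroup.closure S).map f := hT ▸ Subgroup.mem_map_of_mem f hx
  rw [← mul_inv_cancel_left y x]
  exact Subgroup.mul_mem_sup hy ⟨K.mul_mem (K.inv_mem (hSK hy)) hx, f.eq_iff.1 hyx.symm⟩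

theorem fg_of_le_of_forall_fg {H K : Subgroup G} (hH : ∀ L : Subgroup H, L.FG) (hK : K ≤ H) :
    K.FG :=
  Subgroup.map_subgroupOf_eq_of_le hK ▸ fg_map (hH (K.subgroupOf H)) H.subtype

theorem fg_of_finiteIndex_of_forall_fg {H : Subgroup G} [H.FiniteIndex]
    (hH : ∀ L : Subgroup H, L.FG) (K : Subgroup G) : K.FG := by
  refine fg_of_fg_map_of_fg_inf_ker (QuotientGroup.mk' H.normalCore) ?_ ?_
  · exact (Group.fg_iff_subgroup_fg _).1 inferInstance
  · rw [QuotientGroup.ker_mk']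
    exact fg_of_le_of_forall_fg hH (inf_le_right.trans H.normalCore_le)

theorem fg_of_ker_of_forall_fg (φ : G →* Multiplicative ℤ) (hφ : ∀ L : Subgroup φ.ker, L.FG)
    (K : Subgroup G) : K.FG := by
  obtain ⟨z, hz⟩ := (Subgroup.isCyclic_iff_exists_zpowers_eq_top (K.map φ)).1 inferInstance
  refine fg_of_fg_map_of_fg_inf_ker φ ⟨{z}, ?_⟩ (fg_of_le_of_forall_fg hφ inf_le_right)
  rw [Finset.coe_singleton, ← Subgroup.zpowers_eq_closure, hz]

end FiniteGeneration

section FiniteIndex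

variable {G : Type u} [Group G]

theorem finite_monoidHom_of_fg [Group.FG G] (F : Type v) [Group F] [Finite F] :
    Finite (G →* F) := by
  obtain ⟨S, hS⟩ := Group.fg_def.1 ‹Group.FG G›
  exact .of_injective (fun f (s : S) ↦ f s) fun f g h ↦
    MonoidHom.eq_of_eqOn_dense hS fun x hx ↦ congrFun h ⟨x, hx⟩

theorem exists_characteristic_finiteIndex_le [Group.FG G] (N : Subgroup G) [N.FiniteIndex] :
    ∃ M : Subgroup G, M.Characteristic ∧ M.FiniteIndex ∧ M ≤ N := by
  have : Finite (G →* Equiv.Perm (G ⧸ N)) := finite_monoidHom_of_fg _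
  refine ⟨⨅ f : G →* Equiv.Perm (G ⧸ N), f.ker, ?_,
    Subgroup.finiteIndex_iInf fun f ↦ inferInstance, ?_⟩
  · refine Subgroup.characteristic_iff_comap_le.2 fun e x hx ↦ Subgroup.mem_iInf.2 fun f ↦ ?_
    simpa [MonoidHom.mem_ker] using Subgroup.mem_iInf.1 hx (f.comp e.symm.toMonoidHom)
  · refine (iInf_le _ (MulAction.toPermHom G (G ⧸ N))).trans ?_
    exact N.normalCore_eq_ker ▸ N.normalCore_le

theorem relIndex_sup_of_normal (H N : Subgroup G) [N.Normal] :
    H.relIndex (H ⊔ N) = H.relIndex N := by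
  let f := Subgroup.quotientSubgroupOfEmbeddingOfLE H (le_sup_right : N ≤ H ⊔ N)
  refine (Nat.card_congr (Equiv.ofBijective f ⟨f.injective, fun y ↦ ?_⟩)).symm
  obtain ⟨⟨x, hx⟩, rfl⟩ := QuotientGroup.mk_surjective y
  obtain ⟨n, hn, h, hh, rfl⟩ := Subgroup.mem_sup_of_normal_left.1 (sup_comm H N ▸ hx)
  refine ⟨QuotientGroup.mk ⟨n, hn⟩, ?_⟩
  rw [Subgroup.quotientSubgroupOfEmbeddingOfLE_apply_mk, QuotientGroup.eq, Subgroup.mem_subgroupOf]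
  simpa using hh

variable {φ : G →* Multiplicative ℤ} {t : G}

theorem finiteIndex_zpowers_sup_ker (ht : φ t = Multiplicative.ofAdd 1) (m : ℕ) [NeZero m] :
    (Subgroup.zpowers (t ^ m) ⊔ φ.ker).FiniteIndex := by
  let f : G →* Multiplicative (ZMod m) := (Int.castAddHom (ZMod m)).toMultiplicative.comp φ
  have hf : f.ker ≤ Subgroup.zpowers (t ^ m) ⊔ φ.ker := by
    intro x hx
    obtain ⟨k, hk⟩ : (m : ℤ) ∣ (φ x).toAdd := (ZMod.intCast_zmod_eq_zero_iff_dvd _ _).1 hx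
    rw [← mul_inv_cancel_left ((t ^ m) ^ k) x]
    refine Subgroup.mul_mem_sup (Subgroup.zpow_mem_zpowers _ k) ?_
    rw [MonoidHom.mem_ker, map_mul, map_inv, map_zpow, map_pow, ht, inv_mul_eq_one]
    apply Multiplicative.toAdd.injective
    simp [hk, mul_comm]
  exact Subgroup.finiteIndex_of_le hf

theorem finiteIndex_sup_zpowers (ht : φ t = Multiplicative.ofAdd 1) {N : Subgroup G}
    (hN : N.relIndex φ.ker ≠ 0) (m : ℕ) [NeZero m] :
    (N ⊔ Subgroup.zpowers (t ^ m)).FiniteIndex := by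
  let P := N ⊔ Subgroup.zpowers (t ^ m)
  have hP_sup : (P ⊔ φ.ker).FiniteIndex :=
    have := finiteIndex_zpowers_sup_ker ht m
    Subgroup.finiteIndex_of_le (sup_le_sup_right le_sup_right φ.ker)
  have hP_ker : P.relIndex φ.ker ≠ 0 :=
    ne_zero_of_dvd_ne_zero hN (Subgroup.relIndex_dvd_of_le_left φ.ker le_sup_left)
  refine ⟨?_⟩
  rw [← Subgroup.relIndex_mul_index (le_sup_left : P ≤ P ⊔ φ.ker), relIndex_sup_of_normal]
  exact mul_ne_zero hP_ker hP_sup.index_ne_zero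

end FiniteIndex

section VirtuallyNilpotent

theorem isVirtuallyNilpotent_of_finiteIndex {G : Type u} [Group G] {H : Subgroup G} [H.FiniteIndex]
    (hH : Group.IsVirtuallyNilpotent H) : Group.IsVirtuallyNilpotent G := by
  obtain ⟨N, hN, hNfi⟩ := hH
  refine ⟨N.map H.subtype,
    Group.nilpotent_of_mulEquiv (N.equivMapOfInjective _ H.subtype_injective), ⟨?_⟩⟩
  rw [Subgroup.index_map_subtype]
  exact mul_ne_zero hNfi.index_ne_zero Subgroup.FiniteIndex.index_ne_zero

namespace HasPolynomialGrowth

theorem isVirtuallyNilpotent_of_ker {G : Type u} [Group G] {d : ℕ} (hG : HasPolynomialGrowth G d)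
    {φ : G →* Multiplicative ℤ} {t : G} (ht : φ t = Multiplicative.ofAdd 1)
    (hker : Group.IsVirtuallyNilpotent φ.ker) (hfg : ∀ K : Subgroup φ.ker, K.FG) :
    Group.IsVirtuallyNilpotent G := by
  have : Group.FG φ.ker := (Group.fg_iff_subgroup_fg _).2 (fg_of_le_of_forall_fg hfg le_rfl)
  obtain ⟨N, hN, hNfi⟩ := hker
  obtain ⟨M, hM, hMfi, hMN⟩ := exists_characteristic_finiteIndex_le N
  have : Group.IsNilpotent M :=
    Group.nilpotent_of_mulEquiv (Subgroup.subgroupOfEquivOfLe hMN)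
  let M' := M.map φ.ker.subtype
  have : Group.IsNilpotent M' :=
    Group.nilpotent_of_mulEquiv (M.equivMapOfInjective _ φ.ker.subtype_injective)
  have : M'.Normal := ConjAct.normal_of_characteristic_of_normal
  have hM' : M'.relIndex φ.ker ≠ 0 := by
    rw [Subgroup.relIndex, Subgroup.subgroupOf,
      Subgroup.comap_map_eq_self_of_injective φ.ker.subtype_injective]
    exact hMfi.index_ne_zero
  obtain ⟨m, hm, hP⟩ := hG.exists_isNilpotent_sup_zpowers (M := M')
    (fun K hK ↦ fg_of_le_of_forall_fg hfg (hK.trans (Subgroup.map_subtype_le M))) t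
  have : NeZero m := ⟨hm.ne'⟩
  exact ⟨_, hP, finiteIndex_sup_zpowers ht hM' m⟩

-- The induction on the growth degree needs both conclusions at once, as the finite generation of
-- the subgroups of the kernel feeds into the construction of the nilpotent subgroup.
theorem isVirtuallyNilpotent_and_forall_fg {d : ℕ} : ∀ {G : Type u} [Group G] [Group.FG G],
    HasPolynomialGrowth G d → Group.IsVirtuallyNilpotent G ∧ ∀ K : Subgroup G, K.FG := by
  have of_finite (G : Type u) [Group G] [Finite G] :
      Group.IsVirtuallyNilpotent G ∧ ∀ K : Subgroup G, K.FG :=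
    ⟨⟨⊥, inferInstance, inferInstance⟩, fun K ↦ (Group.fg_iff_subgroup_fg K).1 inferInstance⟩
  induction d with
  | zero =>
    intro G _ _ hG
    have := hG.finite_of_zero
    exact of_finite G
  | succ d ih =>
    intro G _ _ hG
    cases finite_or_infinite G
    · exact of_finite G
    obtain ⟨H, hHfi, φ, t, ht⟩ := hG.exists_finiteIndex_monoidHom_int
    have hH := hG.subgroup H
    have : Group.FG φ.ker := (Group.fg_iff_subgroup_fg _).2 (hH.ker_fg φ ht)
    obtain ⟨hker, hfg⟩ := ih (hH.ker φ ht)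
    exact ⟨isVirtuallyNilpotent_of_finiteIndex (hH.isVirtuallyNilpotent_of_ker ht hker hfg),
      fg_of_finiteIndex_of_forall_fg (fg_of_ker_of_forall_fg φ hfg)⟩

theorem isVirtuallyNilpotent {G : Type u} [Group G] [Group.FG G] {d : ℕ}
    (hG : HasPolynomialGrowth G d) : Group.IsVirtuallyNilpotent G :=
  hG.isVirtuallyNilpotent_and_forall_fg.1

end HasPolynomialGrowth

end VirtuallyNilpotent

/-! ### Limits of groups -/

section IteratedCommutators

variable {G : Type u} [Group G] {S : Set G}

/-- The left-normed iterated commutators `⁅s₁, ⁅s₂, …, ⁅sᵢ, sᵢ₊₁⁆⁆⁆` of elements of `S`. When `S`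
generates the group, finitely many such words witness that the group is nilpotent. -/
def iteratedCommutators (S : Set G) : ℕ → Set G
  | 0 => S
  | i + 1 => Set.image2 (⁅·, ·⁆) S (iteratedCommutators S i)

theorem iteratedCommutators_finite (hS : S.Finite) (i : ℕ) : (iteratedCommutators S i).Finite := by
  induction i with
  | zero => exact hS
  | succ i ih => exact hS.image2 _ ih

theorem image_iteratedCommutators {H : Type v} [Group H] (f : G →* H) (S : Set G) (i : ℕ) :
    f '' iteratedCommutators S i = iteratedCommutators (f '' S) i := by
  induction i with
  | zero => rfl
  | succ i ih =>
    rw [iteratedCommutators, iteratedCommutators, ← ih]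
    exact Set.image_image2_distrib (map_commutatorElement f)

theorem iteratedCommutators_subset_lowerCentralSeries {H : Subgroup G} (hS : S ⊆ H) (i : ℕ) :
    iteratedCommutators S i ⊆ H.lowerCentralSeries i := by
  induction i with
  | zero => exact hS
  | succ i ih => exact Set.image2_subset_iff.2 fun s hs x hx ↦
      commutator_mem_lowerCentralSeries_succ (hS hs) (ih hx)

theorem upperCentralSeries_eq_top_of_iteratedCommutators_subset (hS : Subgroup.closure S = ⊤)
    {c : ℕ} (hc : iteratedCommutators S c ⊆ {1}) : Subgroup.upperCentralSeries G c = ⊤ := by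
  have hsub : ∀ j i, i + j = c →
      iteratedCommutators S i ⊆ Subgroup.upperCentralSeries G j := by
    intro j
    induction j with
    | zero => rintro i rfl x hx; exact hc hx
    | succ j ih =>
      exact fun i hi x hx ↦ mem_upperCentralSeries_succ_of_closure_eq_top hS fun s hs ↦
        ih (i + 1) (by omega) (Set.mem_image2_of_mem hs hx)
  exact top_unique (hS ▸ (Subgroup.closure_le _).2 (hsub c 0 (zero_add c)))

theorem lowerCentralSeries_closure_eq_bot {c : ℕ} (hc : iteratedCommutators S c ⊆ {1}) :
    (Subgroup.closure S).lowerCentralSeries c = ⊥ := by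
  let K := Subgroup.closure S
  have hS : K.subtype '' (Subtype.val ⁻¹' S) = S :=
    (Subtype.image_preimage_coe (K : Set G) S).trans
      (Set.inter_eq_right.2 Subgroup.subset_closure)
  have hK : Subgroup.upperCentralSeries K c = ⊤ := by
    refine upperCentralSeries_eq_top_of_iteratedCommutators_subset
      Subgroup.closure_closure_coe_preimage fun x hx ↦ K.subtype_injective ?_
    apply hc
    rw [← hS, ← image_iteratedCommutators]
    exact Set.mem_image_of_mem _ hx
  rw [← Subgroup.lowerCentralSeries_eq_bot_iff_upperCentralSeries_eq_top] at hK
  have hmap := Subgroup.map_lowerCentralSeries (S := ⊤) K.subtype c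
  rwa [hK, Subgroup.map_bot, ← MonoidHom.range_eq_map, Subgroup.range_subtype, eq_comm] at hmap

end IteratedCommutators

section LimitKernel

variable {ι : Type v} {F : Type*} [Group F] {Γ : ι → Type u} [∀ i, Group (Γ i)]

/-- The elements of `F` killed by `f i` for all `i` in a set of the filter `l`. For an ultrafilter,
the quotient by this subgroup is the limit of the marked groups `f i : F →* Γ i`. -/
def limitKernel (l : Filter ι) (f : ∀ i, F →* Γ i) : Subgroup F where
  carrier := {w | ∀ᶠ i in l, f i w = 1}
  one_mem' := by simp
  mul_mem' ha hb := by filter_upwards [ha, hb] with i hai hbi; simp [hai, hbi]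
  inv_mem' ha := by filter_upwards [ha] with i hai; simp [hai]

theorem mem_limitKernel {l : Filter ι} {f : ∀ i, F →* Γ i} {w : F} :
    w ∈ limitKernel l f ↔ ∀ᶠ i in l, f i w = 1 := .rfl

instance (l : Filter ι) (f : ∀ i, F →* Γ i) : (limitKernel l f).Normal where
  conj_mem w hw g := by filter_upwards [mem_limitKernel.1 hw] with i hi; simp [hi]

variable {f : ∀ i, F →* Γ i}

theorem eventually_ncard_image_mk_limitKernel_le (U : Ultrafilter ι) {W : Set F} (hW : W.Finite) :
    ∀ᶠ i in (U : Filter ι),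
      (QuotientGroup.mk' (limitKernel U f) '' W).ncard ≤ (f i '' W).ncard := by
  let π := QuotientGroup.mk' (limitKernel (U : Filter ι) f)
  have hfactor : ∀ᶠ i in (U : Filter ι), ∀ x ∈ W, ∀ y ∈ W, f i x = f i y → π x = π y := by
    simp only [Filter.eventually_all_finite hW]
    intro x _ y _
    by_cases hxy : π x = π y
    · exact .of_forall fun _ _ ↦ hxy
    · have hne : x⁻¹ * y ∉ limitKernel (U : Filter ι) f := fun h ↦ hxy (QuotientGroup.eq.2 h)
      filter_upwards [Ultrafilter.eventually_not.2 hne] with i hi h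
      simp [h] at hi
  filter_upwards [hfactor] with i hi
  have himage : π '' W = (π ∘ Function.invFunOn (f i) W) '' (f i '' W) := by
    rw [Set.image_image]
    refine Set.image_congr fun x hx ↦ ?_
    have hex : ∃ y ∈ W, f i y = f i x := ⟨x, hx, rfl⟩
    exact (hi _ (Function.invFunOn_mem hex) x hx (Function.invFunOn_eq hex)).symm
  rw [himage]
  exact Set.ncard_image_le (hW.image _)

theorem hasPolynomialGrowth_quotient_limitKernel (U : Ultrafilter ι) {E : Set F}
    (hE : IsSymmGenerating E) (hfin : E.Finite) {C d : ℕ}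
    (h : ∀ r, ∀ᶠ i in (U : Filter ι), (f i '' (E ^ r)).ncard ≤ C * (r + 1) ^ d) :
    HasPolynomialGrowth (F ⧸ limitKernel (U : Filter ι) f) d := by
  let π := QuotientGroup.mk' (limitKernel (U : Filter ι) f)
  have hπ : Function.Surjective π := QuotientGroup.mk'_surjective _
  refine (hE.image hπ).hasPolynomialGrowth (C := C) (hfin.image π) fun r ↦ ?_
  obtain ⟨i, hle, hi⟩ :=
    ((eventually_ncard_image_mk_limitKernel_le (f := f) U (finite_pow hfin r)).and (h r)).exists
  rw [← Set.image_pow]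
  exact hle.trans hi

theorem eventually_exists_of_isVirtuallyNilpotent_quotient_limitKernel [Group.FG F] {l : Filter ι}
    (hf : ∀ i, Function.Surjective (f i))
    (h : Group.IsVirtuallyNilpotent (F ⧸ limitKernel l f)) :
    ∃ N c, ∀ᶠ i in l, ∃ K : Subgroup (Γ i), 0 < K.index ∧ K.index ≤ N ∧
      K.lowerCentralSeries c = ⊥ := by
  obtain ⟨H', hH', hfi⟩ := h
  obtain ⟨c, hc⟩ := (Subgroup.isNilpotent_iff_lowerCentralSeries H').1 hH'
  let π := QuotientGroup.mk' (limitKernel l f)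
  let H := H'.comap π
  have hH_index : H.index = H'.index :=
    Subgroup.index_comap_of_surjective H' (QuotientGroup.mk'_surjective _)
  have hH_pos : 0 < H.index := Nat.pos_of_ne_zero (hH_index ▸ hfi.index_ne_zero)
  have : H.FiniteIndex := ⟨hH_pos.ne'⟩
  obtain ⟨T, hT⟩ : H.FG := (Group.fg_iff_subgroup_fg H).1 inferInstance
  have hT_H : π '' T ⊆ H' := Set.image_subset_iff.2 ((Subgroup.closure_le H).1 hT.le)
  have hker : iteratedCommutators (T : Set F) c ⊆ limitKernel l f := by
    intro w hw
    have hπw := iteratedCommutators_subset_lowerCentralSeries hT_H c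
      (image_iteratedCommutators π T c ▸ Set.mem_image_of_mem π hw)
    rw [hc] at hπw
    exact (QuotientGroup.eq_one_iff w).1 hπw
  refine ⟨H.index, c, ?_⟩
  filter_upwards [(Filter.eventually_all_finite
    (iteratedCommutators_finite T.finite_toSet c)).2 hker] with i hi
  have hdvd : (H.map (f i)).index ∣ H.index := H.index_map_dvd (hf i)
  refine ⟨H.map (f i), Nat.pos_of_dvd_of_pos hdvd hH_pos, Nat.le_of_dvd hH_pos hdvd, ?_⟩
  rw [← hT, MonoidHom.map_closure]
  apply lowerCentralSeries_closure_eq_bot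
  rw [← image_iteratedCommutators]
  exact Set.image_subset_iff.2 hi

end LimitKernel

section WordBall

variable {G : Type u} [Group G]

theorem wordBall_eq_symmetrization_pow (A : Set G) (r : ℕ) :
    wordBall A r = symmetrization A ^ r := by
  refine Set.Subset.antisymm ?_ ?_
  · rintro _ ⟨l, hl, hlA, rfl⟩
    refine Set.pow_subset_pow_right (one_mem_symmetrization A) hl ?_
    clear hl
    induction l with
    | nil => simp
    | cons a l ih =>
      rw [List.length_cons, pow_succ', List.prod_cons]
      exact Set.mul_mem_mul (.inr (hlA a (by simp))) (ih fun x hx ↦ hlA x (by simp [hx]))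
  · induction r with
    | zero => exact Set.one_subset.2 ⟨[], by simp⟩
    | succ r ih =>
      rw [pow_succ']
      rintro _ ⟨a, ha, _, hb, rfl⟩
      obtain ⟨l, hl, hlA, rfl⟩ := ih hb
      rcases ha with rfl | ha
      · exact ⟨l, by omega, hlA, by simp⟩
      · exact ⟨a :: l, by simpa using hl, List.forall_mem_cons.2 ⟨ha, hlA⟩, by simp⟩

theorem image_symmetrization {H : Type v} [Group H] (f : H →* G) (A : Set H) :
    f '' symmetrization A = symmetrization (f '' A) := by
  rw [symmetrization, Set.image_insert_eq, Set.image_union, Set.image_inv, map_one, symmetrization]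

theorem exists_freeGroup_hom_image_symmetrization {n : ℕ} {A : Finset G} (hA : A.card ≤ n) :
    ∃ f : FreeGroup (Fin (n + 1)) →* G,
      f '' symmetrization (Set.range FreeGroup.of) = symmetrization A := by
  classical
  have hcard : Fintype.card ↥(insert 1 A) ≤ Fintype.card (Fin (n + 1)) := by
    simpa using (Finset.card_insert_le 1 A).trans (Nat.succ_le_succ hA)
  have : Nonempty ↥(insert 1 A) := ⟨⟨1, Finset.mem_insert_self 1 A⟩⟩
  obtain ⟨e⟩ := Function.Embedding.nonempty_of_card_le hcard
  let a : Fin (n + 1) → G := Subtype.val ∘ Function.invFun e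
  have ha : Set.range a = insert 1 (A : Set G) := by
    rw [Set.range_comp, (Function.invFun_surjective e.injective).range_eq]
    ext
    simp
  refine ⟨FreeGroup.lift a, ?_⟩
  have hlift : FreeGroup.lift a ∘ FreeGroup.of = a := funext fun _ ↦ FreeGroup.lift_apply_of
  rw [image_symmetrization, ← Set.range_comp, hlift, ha]
  simp [symmetrization, Set.insert_union]

theorem ncard_symmetrization_pow_le (A : Finset G) (r : ℕ) :
    (symmetrization (A : Set G) ^ r).ncard ≤ Nat.card (wordBall (A : Set G) (r + 1)) := by
  rw [Nat.card_coe_set_eq, wordBall_eq_symmetrization_pow]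
  exact Set.ncard_le_ncard (Set.pow_subset_pow_right (one_mem_symmetrization _) r.le_succ)
    (finite_pow (symmetrization_finite A.finite_toSet) _)

theorem surjective_of_image_isSymmGenerating {F : Type v} [Group F] {f : F →* G} {E : Set F}
    (h : IsSymmGenerating (f '' E)) : Function.Surjective f := by
  rw [← MonoidHom.range_eq_top, eq_top_iff, ← h.closure_eq_top, Subgroup.closure_le]
  exact Set.image_subset_range f E

end WordBall

end Gromov

/-- **Gromov's theorem, bounded version.** For all positive integers `k, d, n` there exists a
positive integer `m` such that every group generated by at most `n` elements, in which the
ball of radius `r` has at most `k·r^d` elements for every `r = 1, …, m`, has a subgroup of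
index at most `m` that is nilpotent of class at most `m`. -/
theorem gromov_polynomial_growth_bounded (k d n : ℕ) (hk : 0 < k) (hd : 0 < d) (hn : 0 < n) :
    ∃ m : ℕ, 0 < m ∧
      ∀ (G : Type u) (_ : Group G) (A : Finset G),
        A.card ≤ n → Subgroup.closure (A : Set G) = ⊤ →
        (∀ r : ℕ, 1 ≤ r → r ≤ m → Nat.card (wordBall (A : Set G) r) ≤ k * r ^ d) →
        ∃ H : Subgroup G, 0 < H.index ∧ H.index ≤ m ∧ lowerCentralSeries H m = ⊥ := by
  by_contra! hcon
  choose Γ _ A hcard hgen hball hno using fun m : ℕ ↦ hcon (m + 1) m.succ_pos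
  choose f hf using fun m ↦ Gromov.exists_freeGroup_hom_image_symmetrization (hcard m)
  let E := Gromov.symmetrization (Set.range (FreeGroup.of : Fin (n + 1) → _))
  have hE : Gromov.IsSymmGenerating E :=
    Gromov.isSymmGenerating_symmetrization (FreeGroup.closure_range_of _)
  have hf_surj (m : ℕ) : Function.Surjective (f m) :=
    Gromov.surjective_of_image_isSymmGenerating (E := E)
      (hf m ▸ Gromov.isSymmGenerating_symmetrization (hgen m))
  have hlarge (N : ℕ) : ∀ᶠ m in (Filter.hyperfilter ℕ : Filter ℕ), N ≤ m :=
    Filter.hyperfilter_le_cofinite (Nat.cofinite_eq_atTop ▸ Filter.eventually_ge_atTop N)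
  have hgrowth (r : ℕ) : ∀ᶠ m in (Filter.hyperfilter ℕ : Filter ℕ),
      (f m '' (E ^ r)).ncard ≤ k * (r + 1) ^ d := by
    filter_upwards [hlarge r] with m hm
    rw [Set.image_pow, hf]
    exact (Gromov.ncard_symmetrization_pow_le (A m) r).trans (hball m _ (by omega) (by omega))
  have hvn := (Gromov.hasPolynomialGrowth_quotient_limitKernel (Filter.hyperfilter ℕ) hE
    (Gromov.symmetrization_finite (Set.finite_range _)) hgrowth).isVirtuallyNilpotent
  obtain ⟨N, c, hNc⟩ :=
    Gromov.eventually_exists_of_isVirtuallyNilpotent_quotient_limitKernel hf_surj hvn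
  obtain ⟨m, ⟨K, hK_pos, hK_le, hK_nil⟩, hm⟩ := (hNc.and (hlarge (max N c))).exists
  exact hno m K hK_pos (by omega)
    (le_bot_iff.1 (hK_nil ▸ Subgroup.lowerCentralSeries_antitone _ (by omega)))
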